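/- Let a ∈ (0,1) and s* = 1/2 + a/2. There exist b ∈ (0,1/2) and a constant C > 0 such that for all Schwartz functions u, v on ℝ² one has ‖∂ₓ(uv)‖_{X^{−b}_{s*}} ≤ C ‖u‖_{X^{1/2}_{s*}} ( ‖v‖_{X^{1/2}_{s*}} + ‖v‖_{X^{1/2}_{s*}}^{1/2} ‖v‖_{Y^{1/2}_{−s*, s*}}^{1/2} ) + C ‖v‖_{X^{1/2}_{s*}} ( ‖u‖_{X^{1/2}_{s*}} + ‖u‖_{X^{1/2}_{s*}}^{1/2} ‖u‖_{Y^{1/2}_{−s*, s*}}^{1/2} ). -/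

import Mathlib

/-!
The estimate is proved on the Fourier side, for the nonnegative functions `f = |û|`, `g = |v̂|`
(and `f'`, `g'`, the moduli of the transforms of `x·u`, `x·v`), with all quantities in `ℝ≥0∞`.
The transform of `∂ₓ(uv)` at `p = (ξ, λ)` is at most `|ξ| ∫ f(q) g(p - q) dq`, up to a constant
below one. Write `q = (ξ₁, λ₁)`, `p - q = (ξ₂, λ₂)`; by symmetry `|ξ₁| ≤ |ξ₂|`, and there are
two regions. The exponent is `b = 1 / (2 + a)`.

*Non-resonant region* `NR`: `|ξ₁| ≥ 1` and `|λ₁ - ω(ξ₁)| ≤ 3 |ξ₁|^{2+a}`. All three factors are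
cut into dyadic pieces of modulation `L, L₁, L₂`. The resonance bound
`|ω(ξ₁) + ω(ξ₂) - ω(ξ₁ + ξ₂)| ≥ |ξ₁| |ξ₁ + ξ₂| |ξ₂|^a` (`resonance`) forces one modulation to be
large. When `|ξ₂| ≥ 8 |ξ₁|` it is that of the output or of the high-frequency factor, since the
other one is too small by the definition of the region. Cauchy–Schwarz reduces each case to the
measure of an intersection of neighbourhoods of translated dispersion curves, and yields
`dyadic_bilin` with the factor `(L^β L₁ L₂)^{1/2}`, `β = (4 - a) / (2 (2 + a)) < 2 b`, which is
summable in `L` against `L^{-b}`.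

*Far region* `RG`: `|ξ₁| ≤ max(1, (|λ₁|/2)^{1/(2+a)})`. There `|λ₁|` is bounded by a multiple of
the modulation, so the Sobolev inequality in `ξ₁` (`sob_SF`), which costs one factor
`‖û‖^{1/2} ‖∂_ξ û‖^{1/2}` and hence the norm of `x·u`, bounds `f` by a function of `λ₁` alone that
is integrable (`lintegral_supB`). Young's inequality in `λ`, local smoothing for the second factor
(`smoothing`), and the bound `∫ |ξ|^{1-a} dξ ≲ L^{(2-a)/(2+a)}` over `|λ - ω(ξ)| ≤ L` for the
output (`kato_two`) give `res_one`; the sum over `L` converges because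
`(2 - a) / (2 (2 + a)) < b`.

The remaining work identifies `Xnorm` of a Schwartz function with the extended norm `XN` of its
transform (`Xnorm_eq`), which includes the finiteness of the latter (`XN_ne_top`).
-/

open MeasureTheory Complex

noncomputable section

/-- The dispersive symbol `ω(ξ) = ξ |ξ|^(1+a)`. -/
def disp (a ξ : ℝ) : ℝ := ξ * |ξ| ^ (1 + a)

/-- Fourier transform on `ℝ`, convention `f̂(ξ) = ∫ e^{ixξ} f(x) dx`. -/
def FT1 (f : ℝ → ℂ) (ξ : ℝ) : ℂ :=
  ∫ x : ℝ, Complex.exp (Complex.I * ((x * ξ : ℝ) : ℂ)) * f x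

/-- Spacetime Fourier transform, convention `f̂(ξ,λ) = ∫ e^{i(xξ+tλ)} f(x,t) dx dt`,
for `f : ℝ × ℝ → ℂ` with first coordinate `x` (space) and second `t` (time). -/
def FT2 (f : ℝ × ℝ → ℂ) (ξ lam : ℝ) : ℂ :=
  ∫ p : ℝ × ℝ, Complex.exp (Complex.I * ((p.1 * ξ + p.2 * lam : ℝ) : ℂ)) * f p

/-- The dyadic cutoffs `χ_j`: `χ_0 = χ₀` and `χ_j(z) = χ(2^{-j} z)` for `j ≥ 1`. -/
def chiJ (χ₀ χ : ℝ → ℝ) (j : ℕ) (z : ℝ) : ℝ :=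
  if j = 0 then χ₀ z else χ ((2 : ℝ) ^ (-(j : ℝ)) * z)

/-- Hypotheses on the fixed dyadic cutoffs. -/
structure DyadicCutoffs (χ₀ χ : ℝ → ℝ) : Prop where
  smooth0 : ContDiff ℝ (⊤ : ℕ∞) χ₀
  even0 : ∀ z, χ₀ (-z) = χ₀ z
  mem0 : ∀ z, χ₀ z ∈ Set.Icc (0 : ℝ) 1
  supp0 : ∀ z, 2 < |z| → χ₀ z = 0
  one0 : ∀ z, |z| ≤ 1 → χ₀ z = 1
  smooth1 : ContDiff ℝ (⊤ : ℕ∞) χ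
  even1 : ∀ z, χ (-z) = χ z
  mem1 : ∀ z, χ z ∈ Set.Icc (0 : ℝ) 1
  supp1 : ∀ z, χ z ≠ 0 → 1 / 2 < |z| ∧ |z| < 2
  partition : ∀ z, ∑' j : ℕ, chiJ χ₀ χ j z = 1

/-- A smooth time cutoff supported in `[-1,1]`. -/
structure TimeCutoff (ψ : ℝ → ℝ) : Prop where
  smooth : ContDiff ℝ (⊤ : ℕ∞) ψ
  supp : ∀ t, ψ t ≠ 0 → |t| ≤ 1

/-- The norm `‖f‖_{X^b_s}`. -/
def Xnorm (a : ℝ) (χ₀ χ : ℝ → ℝ) (b s : ℝ) (f : ℝ × ℝ → ℂ) : ℝ :=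
  ∑' j : ℕ, (2 : ℝ) ^ ((j : ℝ) * b) *
    (∫ p : ℝ × ℝ, chiJ χ₀ χ j (p.2 - disp a p.1) * (1 + |p.1|) ^ (2 * s) *
      ‖FT2 f p.1 p.2‖ ^ 2) ^ ((1 : ℝ) / 2)

/-- The norm `‖f‖_{Y^b_{s₀,s₁}} = ‖x·f‖_{X^b_{s₀}} + ‖t·f‖_{X^b_{s₁}}`. -/
def Ynorm (a : ℝ) (χ₀ χ : ℝ → ℝ) (b s₀ s₁ : ℝ) (f : ℝ × ℝ → ℂ) : ℝ :=
  Xnorm a χ₀ χ b s₀ (fun p => (p.1 : ℂ) * f p) +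
    Xnorm a χ₀ χ b s₁ (fun p => (p.2 : ℂ) * f p)

/-- The norm `‖f‖_{Z^b_s} = ‖f‖_{X^b_s} + ‖f‖_{Y^b_{s-2s*,s}}`, where `s* = 1/2 + a/2`. -/
def Znorm (a : ℝ) (χ₀ χ : ℝ → ℝ) (b s : ℝ) (f : ℝ × ℝ → ℂ) : ℝ :=
  Xnorm a χ₀ χ b s f + Ynorm a χ₀ χ b (s - 2 * (1 / 2 + a / 2)) s f

/-- The norm `‖f‖_{X̃^b_s}`. -/
def XtildeNorm (a b s : ℝ) (f : ℝ × ℝ → ℂ) : ℝ :=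
  (∫ p : ℝ × ℝ, (1 + |p.2 - disp a p.1|) ^ (2 * b) * (1 + |p.1|) ^ (2 * s) *
    ‖FT2 f p.1 p.2‖ ^ 2) ^ ((1 : ℝ) / 2)

/-- The Sobolev norm `‖g‖_{H^s} = (∫ (1+|ξ|)^{2s} |ĝ(ξ)|² dξ)^{1/2}`. -/
def Hnorm (s : ℝ) (g : ℝ → ℂ) : ℝ :=
  (∫ ξ : ℝ, (1 + |ξ|) ^ (2 * s) * ‖FT1 g ξ‖ ^ 2) ^ ((1 : ℝ) / 2)

/-- The weighted norm `‖g‖_{F^s} = ‖g‖_{H^s} + ‖x·g‖_{H^{s-2s*}}` (here `sstar = s*`). -/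
def Fnorm (sstar s : ℝ) (g : ℝ → ℂ) : ℝ :=
  Hnorm s g + Hnorm (s - 2 * sstar) (fun x => (x : ℂ) * g x)

/-- The `L^p` norm `(∫ ‖f‖^p)^{1/p}`. -/
def Lpnorm {α : Type*} [MeasureSpace α] {E : Type*} [NormedAddCommGroup E]
    (p : ℝ) (f : α → E) : ℝ :=
  (∫ x, ‖f x‖ ^ p) ^ (1 / p)

/-- The linear propagator `W(t)`, defined via Fourier inversion so that its Fourier
transform in `x` is `e^{itω(ξ)} û₀(ξ)`. -/
def Wgrp (a : ℝ) (u₀ : ℝ → ℂ) (t x : ℝ) : ℂ :=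
  ((1 / (2 * Real.pi) : ℝ) : ℂ) *
    ∫ ξ : ℝ, Complex.exp (-(Complex.I * ((x * ξ : ℝ) : ℂ))) *
      (Complex.exp (Complex.I * ((t * disp a ξ : ℝ) : ℂ)) * FT1 u₀ ξ)

/-- The Fourier multiplier `D^σ` with symbol `|ξ|^σ`, via Fourier inversion. -/
def Dop (σ : ℝ) (g : ℝ → ℂ) (x : ℝ) : ℂ :=
  ((1 / (2 * Real.pi) : ℝ) : ℂ) *
    ∫ ξ : ℝ, Complex.exp (-(Complex.I * ((x * ξ : ℝ) : ℂ))) *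
      (((|ξ| ^ σ : ℝ) : ℂ) * FT1 g ξ)

open scoped ENNReal

/-! ### `L²` norms of nonnegative functions and bilinear Cauchy–Schwarz bounds -/

/-- The `L²` norm of a nonnegative extended-real function. -/
def N2 {α : Type*} [MeasurableSpace α] (μ : Measure α) (f : α → ℝ≥0∞) : ℝ≥0∞ :=
  (∫⁻ x, f x ^ 2 ∂μ) ^ ((1 : ℝ) / 2)

section N2
variable {α : Type*} [MeasurableSpace α] {μ : Measure α}

theorem half_sq (x : ℝ≥0∞) : (x ^ ((1 : ℝ) / 2)) ^ 2 = x := by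
  rw [← ENNReal.rpow_natCast, ← ENNReal.rpow_mul]; norm_num

theorem sq_half (x : ℝ≥0∞) : (x ^ 2) ^ ((1 : ℝ) / 2) = x := by
  rw [← ENNReal.rpow_natCast, ← ENNReal.rpow_mul]; norm_num

theorem N2_sq (f : α → ℝ≥0∞) : N2 μ f ^ 2 = ∫⁻ x, f x ^ 2 ∂μ := half_sq _

theorem le_of_sq_le {x y : ℝ≥0∞} (h : x ^ 2 ≤ y ^ 2) : x ≤ y := by
  have := ENNReal.rpow_le_rpow h (show (0 : ℝ) ≤ 1 / 2 by norm_num)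
  rwa [sq_half, sq_half] at this

theorem N2_mono {f g : α → ℝ≥0∞} (h : ∀ x, f x ≤ g x) : N2 μ f ≤ N2 μ g := by
  unfold N2; gcongr; exact h _

theorem N2_const_mul (c : ℝ≥0∞) {f : α → ℝ≥0∞} (hf : Measurable f) :
    N2 μ (fun x => c * f x) = c * N2 μ f := by
  unfold N2
  simp_rw [mul_pow]
  rw [lintegral_const_mul _ (hf.pow_const 2), ENNReal.mul_rpow_of_nonneg _ _ (by norm_num), sq_half]

theorem cs_N2 {f g : α → ℝ≥0∞} (hf : Measurable f) (hg : Measurable g) :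
    ∫⁻ x, f x * g x ∂μ ≤ N2 μ f * N2 μ g := by
  have := ENNReal.lintegral_mul_le_Lp_mul_Lq μ Real.HolderConjugate.two_two hf.aemeasurable hg.aemeasurable
  simpa [N2] using this

theorem N2_add_le {f g : α → ℝ≥0∞} (hf : Measurable f) (hg : Measurable g) :
    N2 μ (fun x => f x + g x) ≤ N2 μ f + N2 μ g := by
  have := ENNReal.lintegral_Lp_add_le (p := 2) hf.aemeasurable (μ := μ) hg.aemeasurable (by norm_num)
  simpa [N2] using this

theorem N2_sum_le (f : ℕ → α → ℝ≥0∞) (hf : ∀ n, Measurable (f n)) (s : Finset ℕ) :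
    N2 μ (fun x => ∑ n ∈ s, f n x) ≤ ∑ n ∈ s, N2 μ (f n) := by
  induction s using Finset.induction_on with
  | empty => simp [N2]
  | insert n s hn ih =>
    simp_rw [Finset.sum_insert hn]
    exact (N2_add_le (hf n) (Finset.measurable_sum s fun i _ => hf i)).trans (by gcongr)

theorem N2_tsum_le (f : ℕ → α → ℝ≥0∞) (hf : ∀ n, Measurable (f n)) :
    N2 μ (fun x => ∑' n, f n x) ≤ ∑' n, N2 μ (f n) := by
  apply le_of_sq_le
  rw [N2_sq]
  have h1 : ∀ x, (∑' n, f n x) ^ 2 = ⨆ m : ℕ, (∑ n ∈ Finset.range m, f n x) ^ 2 := by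
    intro x
    rw [ENNReal.tsum_eq_iSup_nat]
    refine (Monotone.map_iSup_of_continuousAt (f := fun y : ℝ≥0∞ => y ^ 2)
      (ENNReal.continuous_pow 2).continuousAt (fun a b h => by dsimp; gcongr) (by simp))
  simp_rw [h1]
  rw [lintegral_iSup]
  · refine iSup_le fun m => ?_
    rw [← N2_sq (μ := μ) (fun x => ∑ n ∈ Finset.range m, f n x)]
    gcongr
    exact (N2_sum_le f hf _).trans (ENNReal.sum_le_tsum _)
  · intro m
    exact (Finset.measurable_sum _ fun i _ => hf i).pow_const 2
  · intro m n hmn x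
    dsimp
    gcongr

/-- Duality: an `L²` bound may be tested against nonnegative functions. The test function is a
truncation of `H`, so that its norm is finite and cancels. -/
theorem N2_le_of_dual [SigmaFinite μ] {H : α → ℝ≥0∞} (hH : Measurable H) {C : ℝ≥0∞}
    (h : ∀ W : α → ℝ≥0∞, Measurable W → ∫⁻ x, W x * H x ∂μ ≤ C * N2 μ W) : N2 μ H ≤ C := by
  let W : ℕ → α → ℝ≥0∞ := fun n => (spanningSets μ n).indicator fun x => min (H x) n
  have hW : ∀ n, Measurable (W n) := fun n =>
    (hH.min measurable_const).indicator (measurableSet_spanningSets μ n)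
  have hWH : ∀ n x, W n x ≤ H x := fun n x => by
    by_cases hx : x ∈ spanningSets μ n <;> simp [W, hx]
  have hmono : Monotone W := by
    intro m n hmn x
    by_cases hx : x ∈ spanningSets μ m
    · have hx' := monotone_spanningSets μ hmn hx
      simp only [W, Set.indicator_of_mem hx, Set.indicator_of_mem hx']
      gcongr
    · simp [W, hx]
  have hsup : ∀ x, ⨆ n, W n x ^ 2 = H x ^ 2 := by
    intro x
    refine le_antisymm (iSup_le fun n => by gcongr; exact hWH n x) ?_
    have : ⨆ n, W n x = H x := by
      refine le_antisymm (iSup_le fun n => hWH n x) ?_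
      refine le_of_forall_lt fun c hc => ?_
      obtain ⟨n, hn⟩ := ENNReal.exists_nat_gt hc.ne_top
      obtain ⟨m, hm⟩ : ∃ m, x ∈ spanningSets μ m := by
        have := iUnion_spanningSets μ
        exact Set.mem_iUnion.1 (this ▸ Set.mem_univ x)
      refine lt_of_lt_of_le ?_ (le_iSup _ (max m n))
      have hx' := monotone_spanningSets μ (le_max_left m n) hm
      simp only [W, Set.indicator_of_mem hx']
      refine lt_min hc (hn.trans_le ?_)
      exact_mod_cast le_max_right m n
    rw [← this, Monotone.map_iSup_of_continuousAt (f := fun y : ℝ≥0∞ => y ^ 2)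
      (ENNReal.continuous_pow 2).continuousAt (fun a b h => by dsimp; gcongr) (by simp)]
  have hfin : ∀ n, N2 μ (W n) ≠ ⊤ := by
    intro n
    refine ENNReal.rpow_ne_top_of_nonneg (by norm_num) (ne_of_lt ?_)
    calc ∫⁻ x, W n x ^ 2 ∂μ ≤ ∫⁻ x, (spanningSets μ n).indicator (fun _ => (n : ℝ≥0∞) ^ 2) x ∂μ := by
          refine lintegral_mono fun x => ?_
          by_cases hx : x ∈ spanningSets μ n
          · simp only [W, Set.indicator_of_mem hx]
            gcongr
            exact min_le_right _ _
          · simp [W, hx]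
      _ = (n : ℝ≥0∞) ^ 2 * μ (spanningSets μ n) := by
          rw [lintegral_indicator (measurableSet_spanningSets μ n)]; simp
      _ < ⊤ := ENNReal.mul_lt_top (by simp) (measure_spanningSets_lt_top μ n)
  have hb : ∀ n, ∫⁻ x, W n x ^ 2 ∂μ ≤ C ^ 2 := by
    intro n
    have h1 : N2 μ (W n) * N2 μ (W n) ≤ C * N2 μ (W n) := by
      rw [← sq, N2_sq]
      refine le_trans (lintegral_mono fun x => ?_) (h _ (hW n))
      rw [sq]; gcongr; exact hWH n x
    rw [← N2_sq]
    gcongr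
    by_cases h0 : N2 μ (W n) = 0
    · rw [h0]; exact zero_le
    · exact (ENNReal.mul_le_mul_iff_left h0 (hfin n)).1 h1
  apply le_of_sq_le
  rw [N2_sq]
  simp_rw [← hsup]
  rw [lintegral_iSup (fun n => (hW n).pow_const 2)
    (fun m n hmn x => by dsimp; gcongr; exact hmono hmn x)]
  exact iSup_le hb

end N2

section Bilin
variable {G : Type*} [AddCommGroup G] [MeasurableSpace G] [MeasurableAdd₂ G] [MeasurableNeg G] [MeasurableSub₂ G]
  {μ : Measure G} [SigmaFinite μ] [μ.IsAddLeftInvariant] [μ.IsNegInvariant]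

/-- Bilinear `L²` bound from `sup_p ∫ K(p,q)² dq`. -/
theorem bilin0 {K : G → G → ℝ≥0∞} (hK : Measurable (Function.uncurry K)) {f g : G → ℝ≥0∞}
    (hf : Measurable f) (hg : Measurable g) {S : ℝ≥0∞}
    (hS : ∀ p, ∫⁻ q, K p q ^ 2 ∂μ ≤ S ^ 2) :
    N2 μ (fun p => ∫⁻ q, K p q * (f q * g (p - q)) ∂μ) ≤ S * (N2 μ f * N2 μ g) := by
  apply le_of_sq_le
  rw [N2_sq, mul_pow, mul_pow, N2_sq, N2_sq]
  have key : ∀ p, (∫⁻ q, K p q * (f q * g (p - q)) ∂μ) ^ 2 ≤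
      S ^ 2 * ∫⁻ q, f q ^ 2 * g (p - q) ^ 2 ∂μ := by
    intro p
    have h1 := cs_N2 (μ := μ) (f := K p) (g := fun q => f q * g (p - q))
      (hK.comp (measurable_const.prodMk measurable_id))
      (hf.mul (hg.comp (measurable_const.sub measurable_id)))
    refine (pow_le_pow_left' h1 2).trans ?_
    rw [mul_pow, N2_sq, N2_sq]
    simp_rw [mul_pow]
    gcongr
    exact hS p
  refine (lintegral_mono key).trans ?_
  rw [lintegral_const_mul]
  · gcongr
    rw [lintegral_lintegral_swap]
    · refine le_of_eq ?_
      rw [← lintegral_mul_const _ (hf.pow_const 2)]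
      refine lintegral_congr fun q => ?_
      rw [lintegral_const_mul _ (by fun_prop), lintegral_sub_right_eq_self (fun x => g x ^ 2) q]
    · fun_prop
  · exact Measurable.lintegral_prod_right' (f := fun z : G × G => f z.2 ^ 2 * g (z.1 - z.2) ^ 2)
      (by fun_prop)

/-- Bilinear `L²` bound from `sup_r ∫ K(r+q,q)² dq`. -/
theorem bilin1 {K : G → G → ℝ≥0∞} (hK : Measurable (Function.uncurry K)) {f g : G → ℝ≥0∞}
    (hf : Measurable f) (hg : Measurable g) {S : ℝ≥0∞}
    (hS : ∀ r, ∫⁻ q, K (r + q) q ^ 2 ∂μ ≤ S ^ 2) :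
    N2 μ (fun p => ∫⁻ q, K p q * (f q * g (p - q)) ∂μ) ≤ S * (N2 μ f * N2 μ g) := by
  have hK' : ∀ (φ ψ : G × G → G), Measurable φ → Measurable ψ →
      Measurable fun z => K (φ z) (ψ z) := fun φ ψ hφ hψ => hK.comp (hφ.prodMk hψ)
  refine N2_le_of_dual ?_ fun W hW => ?_
  · exact Measurable.lintegral_prod_right'
      (f := fun z : G × G => K z.1 z.2 * (f z.2 * g (z.1 - z.2)))
      ((hK' _ _ measurable_fst measurable_snd).mul (by fun_prop))
  have e1 : ∫⁻ p, W p * ∫⁻ q, K p q * (f q * g (p - q)) ∂μ ∂μ =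
      ∫⁻ r, g r * ∫⁻ q, K (r + q) q * (f q * W (r + q)) ∂μ ∂μ := by
    calc _ = ∫⁻ p, ∫⁻ q, W p * (K p q * (f q * g (p - q))) ∂μ ∂μ := by
          refine lintegral_congr fun p => ?_
          rw [lintegral_const_mul]
          exact (hK.comp (measurable_const.prodMk measurable_id)).mul (by fun_prop)
      _ = ∫⁻ q, ∫⁻ p, W p * (K p q * (f q * g (p - q))) ∂μ ∂μ := by
          rw [lintegral_lintegral_swap]
          exact ((hW.comp measurable_fst).mul
            ((hK' _ _ measurable_fst measurable_snd).mul (by fun_prop))).aemeasurable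
      _ = ∫⁻ q, ∫⁻ r, W (r + q) * (K (r + q) q * (f q * g r)) ∂μ ∂μ := by
          refine lintegral_congr fun q => ?_
          rw [← lintegral_add_right_eq_self _ q]
          simp
      _ = ∫⁻ r, ∫⁻ q, W (r + q) * (K (r + q) q * (f q * g r)) ∂μ ∂μ := by
          rw [lintegral_lintegral_swap]
          exact ((hW.comp (measurable_snd.add measurable_fst)).mul
            ((hK' (fun z => z.2 + z.1) (fun z => z.1) (by fun_prop) (by fun_prop)).mul (by fun_prop))).aemeasurable
      _ = _ := by
          refine lintegral_congr fun r => ?_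
          rw [← lintegral_const_mul]
          · refine lintegral_congr fun q => ?_
            ring
          · exact (hK.comp ((measurable_const_add r).prodMk measurable_id)).mul (by fun_prop)
  rw [e1]
  have hm : Measurable fun r => ∫⁻ q, K (r + q) q * (f q * W (r + q)) ∂μ :=
    Measurable.lintegral_prod_right'
      (f := fun z : G × G => K (z.1 + z.2) z.2 * (f z.2 * W (z.1 + z.2)))
      ((hK' (fun z => z.1 + z.2) (fun z => z.2) (by fun_prop) (by fun_prop)).mul (by fun_prop))
  refine (cs_N2 hg hm).trans ?_
  have h2 : N2 μ (fun r => ∫⁻ q, K (r + q) q * (f q * W (r + q)) ∂μ) ≤ S * (N2 μ f * N2 μ W) := by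
    have hneg : ∀ r, ∫⁻ q, K (r + q) q * (f q * W (r + q)) ∂μ =
        ∫⁻ q, K (r - q) (-q) * (f (-q) * W (r - q)) ∂μ := by
      intro r
      rw [← lintegral_neg_eq_self]
      simp [sub_eq_add_neg]
    simp_rw [hneg]
    have := bilin0 (μ := μ) (K := fun r q => K (r - q) (-q)) (f := fun q => f (-q)) (g := W)
      (hK' (fun z => z.1 - z.2) (fun z => -z.2) (by fun_prop) (by fun_prop)) (by fun_prop) hW (S := S) (fun r => by
        refine le_trans (le_of_eq ?_) (hS r)
        rw [← lintegral_neg_eq_self]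
        simp)
    refine this.trans (le_of_eq ?_)
    congr 2
    unfold N2
    rw [lintegral_neg_eq_self (fun x => f x ^ 2)]
  calc N2 μ g * _ ≤ N2 μ g * (S * (N2 μ f * N2 μ W)) := by gcongr
    _ = _ := by ring

/-- Bilinear `L²` bound from `sup_q ∫ K(q+r,q)² dr`. -/
theorem bilin2 {K : G → G → ℝ≥0∞} (hK : Measurable (Function.uncurry K)) {f g : G → ℝ≥0∞}
    (hf : Measurable f) (hg : Measurable g) {S : ℝ≥0∞}
    (hS : ∀ q, ∫⁻ r, K (q + r) q ^ 2 ∂μ ≤ S ^ 2) :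
    N2 μ (fun p => ∫⁻ q, K p q * (f q * g (p - q)) ∂μ) ≤ S * (N2 μ f * N2 μ g) := by
  have := bilin1 (μ := μ) (K := fun p r => K p (p - r)) (f := g) (g := f) (S := S)
    (hK.comp (measurable_fst.prodMk (measurable_fst.sub measurable_snd))) hg hf (fun q => by simpa using hS q)
  calc _ = N2 μ (fun p => ∫⁻ q, K p (p - q) * (g q * f (p - q)) ∂μ) := by
        congr 1
        funext p
        rw [← lintegral_sub_left_eq_self _ p]
        simp [mul_comm]
    _ ≤ _ := this
    _ = _ := by ring

end Bilin

/-! ### The dispersion relation and the resonance function -/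

section Disp
variable {a : ℝ}

theorem disp_neg (a x : ℝ) : disp a (-x) = -disp a x := by simp [disp]

theorem disp_of_nonneg (ha : 0 < a) {x : ℝ} (hx : 0 ≤ x) : disp a x = x ^ (2 + a) := by
  rw [disp, abs_of_nonneg hx, Real.rpow_add_of_nonneg hx (by norm_num) ha.le, Real.rpow_one,
    Real.rpow_add_of_nonneg hx (by norm_num) ha.le, Real.rpow_two]
  ring

theorem abs_disp (ha : 0 < a) (x : ℝ) : |disp a x| = |x| ^ (2 + a) := by
  rw [← disp_of_nonneg ha (abs_nonneg x), disp, disp, abs_abs, abs_mul,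
    abs_of_nonneg (Real.rpow_nonneg (abs_nonneg x) _)]

theorem continuous_disp (ha : 0 < a) : Continuous (disp a) := by
  unfold disp
  exact continuous_id.mul (continuous_abs.rpow_const fun x => Or.inr (by linarith))

theorem rpow_two_add (ha : 0 < a) {x : ℝ} (hx : 0 ≤ x) : x ^ (2 + a) = x ^ 2 * x ^ a := by
  rw [Real.rpow_add_of_nonneg hx (by norm_num) ha.le, Real.rpow_two]

theorem rpow_one_add' (ha : 0 < a) {x : ℝ} (hx : 0 ≤ x) : x ^ (1 + a) = x * x ^ a := by
  rw [Real.rpow_add_of_nonneg hx (by norm_num) ha.le, Real.rpow_one]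

/-- A quantitative superadditivity of `x ↦ x^{2+a}`, from which the resonance bound follows by
a case distinction on signs. -/
theorem superadd (ha : 0 < a) {x y : ℝ} (hx : 0 ≤ x) (hy : 0 ≤ y) :
    x ^ (2 + a) + y ^ (2 + a) + 2 * (x * y * (x + y) ^ a) ≤ (x + y) ^ (2 + a) := by
  rw [rpow_two_add ha hx, rpow_two_add ha hy, rpow_two_add ha (add_nonneg hx hy)]
  have h1 : x ^ a ≤ (x + y) ^ a := Real.rpow_le_rpow hx (by linarith) ha.le
  have h2 : y ^ a ≤ (x + y) ^ a := Real.rpow_le_rpow hy (by linarith) ha.le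
  nlinarith [mul_le_mul_of_nonneg_left h1 (sq_nonneg x), mul_le_mul_of_nonneg_left h2 (sq_nonneg y)]

/-- Lower bound for the resonance function: it is at least `|ξ₁| |ξ₁ + ξ₂| |ξ₂|^a` when
`|ξ₁| ≤ |ξ₂|`. -/
theorem resonance (ha : 0 < a) {x y : ℝ} (hxy : |x| ≤ |y|) :
    |x| * |x + y| * |y| ^ a ≤ |disp a x + disp a y - disp a (x + y)| := by
  wlog hy : 0 ≤ y generalizing x y
  · have := this (x := -x) (y := -y) (by simpa using hxy) (by linarith)
    rw [← neg_add, disp_neg, disp_neg, disp_neg, abs_neg, abs_neg, abs_neg] at this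
    refine this.trans (le_of_eq ?_)
    rw [← abs_neg]; congr 1; ring
  rw [abs_of_nonneg hy] at hxy ⊢
  rcases le_total 0 x with hx | hx
  · rw [abs_of_nonneg hx] at hxy ⊢
    rw [abs_of_nonneg (add_nonneg hx hy), disp_of_nonneg ha hx, disp_of_nonneg ha hy,
      disp_of_nonneg ha (add_nonneg hx hy)]
    have h := superadd ha hx hy
    have h2 : y ^ a ≤ (x + y) ^ a := Real.rpow_le_rpow hy (by linarith) ha.le
    have h3 := Real.rpow_nonneg hy a
    rw [abs_sub_comm, abs_of_nonneg]
    · have : x * (x + y) * y ^ a ≤ 2 * (x * y) * (x + y) ^ a := by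
        refine mul_le_mul ?_ h2 h3 (by positivity)
        nlinarith
      linarith
    · have : 0 ≤ 2 * (x * y * (x + y) ^ a) := by positivity
      linarith
  · obtain ⟨z, rfl⟩ : ∃ z, x = -z := ⟨-x, by ring⟩
    have hz : 0 ≤ z := by linarith
    rw [abs_neg, abs_of_nonneg hz] at hxy ⊢
    have hw : 0 ≤ -z + y := by linarith
    rw [abs_of_nonneg hw, disp_neg, disp_of_nonneg ha hz, disp_of_nonneg ha hy,
      disp_of_nonneg ha hw]
    have h := superadd ha hz hw
    rw [show z + (-z + y) = y by ring] at h
    have h3 : 0 ≤ z * (-z + y) * y ^ a := by positivity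
    rw [abs_of_nonneg] <;> linarith

theorem disp_sub_lower_same (ha : 0 < a) {x y : ℝ} (hyx : |y| ≤ |x|) (hs : 0 ≤ x * y) :
    |x| ^ (1 + a) * |x - y| ≤ |disp a x - disp a y| := by
  wlog hx : 0 ≤ x generalizing x y
  · have := this (x := -x) (y := -y) (by simpa using hyx) (by linarith) (by linarith)
    rw [disp_neg, disp_neg, abs_neg] at this
    rw [← abs_neg (x - y), ← abs_neg (disp a x - _), neg_sub', neg_sub']
    exact this
  rcases hx.eq_or_lt with rfl | hx0
  · simp at hyx; simp [hyx]
  have hy : 0 ≤ y := nonneg_of_mul_nonneg_right hs hx0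
  rw [abs_of_nonneg hy, abs_of_nonneg hx] at hyx
  rw [disp_of_nonneg ha hx, disp_of_nonneg ha hy, abs_of_nonneg hx,
    rpow_two_add ha hx, rpow_two_add ha hy, rpow_one_add' ha hx]
  rw [abs_of_nonneg (by linarith : 0 ≤ x - y)]
  refine le_trans ?_ (le_abs_self _)
  have h1 : y ^ a ≤ x ^ a := Real.rpow_le_rpow hy hyx ha.le
  have h2 := Real.rpow_nonneg hx a
  have h3 : y ^ 2 * y ^ a ≤ (x * y) * x ^ a := mul_le_mul (by nlinarith) h1 (by positivity) hs
  nlinarith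

theorem disp_sub_lower (ha : 0 < a) {x y : ℝ} (hyx : |y| ≤ |x|) :
    |x| ^ (1 + a) * |x - y| ≤ 2 * |disp a x - disp a y| := by
  rcases le_total 0 (x * y) with hs | hs
  · have := disp_sub_lower_same ha hyx hs
    linarith [abs_nonneg (disp a x - disp a y)]
  · wlog hx : 0 ≤ x generalizing x y
    · have := this (x := -x) (y := -y) (by simpa using hyx) (by linarith) (by linarith)
      rw [disp_neg, disp_neg, abs_neg] at this
      rw [← abs_neg (x - y), ← abs_neg (disp a x - _), neg_sub', neg_sub']
      exact this
    rcases hx.eq_or_lt with rfl | hx0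
    · simp at hyx; simp [hyx]
    have hy : y ≤ 0 := nonpos_of_mul_nonpos_right hs hx0
    obtain ⟨z, rfl⟩ : ∃ z, y = -z := ⟨-y, by ring⟩
    have hz : 0 ≤ z := by linarith
    rw [abs_neg, abs_of_nonneg hz, abs_of_nonneg hx] at hyx
    rw [disp_neg, disp_of_nonneg ha hx, disp_of_nonneg ha hz, abs_of_nonneg hx,
      rpow_two_add ha hx, rpow_two_add ha hz, rpow_one_add' ha hx, sub_neg_eq_add, sub_neg_eq_add,
      abs_of_nonneg (by positivity), abs_of_nonneg (by positivity)]
    have h2 := Real.rpow_nonneg hx a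
    have h3 : 0 ≤ z ^ 2 * z ^ a := by positivity
    nlinarith [mul_nonneg (mul_nonneg hx h2) (sub_nonneg.2 hyx)]

theorem disp_sub_upper (ha : 0 < a) (ha1 : a < 1) {x y R : ℝ} (hx : |x| ≤ R) (hy : |y| ≤ R) :
    |disp a x - disp a y| ≤ 3 * R ^ (1 + a) * |x - y| := by
  wlog hyx : |y| ≤ |x| generalizing x y
  · rw [abs_sub_comm, abs_sub_comm x]
    exact this hy hx (le_of_not_ge hyx)
  wlog hx0 : 0 ≤ x generalizing x y
  · have := this (x := -x) (y := -y) (by simpa using hx) (by simpa using hy) (by simpa using hyx)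
      (by linarith)
    rw [disp_neg, disp_neg] at this
    rw [← abs_neg (x - y), ← abs_neg (disp a x - _), neg_sub', neg_sub']
    exact this
  rw [abs_of_nonneg hx0] at hyx hx
  have hR : x ^ (1 + a) ≤ R ^ (1 + a) := Real.rpow_le_rpow hx0 hx (by linarith)
  have key : |disp a x - disp a y| ≤ 3 * x ^ (1 + a) * |x - y| := by
    have hxa := Real.rpow_nonneg hx0 a
    rcases le_total 0 y with h | h
    · rw [abs_of_nonneg h] at hyx
      rcases hx0.eq_or_lt with rfl | hpos
      · have : y = 0 := le_antisymm hyx h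
        simp [this]
      have hb := one_add_mul_self_le_rpow_one_add (s := y / x - 1) (p := 2 + a)
        (by have : 0 ≤ y / x := by positivity
            linarith) (by linarith)
      rw [show 1 + (y / x - 1) = y / x by ring, Real.div_rpow h hx0,
        le_div_iff₀ (by positivity)] at hb
      rw [disp_of_nonneg ha hx0, disp_of_nonneg ha h, abs_of_nonneg (by linarith : 0 ≤ x - y),
        abs_of_nonneg (by linarith [Real.rpow_le_rpow h hyx (by linarith : 0 ≤ 2 + a)])]
      have e : (1 + (2 + a) * (y / x - 1)) * x ^ (2 + a) =
          x ^ (2 + a) - (2 + a) * (x - y) * x ^ (1 + a) := by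
        rw [rpow_two_add ha hx0, rpow_one_add' ha hx0]
        field_simp
        ring
      rw [e] at hb
      have : 0 ≤ (1 - a) * ((x - y) * x ^ (1 + a)) :=
        mul_nonneg (by linarith) (mul_nonneg (by linarith) (by positivity))
      nlinarith
    · obtain ⟨z, rfl⟩ : ∃ z, y = -z := ⟨-y, by ring⟩
      have hz : 0 ≤ z := by linarith
      rw [abs_neg, abs_of_nonneg hz] at hyx
      rw [disp_neg, disp_of_nonneg ha hx0, disp_of_nonneg ha hz,
        rpow_two_add ha hx0, rpow_two_add ha hz, rpow_one_add' ha hx0, sub_neg_eq_add,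
        sub_neg_eq_add, abs_of_nonneg (by positivity), abs_of_nonneg (by positivity)]
      have h1 : z ^ a ≤ x ^ a := Real.rpow_le_rpow hz hyx ha.le
      have h3 : z ^ 2 * z ^ a ≤ (x * z) * x ^ a :=
        mul_le_mul (by nlinarith) h1 (by positivity) (by positivity)
      have h4 : 0 ≤ x * z * x ^ a := by positivity
      have h5 : 0 ≤ x ^ 2 * x ^ a := by positivity
      nlinarith
  refine key.trans ?_
  gcongr

/-- The phase `x ↦ ω(x+η) - ω(x)` is bi-Lipschitz from below, with constant of size `|η|^{1+a}`,
on `|x| ≤ |η|/7`. -/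
theorem phase_lower (ha : 0 < a) (ha1 : a < 1) {x y η : ℝ} (hx : 7 * |x| ≤ |η|)
    (hy : 7 * |y| ≤ |η|) :
    |η| ^ (1 + a) * |x - y| ≤
      7 * |(disp a (x + η) - disp a x) - (disp a (y + η) - disp a y)| := by
  have h1 : |disp a x - disp a y| ≤ 3 * (|η| / 7) ^ (1 + a) * |x - y| :=
    disp_sub_upper ha ha1 (by linarith) (by linarith)
  have hη := abs_nonneg η
  have h2 : (6 / 7 * |η|) ^ (1 + a) * |x - y| ≤ |disp a (x + η) - disp a (y + η)| := by
    have hb : ∀ z, 7 * |z| ≤ |η| → 6 / 7 * |η| ≤ |z + η| := fun z hz => by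
      have := abs_sub_abs_le_abs_sub η (-z)
      rw [abs_neg, sub_neg_eq_add, add_comm η] at this
      linarith
    have hs : 0 ≤ (x + η) * (y + η) := by
      rcases le_total 0 η with h | h
      · rw [abs_of_nonneg h] at hx hy
        exact mul_nonneg (by linarith [neg_abs_le x]) (by linarith [neg_abs_le y])
      · rw [abs_of_nonpos h] at hx hy
        exact mul_nonneg_of_nonpos_of_nonpos (by linarith [le_abs_self x])
          (by linarith [le_abs_self y])
    rcases le_total |y + η| |x + η| with h | h
    · have := disp_sub_lower_same ha h hs
      rw [add_sub_add_right_eq_sub] at this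
      refine le_trans ?_ this
      gcongr
      exact hb x hx
    · have := disp_sub_lower_same ha h (by linarith)
      rw [add_sub_add_right_eq_sub] at this
      rw [abs_sub_comm x, abs_sub_comm (disp a (x + η))]
      refine le_trans ?_ this
      gcongr
      exact hb y hy
  rw [Real.mul_rpow (by norm_num) hη] at h2
  rw [Real.div_rpow hη (by norm_num)] at h1
  have h3 : (36 / 49 : ℝ) ≤ (6 / 7) ^ (1 + a) := by
    calc (36 / 49 : ℝ) = (6 / 7) ^ (2 : ℝ) := by norm_num
      _ ≤ _ := Real.rpow_le_rpow_of_exponent_ge (by norm_num) (by norm_num) (by linarith)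
  have h4 : (7 : ℝ) ≤ 7 ^ (1 + a) := by
    calc (7 : ℝ) = 7 ^ (1 : ℝ) := by norm_num
      _ ≤ _ := Real.rpow_le_rpow_of_exponent_le (by norm_num) (by linarith)
  set E := |η| ^ (1 + a)
  have hE : 0 ≤ E := by positivity
  have h5 : E / 7 ^ (1 + a) ≤ E / 7 := by gcongr
  have hd := abs_nonneg (x - y)
  have h6 : |disp a x - disp a y| ≤ 3 * (E / 7) * |x - y| := h1.trans (by gcongr)
  have h7 : 36 / 49 * E * |x - y| ≤ |disp a (x + η) - disp a (y + η)| :=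
    le_trans (by gcongr) h2
  have h8 := abs_sub_abs_le_abs_sub (disp a (x + η) - disp a (y + η)) (disp a x - disp a y)
  rw [show disp a (x + η) - disp a x - (disp a (y + η) - disp a y) =
    disp a (x + η) - disp a (y + η) - (disp a x - disp a y) by ring]
  nlinarith [mul_nonneg hE hd]

end Disp

/-! ### Strips around the dispersion curve and local smoothing -/

open Classical in
/-- Indicator of a proposition, with values in `ℝ≥0∞`. -/
def ind (P : Prop) : ℝ≥0∞ := if P then 1 else 0

section Ind

theorem ind_true {P : Prop} (h : P) : ind P = 1 := by simp [ind, h]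
theorem ind_false {P : Prop} (h : ¬P) : ind P = 0 := by simp [ind, h]
theorem ind_le_one (P : Prop) : ind P ≤ 1 := by unfold ind; split_ifs <;> simp
theorem ind_sq (P : Prop) : ind P ^ 2 = ind P := by unfold ind; split_ifs <;> simp
theorem ind_mul (P Q : Prop) : ind P * ind Q = ind (P ∧ Q) := by
  unfold ind; split_ifs <;> simp_all
theorem ind_mono {P Q : Prop} (h : P → Q) : ind P ≤ ind Q := by
  unfold ind; split_ifs <;> simp_all

theorem measurable_ind {α : Type*} [MeasurableSpace α] {p : α → Prop}
    (h : MeasurableSet {x | p x}) : Measurable fun x => ind (p x) := by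
  classical
  exact Measurable.ite h measurable_const measurable_const

theorem lintegral_ind {α : Type*} [MeasurableSpace α] {μ : Measure α} {p : α → Prop}
    (h : MeasurableSet {x | p x}) : ∫⁻ x, ind (p x) ∂μ = μ {x | p x} := by
  rw [← lintegral_indicator_one h]
  refine lintegral_congr fun x => ?_
  by_cases hx : p x
  · rw [ind_true hx, Set.indicator_of_mem (show x ∈ {x | p x} from hx)]; rfl
  · rw [ind_false hx, Set.indicator_of_notMem (show x ∉ {x | p x} from hx)]

end Ind

/-- A set of diameter at most `T / D` has measure at most `T / D`. -/
theorem volume_le_of_dist {E : Set ℝ} {D T : ℝ} (hD : 0 < D)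
    (h : ∀ x ∈ E, ∀ y ∈ E, D * |x - y| ≤ T) : volume E ≤ ENNReal.ofReal (T / D) := by
  refine (Real.volume_le_diam E).trans (Metric.ediam_le fun x hx y hy => ?_)
  rw [edist_dist, Real.dist_eq]
  refine ENNReal.ofReal_le_ofReal ?_
  rw [le_div_iff₀ hD]
  linarith [h x hx y hy]

theorem volume_strip_le (c L : ℝ) : volume {y : ℝ | |y - c| ≤ L} = ENNReal.ofReal (2 * L) := by
  have : {y : ℝ | |y - c| ≤ L} = Set.Icc (c - L) (c + L) := by
    ext y
    rw [Set.mem_ofPred_eq, abs_le, Set.mem_Icc]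
    constructor <;> rintro ⟨h1, h2⟩ <;> constructor <;> linarith
  rw [this, Real.volume_Icc]; congr 1; ring

/-- Integrating a function of `ξ` over a strip of half-width `L` around a graph. -/
theorem lintegral_strip_le {α : ℝ → ℝ} (hα : Measurable α) {φ : ℝ → ℝ≥0∞} (hφ : Measurable φ)
    (L : ℝ) : ∫⁻ q : ℝ × ℝ, φ q.1 * ind (|q.2 - α q.1| ≤ L) ≤
      ENNReal.ofReal (2 * L) * ∫⁻ x, φ x := by
  have hm : MeasurableSet {q : ℝ × ℝ | |q.2 - α q.1| ≤ L} :=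
    measurableSet_le (by fun_prop) measurable_const
  rw [Measure.volume_eq_prod, lintegral_prod (fun q : ℝ × ℝ => φ q.1 * ind (|q.2 - α q.1| ≤ L))
    ((hφ.comp measurable_fst).mul (measurable_ind hm)).aemeasurable, ← lintegral_const_mul _ hφ]
  refine lintegral_mono fun x => ?_
  have hm' : MeasurableSet {y : ℝ | |y - α x| ≤ L} := measurableSet_le (by fun_prop) measurable_const
  dsimp only
  rw [lintegral_const_mul _ (measurable_ind hm'), lintegral_ind hm', volume_strip_le, mul_comm]

/-- Area of the intersection of two strips around graphs that are transversal with slope at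
least `D / 7`. -/
theorem two_strip {α β : ℝ → ℝ} (hα : Measurable α) (hβ : Measurable β) {E : Set ℝ}
    (hE : MeasurableSet E) {D L₁ L₂ : ℝ} (hD : 0 < D) (h1 : 0 < L₁) (h2 : 0 < L₂)
    (h : ∀ x ∈ E, ∀ y ∈ E, D * |x - y| ≤ 7 * |(α x - β x) - (α y - β y)|) :
    ∫⁻ q : ℝ × ℝ, ind (q.1 ∈ E ∧ |q.2 - α q.1| ≤ L₁ ∧ |q.2 - β q.1| ≤ L₂) ≤
      ENNReal.ofReal (56 * L₁ * L₂ / D) := by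
  let F : Set ℝ := {x | x ∈ E ∧ |α x - β x| ≤ L₁ + L₂}
  have hF : MeasurableSet F := hE.inter
    (measurableSet_le (f := fun x => |α x - β x|) (by fun_prop) measurable_const)
  have hFv : volume F ≤ ENNReal.ofReal (14 * (L₁ + L₂) / D) := by
    refine volume_le_of_dist hD fun x hx y hy => (h x hx.1 y hy.1).trans ?_
    have := abs_sub (α x - β x) (α y - β y)
    linarith [hx.2, hy.2]
  have hbound : ∀ (γ : ℝ → ℝ) (L : ℝ), Measurable γ →
      (∀ q : ℝ × ℝ, |q.2 - α q.1| ≤ L₁ → |q.2 - β q.1| ≤ L₂ → |q.2 - γ q.1| ≤ L) →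
      ∫⁻ q : ℝ × ℝ, ind (q.1 ∈ E ∧ |q.2 - α q.1| ≤ L₁ ∧ |q.2 - β q.1| ≤ L₂) ≤
        ENNReal.ofReal (2 * L) * ENNReal.ofReal (14 * (L₁ + L₂) / D) := by
    intro γ L hγ hL
    have h3 := lintegral_strip_le hγ (measurable_ind (p := fun x => x ∈ F) hF) L
    rw [lintegral_ind (p := fun x => x ∈ F) hF] at h3
    refine le_trans (lintegral_mono fun q => ?_) (h3.trans (by gcongr; exact hFv))
    rw [ind_mul]
    refine ind_mono fun hq => ⟨⟨hq.1, ?_⟩, hL q hq.2.1 hq.2.2⟩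
    have := abs_sub_le (α q.1) q.2 (β q.1)
    rw [abs_sub_comm (α q.1) q.2] at this
    linarith [hq.2.1, hq.2.2]
  rcases le_total L₁ L₂ with hl | hl
  · refine (hbound α L₁ hα (fun q h _ => h)).trans ?_
    rw [← ENNReal.ofReal_mul (by positivity)]
    refine ENNReal.ofReal_le_ofReal ?_
    rw [← mul_div_assoc]
    exact div_le_div_of_nonneg_right (by nlinarith) hD.le
  · refine (hbound β L₂ hβ (fun q _ h => h)).trans ?_
    rw [← ENNReal.ofReal_mul (by positivity)]
    refine ENNReal.ofReal_le_ofReal ?_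
    rw [← mul_div_assoc]
    exact div_le_div_of_nonneg_right (by nlinarith) hD.le

section Kato
variable {a : ℝ}

/-- The set `|λ - ω(ξ)| ≤ L` has measure `m` and lies in `|ξ| ≤ X`, where `X` is the largest modulus
attained on it; the growth of `ω` near that point bounds `X^{1+a} m`. -/
theorem kato_aux (ha : 0 < a) (lam : ℝ) {L : ℝ} (hL : 0 ≤ L) :
    ∃ X m : ℝ, 0 ≤ X ∧ 0 ≤ m ∧ m ≤ 2 * X ∧ X ^ (1 + a) * m ≤ 8 * L ∧
      ∀ σ : ℝ, 0 < σ → ∫⁻ x : ℝ, ENNReal.ofReal (|x| ^ σ) * ind (|lam - disp a x| ≤ L) ≤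
        ENNReal.ofReal (X ^ σ * m) := by
  set E : Set ℝ := {x | |lam - disp a x| ≤ L} with hEdef
  have hEc : IsClosed E := isClosed_le (by have := continuous_disp ha; fun_prop) continuous_const
  have hEb : Bornology.IsBounded E := by
    refine (Metric.isBounded_iff_subset_closedBall 0).2 ⟨1 + |lam| + L, fun x hx => ?_⟩
    rw [mem_closedBall_zero_iff, Real.norm_eq_abs]
    by_contra hcon
    push Not at hcon
    have h1 : (1 : ℝ) ≤ |x| := by linarith [abs_nonneg lam]
    have h2 : |x| ≤ |disp a x| := by
      rw [abs_disp ha]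
      calc |x| = |x| ^ (1 : ℝ) := by simp
        _ ≤ _ := Real.rpow_le_rpow_of_exponent_le h1 (by linarith)
    have h3 := abs_sub_abs_le_abs_sub (disp a x) lam
    rw [abs_sub_comm] at h3
    have : |lam - disp a x| ≤ L := hx
    linarith
  have hcomp : IsCompact E := Metric.isCompact_of_isClosed_isBounded hEc hEb
  rcases E.eq_empty_or_nonempty with hemp | hne
  · refine ⟨0, 0, le_rfl, le_rfl, by simp, by simp [hL], fun σ hσ => ?_⟩
    have : ∀ x : ℝ, ind (|lam - disp a x| ≤ L) = 0 := fun x => ind_false fun hx =>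
      (hemp ▸ (show x ∈ E from hx) : x ∈ (∅ : Set ℝ))
    simp [this]
  obtain ⟨x0, hx0, hmax⟩ := hcomp.exists_isMaxOn hne continuous_abs.continuousOn
  have hmax' : ∀ y ∈ E, |y| ≤ |x0| := fun y hy => hmax hy
  have hsub : E ⊆ Set.Icc (-|x0|) |x0| := fun y hy => abs_le.1 (hmax' y hy)
  have hv1 : volume E ≤ ENNReal.ofReal (2 * |x0|) := by
    refine (measure_mono hsub).trans ?_
    rw [Real.volume_Icc]; apply le_of_eq; congr 1; ring
  have hfin : volume E ≠ ⊤ := (hv1.trans_lt ENNReal.ofReal_lt_top).ne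
  refine ⟨|x0|, (volume E).toReal, abs_nonneg _, ENNReal.toReal_nonneg, ?_, ?_, ?_⟩
  · exact ENNReal.toReal_le_of_le_ofReal (by positivity) hv1
  · rcases (abs_nonneg x0).eq_or_lt with h0 | hpos
    · rw [← h0, Real.zero_rpow (by linarith)]; simp [hL]
    have hpos' : 0 < |x0| ^ (1 + a) := by positivity
    have hv2 : volume E ≤ ENNReal.ofReal (8 * L / |x0| ^ (1 + a)) := by
      refine volume_le_of_dist hpos' fun x hx y hy => ?_
      have hd : ∀ z ∈ E, |x0| ^ (1 + a) * |x0 - z| ≤ 4 * L := by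
        intro z hz
        have h1 := disp_sub_lower ha (hmax' z hz)
        have h2 := abs_sub_le (disp a x0) lam (disp a z)
        rw [abs_sub_comm (disp a x0) lam] at h2
        have h3 : |lam - disp a x0| ≤ L := hx0
        have h4 : |lam - disp a z| ≤ L := hz
        linarith
      have h5 := abs_sub_le x x0 y
      rw [abs_sub_comm x x0] at h5
      nlinarith [hd x hx, hd y hy]
    have := ENNReal.toReal_le_of_le_ofReal (by positivity) hv2
    rw [le_div_iff₀ hpos'] at this
    linarith
  · intro σ hσ
    calc _ ≤ ∫⁻ x : ℝ, ENNReal.ofReal (|x0| ^ σ) * ind (|lam - disp a x| ≤ L) := by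
          refine lintegral_mono fun x => ?_
          by_cases hx : |lam - disp a x| ≤ L
          · dsimp only
            gcongr ENNReal.ofReal ?_ * _
            exact Real.rpow_le_rpow (abs_nonneg x) (hmax' x hx) hσ.le
          · simp [ind_false hx]
      _ = ENNReal.ofReal (|x0| ^ σ) * volume E := by
          rw [lintegral_const_mul _ (measurable_ind hEc.measurableSet),
            lintegral_ind hEc.measurableSet]
      _ = _ := by
          rw [ENNReal.ofReal_mul (by positivity), ENNReal.ofReal_toReal hfin]

/-- Local smoothing: `∫ |ξ|^{1+a} dξ ≲ L` over `|λ - ω(ξ)| ≤ L`. -/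
theorem kato_one (ha : 0 < a) (lam : ℝ) {L : ℝ} (hL : 0 ≤ L) :
    ∫⁻ x : ℝ, ENNReal.ofReal (|x| ^ (1 + a)) * ind (|lam - disp a x| ≤ L) ≤
      ENNReal.ofReal (8 * L) := by
  obtain ⟨X, m, hX, hm, h1, h2, h3⟩ := kato_aux ha lam hL
  exact (h3 (1 + a) (by linarith)).trans (ENNReal.ofReal_le_ofReal h2)

/-- `∫ |ξ|^{1-a} dξ ≲ L^{(2-a)/(2+a)}` over `|λ - ω(ξ)| ≤ L`. -/
theorem kato_two (ha : 0 < a) (ha1 : a < 1) (lam : ℝ) {L : ℝ} (hL : 0 ≤ L) :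
    ∫⁻ x : ℝ, ENNReal.ofReal (|x| ^ (1 - a)) * ind (|lam - disp a x| ≤ L) ≤
      ENNReal.ofReal (16 * L ^ ((2 - a) / (2 + a))) := by
  obtain ⟨X, m, hX, hm, h1, h2, h3⟩ := kato_aux ha lam hL
  refine (h3 (1 - a) (by linarith)).trans (ENNReal.ofReal_le_ofReal ?_)
  set θ := (2 - a) / (2 + a) with hθ
  have hθ0 : 0 < θ := div_pos (by linarith) (by linarith)
  have hθ1 : θ < 1 := by rw [hθ, div_lt_one (by linarith)]; linarith
  have hθe : (1 - a) + (1 - θ) = (1 + a) * θ := by rw [hθ]; field_simp; ring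
  calc X ^ (1 - a) * m = X ^ (1 - a) * (m ^ (1 - θ) * m ^ θ) := by
        rw [← Real.rpow_add_of_nonneg hm (by linarith) hθ0.le]; simp
    _ ≤ X ^ (1 - a) * ((2 * X) ^ (1 - θ) * m ^ θ) := by
        gcongr
    _ = 2 ^ (1 - θ) * (X ^ (1 + a) * m) ^ θ := by
        rw [Real.mul_rpow (by norm_num) hX, Real.mul_rpow (by positivity) hm, ← Real.rpow_mul hX,
          ← hθe, Real.rpow_add_of_nonneg hX (by linarith) (by linarith)]
        ring
    _ ≤ 2 ^ (1 : ℝ) * (8 * L) ^ θ := by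
        gcongr
        · norm_num
        · linarith
    _ = 2 * (8 ^ θ * L ^ θ) := by rw [Real.mul_rpow (by norm_num) hL, Real.rpow_one]
    _ ≤ 2 * (8 ^ (1 : ℝ) * L ^ θ) := by
        gcongr
        norm_num
    _ = _ := by rw [Real.rpow_one]; ring

end Kato

/-! ### Dyadic bilinear estimates, case by case -/

section Dyadic
variable {a β : ℝ}

/-- The kernel `2|ξ||ξ₁|^{-s*}` restricted to a set of pairs `(p, q) = ((ξ,λ), (ξ₁,λ₁))`. -/
def ker (a : ℝ) (P : ℝ × ℝ → ℝ × ℝ → Prop) (p q : ℝ × ℝ) : ℝ≥0∞ :=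
  ENNReal.ofReal (2 * |p.1| * |q.1| ^ (-((1 + a) / 2))) * ind (P p q)

theorem ker_sq (a : ℝ) (P : ℝ × ℝ → ℝ × ℝ → Prop) (p q : ℝ × ℝ) :
    ker a P p q ^ 2 = ENNReal.ofReal (4 * |p.1| ^ 2 * |q.1| ^ (-(1 + a))) * ind (P p q) := by
  rw [ker, mul_pow, ind_sq, ← ENNReal.ofReal_pow (by positivity), mul_pow, mul_pow,
    ← Real.rpow_natCast (|q.1| ^ _), ← Real.rpow_mul (abs_nonneg _)]
  congr 3
  · norm_num
  · congr 1; push_cast; ring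

theorem measurable_ker {P : ℝ × ℝ → ℝ × ℝ → Prop}
    (h : MeasurableSet {z : (ℝ × ℝ) × (ℝ × ℝ) | P z.1 z.2}) :
    Measurable (Function.uncurry (ker a P)) := by
  unfold ker
  exact Measurable.mul (by fun_prop) (measurable_ind (p := fun z : (ℝ × ℝ) × (ℝ × ℝ) => P z.1 z.2) h)

/-- To bound `∫ ker²` it suffices to bound the real integrand on the support. -/
theorem ker_sq_le {P : ℝ × ℝ → ℝ × ℝ → Prop} {p q : ℝ × ℝ} {c : ℝ} {Q : Prop}
    (h : P p q → 4 * |p.1| ^ 2 * |q.1| ^ (-(1 + a)) ≤ c ∧ Q) :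
    ker a P p q ^ 2 ≤ ENNReal.ofReal c * ind Q := by
  rw [ker_sq]
  by_cases hP : P p q
  · rw [ind_true hP, ind_true (h hP).2]
    gcongr
    exact (h hP).1
  · rw [ind_false hP]; simp

theorem expo_le (hβ0 : 0 < β) (hβ1 : β ≤ 1) (ha1 : a < 1) (hβ2 : 1 - a ≤ β * (1 + a))
    {x c M : ℝ} (hx : 0 ≤ x) (hc : 1 ≤ c) (hM : 1 ≤ M) (h : x ^ (1 + a) ≤ c * M) :
    x ^ (1 - a) ≤ c * M ^ β := by
  have hMβ : 1 ≤ M ^ β := Real.one_le_rpow hM hβ0.le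
  rcases le_total x 1 with hx1 | hx1
  · have := Real.rpow_le_one hx hx1 (by linarith : 0 ≤ 1 - a)
    nlinarith
  · calc x ^ (1 - a) ≤ x ^ ((1 + a) * β) :=
          Real.rpow_le_rpow_of_exponent_le hx1 (by linarith)
      _ = (x ^ (1 + a)) ^ β := Real.rpow_mul hx _ _
      _ ≤ (c * M) ^ β := Real.rpow_le_rpow (by positivity) h hβ0.le
      _ = c ^ β * M ^ β := Real.mul_rpow (by linarith) (by linarith)
      _ ≤ c ^ (1 : ℝ) * M ^ β := by gcongr
      _ = _ := by rw [Real.rpow_one]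

theorem rpow_div_aux {x : ℝ} (hx : 0 < x) : x ^ 2 / x ^ (1 + a) = x ^ (1 - a) := by
  rw [← Real.rpow_natCast, ← Real.rpow_sub hx]; congr 1; push_cast; ring

theorem neg_rpow_le_one (ha : 0 < a) {x : ℝ} (hx : 1 ≤ x) : x ^ (-(1 + a)) ≤ 1 :=
  Real.rpow_le_one_of_one_le_of_nonpos hx (by linarith)

/-- High-low interaction, output modulation dominant. -/
def P1 (a L L₁ L₂ : ℝ) (p q : ℝ × ℝ) : Prop :=
  7 * |q.1| ≤ |p.1| ∧ 1 ≤ |q.1| ∧ |p.1| ^ (1 + a) ≤ 16 * L ∧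
    |q.2 - disp a q.1| ≤ 2 * L₁ ∧ |(p - q).2 - disp a (p - q).1| ≤ 2 * L₂

/-- High-low interaction, modulation of the high-frequency factor dominant. -/
def P2 (a L L₁ L₂ : ℝ) (p q : ℝ × ℝ) : Prop :=
  7 * |q.1| ≤ |(p - q).1| ∧ 1 ≤ |q.1| ∧ |(p - q).1| ^ (1 + a) ≤ 16 * L₂ ∧ L ≤ L₂ ∧
    |q.2 - disp a q.1| ≤ 2 * L₁ ∧ |p.2 - disp a p.1| ≤ 2 * L

/-- Comparable frequencies, output modulation dominant. -/
def P3 (a L L₁ : ℝ) (p q : ℝ × ℝ) : Prop :=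
  1 ≤ |q.1| ∧ |p.1| ≤ 16 * |q.1| ∧ |p.1| * |q.1| ^ (1 + a) ≤ 48 * L ∧
    |q.2 - disp a q.1| ≤ 2 * L₁

/-- Comparable frequencies, modulation of the second factor dominant. -/
def P4 (a L₁ L₂ : ℝ) (p q : ℝ × ℝ) : Prop :=
  1 ≤ |q.1| ∧ |q.1| ≤ |(p - q).1| ∧ |(p - q).1| ≤ 8 * |q.1| ∧
    |p.1| * |(p - q).1| ^ (1 + a) ≤ 48 * L₂ ∧ |q.2 - disp a q.1| ≤ 2 * L₁

/-- Comparable frequencies, modulation of the first factor dominant. -/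
def P5 (a L₁ L₂ : ℝ) (p q : ℝ × ℝ) : Prop :=
  1 ≤ |q.1| ∧ |q.1| ≤ |(p - q).1| ∧ |(p - q).1| ≤ 8 * |q.1| ∧
    |p.1| * |(p - q).1| ^ (1 + a) ≤ 48 * L₁ ∧ |(p - q).2 - disp a (p - q).1| ≤ 2 * L₂

/-- The non-resonant set where the dyadic bilinear estimate is proved. -/
def P0 (a L L₁ L₂ : ℝ) (p q : ℝ × ℝ) : Prop :=
  1 ≤ |q.1| ∧ |q.1| ≤ |(p - q).1| ∧ |q.2 - disp a q.1| ≤ 3 * |q.1| ^ (2 + a) ∧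
    |p.2 - disp a p.1| ≤ 2 * L ∧ |q.2 - disp a q.1| ≤ 2 * L₁ ∧
    |(p - q).2 - disp a (p - q).1| ≤ 2 * L₂

/-- The resonance bound forces one of the three modulations to be large. -/
theorem P0_cover (ha : 0 < a) (ha1 : a < 1) {L L₁ L₂ : ℝ} {p q : ℝ × ℝ} (h : P0 a L L₁ L₂ p q) :
    P1 a L L₁ L₂ p q ∨ P2 a L L₁ L₂ p q ∨ P3 a L L₁ p q ∨ P4 a L₁ L₂ p q ∨ P5 a L₁ L₂ p q := by
  obtain ⟨h1, h2, h3, h4, h5, h6⟩ := h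
  have hres := resonance ha h2
  have e1 : q.1 + (p - q).1 = p.1 := by simp
  have e2 : (p - q).2 = p.2 - q.2 := rfl
  rw [e1] at hres
  set x := q.1
  set y := (p - q).1 with hy
  set ξ := p.1
  have hmod : |disp a x + disp a y - disp a ξ| ≤
      |p.2 - disp a ξ| + |q.2 - disp a x| + |(p - q).2 - disp a y| := by
    have e : disp a x + disp a y - disp a ξ =
      (p.2 - disp a ξ) - (q.2 - disp a x) - ((p - q).2 - disp a y) := by rw [e2]; ring
    rw [e]
    exact (abs_sub _ _).trans (by gcongr; exact abs_sub _ _)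
  have hx0 : 0 < |x| := by linarith
  have hy0 : 0 < |y| := by linarith
  have hyr : |y| ^ (1 + a) = |y| * |y| ^ a := rpow_one_add' ha hy0.le
  have hxr : |x| ^ (1 + a) = |x| * |x| ^ a := rpow_one_add' ha hx0.le
  have hξle : |ξ| ≤ |x| + |y| := by rw [← e1]; exact abs_add_le _ _
  have hξge : |y| ≤ |ξ| + |x| := by
    have : y = ξ - x := by rw [← e1]; ring
    rw [this]; exact abs_sub _ _
  have hya : 0 < |y| ^ a := by positivity
  rcases le_total (8 * |x|) |y| with h8 | h8
  -- High-low interaction: `|x|^{2+a}` is a small part of the resonance, so the modulation of `q`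
  -- (at most `3|x|^{2+a}`) cannot be dominant.
  · have hx2 : |x| ^ (2 + a) ≤ |x| * (|y| ^ (1 + a) / 8) := by
      rw [rpow_two_add ha hx0.le, hyr]
      have : |x| ^ a ≤ |y| ^ a := Real.rpow_le_rpow hx0.le h2 ha.le
      have : |x| * |x| ^ a ≤ |y| / 8 * |y| ^ a := by gcongr; linarith
      nlinarith
    have hbig : |y| ^ (1 + a) / 2 ≤ 2 * L + 2 * L₂ := by
      have k1 : |x| * (7 / 8 * |y|) * |y| ^ a ≤ |x| * |ξ| * |y| ^ a := by
        gcongr; linarith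
      have k2 : |y| ^ (1 + a) / 2 ≤ |x| * (|y| ^ (1 + a) / 2) := by
        have : 0 ≤ |y| ^ (1 + a) := by positivity
        nlinarith
      rw [hyr] at *
      nlinarith
    rcases le_total L L₂ with hL | hL
    · refine Or.inr (Or.inl ⟨by change _ ≤ |y|; linarith, h1, ?_, hL, h5, h4⟩)
      change |y| ^ (1 + a) ≤ _
      have : 0 ≤ |y| ^ (1 + a) := by positivity
      linarith
    · refine Or.inl ⟨by linarith, h1, ?_, h5, h6⟩
      have k : |ξ| ≤ 9 / 8 * |y| := by linarith
      have : |ξ| ^ (1 + a) ≤ (9 / 8 : ℝ) ^ (1 + a) * |y| ^ (1 + a) := by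
        rw [← Real.mul_rpow (by norm_num) hy0.le]
        exact Real.rpow_le_rpow (abs_nonneg _) k (by linarith)
      have k3 : (9 / 8 : ℝ) ^ (1 + a) ≤ (9 / 8 : ℝ) ^ (2 : ℝ) :=
        Real.rpow_le_rpow_of_exponent_le (by norm_num) (by linarith)
      norm_num at k3
      have : (9 / 8 : ℝ) ^ (1 + a) * |y| ^ (1 + a) ≤ 2 * |y| ^ (1 + a) := by
        gcongr; linarith
      linarith
  -- Comparable frequencies: any of the three modulations may be dominant.
  · have hbig : |ξ| * |y| ^ (1 + a) ≤ 16 * (L + L₁ + L₂) := by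
      have k1 : |y| / 8 * |ξ| * |y| ^ a ≤ |x| * |ξ| * |y| ^ a := by gcongr; linarith
      rw [hyr]
      nlinarith
    have hxy : |x| ^ (1 + a) ≤ |y| ^ (1 + a) := Real.rpow_le_rpow hx0.le h2 (by linarith)
    have hξxy : |ξ| * |x| ^ (1 + a) ≤ |ξ| * |y| ^ (1 + a) := by gcongr
    by_cases hc1 : L + L₁ + L₂ ≤ 3 * L
    · exact Or.inr (Or.inr (Or.inl ⟨h1, by linarith, by linarith, h5⟩))
    by_cases hc2 : L + L₁ + L₂ ≤ 3 * L₂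
    · exact Or.inr (Or.inr (Or.inr (Or.inl ⟨h1, h2, h8, by linarith, h5⟩)))
    · exact Or.inr (Or.inr (Or.inr (Or.inr ⟨h1, h2, h8, by linarith, h6⟩)))


/-- The slopes of the two strips differ by about `|ξ|^{1+a}`, and `|ξ|^{1-a} ≲ L^β`. -/
theorem P1_bound (ha : 0 < a) (ha1 : a < 1) (hβ0 : 0 < β) (hβ1 : β ≤ 1)
    (hβ2 : 1 - a ≤ β * (1 + a)) {L L₁ L₂ : ℝ} (hL : 1 ≤ L) (hL₁ : 1 ≤ L₁) (hL₂ : 1 ≤ L₂)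
    (p : ℝ × ℝ) :
    ∫⁻ q, ker a (P1 a L L₁ L₂) p q ^ 2 ≤ ENNReal.ofReal (14336 * (L ^ β * L₁ * L₂)) := by
  by_cases hp : 0 < |p.1| ∧ |p.1| ^ (1 + a) ≤ 16 * L
  swap
  · have : ∀ q, ker a (P1 a L L₁ L₂) p q = 0 := fun q => by
      rw [ker, ind_false, mul_zero]
      rintro ⟨h1, h2, h3, -⟩
      exact hp ⟨by linarith, h3⟩
    simp [this]
  have hd := (continuous_disp ha).measurable
  have key := two_strip (α := disp a) (β := fun x => p.2 - disp a (p.1 - x)) hd (by fun_prop)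
    (E := {x | 7 * |x| ≤ |p.1|}) (measurableSet_le (by fun_prop) (by fun_prop))
    (D := |p.1| ^ (1 + a)) (L₁ := 2 * L₁) (L₂ := 2 * L₂) (Real.rpow_pos_of_pos hp.1 _)
    (by linarith) (by linarith) (fun x hx y hy => by
      have := phase_lower ha ha1 (x := x) (y := y) (η := -p.1) (by simpa using hx) (by simpa using hy)
      rw [abs_neg] at this
      refine this.trans (le_of_eq ?_)
      have e : ∀ z, disp a (z + -p.1) = - disp a (p.1 - z) := fun z => by
        rw [← disp_neg]; congr 1; ring
      rw [e, e, abs_sub_comm]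
      congr 2; ring)
  calc ∫⁻ q, ker a (P1 a L L₁ L₂) p q ^ 2 ≤ ∫⁻ q : ℝ × ℝ, ENNReal.ofReal (4 * |p.1| ^ 2) *
        ind (q.1 ∈ {x | 7 * |x| ≤ |p.1|} ∧ |q.2 - disp a q.1| ≤ 2 * L₁ ∧
          |q.2 - (p.2 - disp a (p.1 - q.1))| ≤ 2 * L₂) := by
        refine lintegral_mono fun q => ker_sq_le ?_
        rintro ⟨h1, h2, h3, h4, h5⟩
        refine ⟨?_, h1, h4, ?_⟩
        · have := neg_rpow_le_one ha h2
          have h0 : 0 ≤ 4 * |p.1| ^ 2 := by positivity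
          nlinarith
        · rw [abs_sub_comm]
          refine le_trans (le_of_eq ?_) h5
          congr 1
          simp only [Prod.fst_sub, Prod.snd_sub]; ring
    _ ≤ ENNReal.ofReal (4 * |p.1| ^ 2) * ENNReal.ofReal (56 * (2 * L₁) * (2 * L₂) / |p.1| ^ (1 + a)) := by
        rw [lintegral_const_mul' _ _ ENNReal.ofReal_ne_top]
        gcongr
    _ = ENNReal.ofReal (896 * (|p.1| ^ (1 - a) * L₁ * L₂)) := by
        rw [← ENNReal.ofReal_mul (by positivity), ← rpow_div_aux hp.1]
        congr 1; ring
    _ ≤ _ := by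
        refine ENNReal.ofReal_le_ofReal ?_
        have := expo_le hβ0 hβ1 ha1 hβ2 hp.1.le (by norm_num) hL hp.2
        have h2 : |p.1| ^ (1 - a) * L₁ * L₂ ≤ 16 * L ^ β * L₁ * L₂ := by gcongr
        linarith

theorem P2_bound (ha : 0 < a) (ha1 : a < 1) (hβ0 : 0 < β) (hβ1 : β ≤ 1)
    (hβ2 : 1 - a ≤ β * (1 + a)) {L L₁ L₂ : ℝ} (hL : 1 ≤ L) (hL₁ : 1 ≤ L₁) (hL₂ : 1 ≤ L₂)
    (r : ℝ × ℝ) :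
    ∫⁻ q, ker a (P2 a L L₁ L₂) (r + q) q ^ 2 ≤ ENNReal.ofReal (57344 * (L ^ β * L₁ * L₂)) := by
  by_cases hp : (0 < |r.1| ∧ |r.1| ^ (1 + a) ≤ 16 * L₂) ∧ L ≤ L₂
  swap
  · have : ∀ q, ker a (P2 a L L₁ L₂) (r + q) q = 0 := fun q => by
      rw [ker, ind_false, mul_zero]
      rintro ⟨h1, h2, h3, h4, -⟩
      rw [add_sub_cancel_right] at h1 h3
      exact hp ⟨⟨by linarith, h3⟩, h4⟩
    simp [this]
  obtain ⟨hp, hLL⟩ := hp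
  have hd := (continuous_disp ha).measurable
  have key := two_strip (α := disp a) (β := fun x => disp a (x + r.1) - r.2) hd (by fun_prop)
    (E := {x | 7 * |x| ≤ |r.1|}) (measurableSet_le (by fun_prop) (by fun_prop))
    (D := |r.1| ^ (1 + a)) (L₁ := 2 * L₁) (L₂ := 2 * L) (Real.rpow_pos_of_pos hp.1 _)
    (by linarith) (by linarith) (fun x hx y hy => by
      refine (phase_lower ha ha1 (x := x) (y := y) (η := r.1) hx hy).trans (le_of_eq ?_)
      rw [abs_sub_comm]
      congr 2; ring)
  calc ∫⁻ q, ker a (P2 a L L₁ L₂) (r + q) q ^ 2 ≤ ∫⁻ q : ℝ × ℝ, ENNReal.ofReal (16 * |r.1| ^ 2) *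
        ind (q.1 ∈ {x | 7 * |x| ≤ |r.1|} ∧ |q.2 - disp a q.1| ≤ 2 * L₁ ∧
          |q.2 - (disp a (q.1 + r.1) - r.2)| ≤ 2 * L) := by
        refine lintegral_mono fun q => ker_sq_le ?_
        rintro ⟨h1, h2, h3, -, h4, h5⟩
        rw [add_sub_cancel_right] at h1 h3
        refine ⟨?_, h1, h4, ?_⟩
        · have := neg_rpow_le_one ha h2
          have h7 : |(r + q).1| ≤ 2 * |r.1| := by
            rw [Prod.fst_add]
            linarith [abs_add_le r.1 q.1]
          have h0 : 0 ≤ 4 * |(r + q).1| ^ 2 := by positivity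
          have h8 : |(r + q).1| ^ 2 ≤ (2 * |r.1|) ^ 2 := by gcongr
          nlinarith
        · refine le_trans (le_of_eq ?_) h5
          congr 1
          simp only [Prod.fst_add, Prod.snd_add]
          rw [add_comm q.1]; ring
    _ ≤ ENNReal.ofReal (16 * |r.1| ^ 2) * ENNReal.ofReal (56 * (2 * L₁) * (2 * L) / |r.1| ^ (1 + a)) := by
        rw [lintegral_const_mul' _ _ ENNReal.ofReal_ne_top]
        gcongr
    _ = ENNReal.ofReal (3584 * (|r.1| ^ (1 - a) * L₁ * L)) := by
        rw [← ENNReal.ofReal_mul (by positivity), ← rpow_div_aux hp.1]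
        congr 1; ring
    _ ≤ _ := by
        refine ENNReal.ofReal_le_ofReal ?_
        have := expo_le hβ0 hβ1 ha1 hβ2 hp.1.le (by norm_num) hL₂ hp.2
        have h2 : |r.1| ^ (1 - a) * L₁ * L ≤ 16 * L₂ ^ β * L₁ * L := by gcongr
        have h3 : L₂ ^ β * L ≤ L ^ β * L₂ := by
          have e : ∀ M : ℝ, 1 ≤ M → M = M ^ β * M ^ (1 - β) := fun M hM => by
            rw [← Real.rpow_add (by linarith)]; simp
          calc L₂ ^ β * L = L₂ ^ β * (L ^ β * L ^ (1 - β)) := by rw [← e L hL]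
            _ ≤ L₂ ^ β * (L ^ β * L₂ ^ (1 - β)) := by gcongr
            _ = L ^ β * (L₂ ^ β * L₂ ^ (1 - β)) := by ring
            _ = _ := by rw [← e L₂ hL₂]
        have h4 : L₁ * (L₂ ^ β * L) ≤ L₁ * (L ^ β * L₂) := by gcongr
        linarith

/-- The constant `∫_{|ξ| ≥ 1} |ξ|^{-1-a/2} dξ`. -/
def cTail (a : ℝ) : ℝ≥0∞ := ∫⁻ x : ℝ, ENNReal.ofReal (|x| ^ (-(1 + a / 2))) * ind (1 ≤ |x|)

theorem cTail_lt_top (ha : 0 < a) : cTail a < ⊤ := by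
  have h := finite_integral_one_add_norm (μ := (volume : Measure ℝ)) (r := 1 + a / 2)
    (by simp; linarith)
  have h2 : cTail a ≤ ENNReal.ofReal (2 ^ (1 + a / 2)) *
      ∫⁻ x : ℝ, ENNReal.ofReal ((1 + ‖x‖) ^ (-(1 + a / 2))) := by
    rw [← lintegral_const_mul' _ _ ENNReal.ofReal_ne_top]
    refine lintegral_mono fun x => ?_
    dsimp only
    by_cases hx : 1 ≤ |x|
    · rw [ind_true hx, mul_one, ← ENNReal.ofReal_mul (by positivity), Real.norm_eq_abs]
      refine ENNReal.ofReal_le_ofReal ?_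
      have : ((1 + |x|) / 2) ≤ |x| := by linarith
      have h3 := Real.rpow_le_rpow_of_nonpos (by positivity) this (by linarith : -(1 + a / 2) ≤ 0)
      refine h3.trans (le_of_eq ?_)
      rw [Real.div_rpow (by positivity) (by norm_num), Real.rpow_neg (by norm_num : (0:ℝ) ≤ 2)]
      field_simp
    · rw [ind_false hx]; simp
  exact h2.trans_lt (ENNReal.mul_lt_top ENNReal.ofReal_lt_top h)

/-- Only the strip around the curve of `q` is used; `|ξ| |ξ₁|^{1+a} ≲ L` turns the remaining
integral in `ξ₁` into the convergent tail `cTail`. -/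
theorem P3_bound (ha : 0 < a) (ha1 : a < 1) (hβ0 : 0 < β) (hβ1 : β ≤ 1)
    (hβ3 : 1 - a - β * (2 + a) = -(1 + a / 2)) {L L₁ : ℝ} (hL : 1 ≤ L) (hL₁ : 1 ≤ L₁)
    (p : ℝ × ℝ) :
    ∫⁻ q, ker a (P3 a L L₁) p q ^ 2 ≤ cTail a * ENNReal.ofReal (196608 * (L ^ β * L₁)) := by
  have hm : Measurable fun x : ℝ => ENNReal.ofReal (|x| ^ (-(1 + a / 2))) * ind (1 ≤ |x|) :=
    Measurable.mul (by fun_prop) (measurable_ind (measurableSet_le (by fun_prop) (by fun_prop)))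
  have key := lintegral_strip_le (continuous_disp ha).measurable hm (2 * L₁)
  calc ∫⁻ q, ker a (P3 a L L₁) p q ^ 2 ≤ ∫⁻ q : ℝ × ℝ, ENNReal.ofReal (49152 * L ^ β) *
        (ENNReal.ofReal (|q.1| ^ (-(1 + a / 2))) * ind (1 ≤ |q.1|) *
          ind (|q.2 - disp a q.1| ≤ 2 * L₁)) := by
        refine lintegral_mono fun q => ?_
        rw [mul_assoc (ENNReal.ofReal (|q.1| ^ (-(1 + a / 2)))), ind_mul, ← mul_assoc,
          ← ENNReal.ofReal_mul (by positivity)]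
        refine ker_sq_le ?_
        rintro ⟨h1, h2, h3, h4⟩
        refine ⟨?_, h1, h4⟩
        have hq : 0 < |q.1| := by linarith
        rcases (abs_nonneg p.1).eq_or_lt with h0 | hpos
        · rw [← h0]; simp; positivity
        have e1 : |p.1| ^ 2 = |p.1| ^ (2 - β) * |p.1| ^ β := by
          rw [← Real.rpow_add hpos, ← Real.rpow_natCast]; congr 1; push_cast; ring
        have e2 : |p.1| ^ (2 - β) ≤ 256 * |q.1| ^ (2 - β) := by
          calc |p.1| ^ (2 - β) ≤ (16 * |q.1|) ^ (2 - β) :=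
                Real.rpow_le_rpow hpos.le h2 (by linarith)
            _ = 16 ^ (2 - β) * |q.1| ^ (2 - β) := Real.mul_rpow (by norm_num) hq.le
            _ ≤ 16 ^ (2 : ℝ) * |q.1| ^ (2 - β) := by
                gcongr
                · norm_num
                · linarith
            _ = _ := by norm_num
        have e3 : |p.1| ^ β ≤ 48 * L ^ β * |q.1| ^ (-((1 + a) * β)) := by
          have h5 : |p.1| ≤ 48 * L * |q.1| ^ (-(1 + a)) := by
            rw [Real.rpow_neg hq.le, ← div_eq_mul_inv, le_div_iff₀ (by positivity)]; exact h3
          calc |p.1| ^ β ≤ (48 * L * |q.1| ^ (-(1 + a))) ^ β :=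
                Real.rpow_le_rpow hpos.le h5 hβ0.le
            _ = 48 ^ β * L ^ β * |q.1| ^ (-((1 + a) * β)) := by
                rw [Real.mul_rpow (by positivity) (by positivity),
                  Real.mul_rpow (by norm_num) (by linarith), ← Real.rpow_mul hq.le]
                congr 2; ring
            _ ≤ 48 ^ (1 : ℝ) * L ^ β * |q.1| ^ (-((1 + a) * β)) := by
                gcongr
                norm_num
            _ = _ := by norm_num
        have e4 : |q.1| ^ (2 - β) * |q.1| ^ (-((1 + a) * β)) * |q.1| ^ (-(1 + a)) =
            |q.1| ^ (-(1 + a / 2)) := by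
          rw [← Real.rpow_add hq, ← Real.rpow_add hq]; congr 1; linarith
        calc 4 * |p.1| ^ 2 * |q.1| ^ (-(1 + a)) ≤
              4 * ((256 * |q.1| ^ (2 - β)) * (48 * L ^ β * |q.1| ^ (-((1 + a) * β)))) *
                |q.1| ^ (-(1 + a)) := by rw [e1]; gcongr
          _ = 49152 * L ^ β * (|q.1| ^ (2 - β) * |q.1| ^ (-((1 + a) * β)) * |q.1| ^ (-(1 + a))) := by
              ring
          _ = _ := by rw [e4]
    _ ≤ ENNReal.ofReal (49152 * L ^ β) * (ENNReal.ofReal (2 * (2 * L₁)) * cTail a) := by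
        rw [lintegral_const_mul' _ _ ENNReal.ofReal_ne_top]
        gcongr
        exact key
    _ = _ := by
        rw [← mul_assoc, ← ENNReal.ofReal_mul (by positivity), mul_comm]
        congr 2; ring

theorem lintegral_ind_abs_le (c N : ℝ) :
    ∫⁻ x : ℝ, ENNReal.ofReal c * ind (|x| ≤ N) = ENNReal.ofReal c * ENNReal.ofReal (2 * N) := by
  rw [lintegral_const_mul' _ _ ENNReal.ofReal_ne_top,
    lintegral_ind (measurableSet_le (by fun_prop) (by fun_prop)), ← volume_strip_le 0 N]
  simp

theorem P4_bound (ha : 0 < a) (ha1 : a < 1) {L₁ L₂ : ℝ} (hL₁ : 1 ≤ L₁) (hL₂ : 1 ≤ L₂)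
    (r : ℝ × ℝ) :
    ∫⁻ q, ker a (P4 a L₁ L₂) (r + q) q ^ 2 ≤ ENNReal.ofReal (196608 * (L₁ * L₂)) := by
  by_cases hr : 1 ≤ |r.1|
  swap
  · have : ∀ q, ker a (P4 a L₁ L₂) (r + q) q = 0 := fun q => by
      rw [ker, ind_false, mul_zero]
      rintro ⟨h1, h2, -⟩
      rw [add_sub_cancel_right] at h2
      exact hr (by linarith)
    simp [this]
  have hr0 : 0 < |r.1| := by linarith
  have hm : Measurable fun x : ℝ => ENNReal.ofReal (24576 * L₂ / |r.1|) * ind (|x| ≤ |r.1|) :=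
    Measurable.mul (by fun_prop) (measurable_ind (measurableSet_le (by fun_prop) (by fun_prop)))
  have key := lintegral_strip_le (continuous_disp ha).measurable hm (2 * L₁)
  calc ∫⁻ q, ker a (P4 a L₁ L₂) (r + q) q ^ 2 ≤ ∫⁻ q : ℝ × ℝ,
        ENNReal.ofReal (24576 * L₂ / |r.1|) * ind (|q.1| ≤ |r.1|) *
          ind (|q.2 - disp a q.1| ≤ 2 * L₁) := by
        refine lintegral_mono fun q => ?_
        rw [mul_assoc, ind_mul]
        refine ker_sq_le ?_
        rintro ⟨h1, h2, h3, h4, h5⟩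
        rw [add_sub_cancel_right] at h2 h3 h4
        refine ⟨?_, h2, h5⟩
        have hq : 0 < |q.1| := by linarith
        have h7 : |(r + q).1| ≤ 2 * |r.1| := by
          rw [Prod.fst_add]
          linarith [abs_add_le r.1 q.1]
        have e0 : 0 < |r.1| ^ (1 + a) := by positivity
        have e1 : |q.1| ^ (-(1 + a)) ≤ 64 / |r.1| ^ (1 + a) := by
          have k1 : |r.1| / 8 ≤ |q.1| := by linarith
          have k2 := Real.rpow_le_rpow_of_nonpos (by positivity) k1 (by linarith : -(1 + a) ≤ 0)
          refine k2.trans ?_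
          rw [Real.rpow_neg (by positivity), Real.div_rpow hr0.le (by norm_num), inv_div]
          gcongr
          calc (8 : ℝ) ^ (1 + a) ≤ 8 ^ (2 : ℝ) :=
                Real.rpow_le_rpow_of_exponent_le (by norm_num) (by linarith)
            _ = 64 := by norm_num
        have e2 : |r.1| ≤ |r.1| ^ (1 + a) := by
          calc |r.1| = |r.1| ^ (1 : ℝ) := by simp
            _ ≤ _ := Real.rpow_le_rpow_of_exponent_le hr (by linarith)
        have e3 : |(r + q).1| ≤ 48 * L₂ / |r.1| ^ (1 + a) := by
          rw [le_div_iff₀ e0]; exact h4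
        calc 4 * |(r + q).1| ^ 2 * |q.1| ^ (-(1 + a)) =
              4 * (|(r + q).1| * |(r + q).1|) * |q.1| ^ (-(1 + a)) := by ring
          _ ≤ 4 * ((2 * |r.1|) * (48 * L₂ / |r.1| ^ (1 + a))) * (64 / |r.1| ^ (1 + a)) := by gcongr
          _ ≤ 4 * ((2 * |r.1|) * (48 * L₂ / |r.1|)) * (64 / |r.1|) := by gcongr
          _ = _ := by field_simp; norm_num
    _ ≤ ENNReal.ofReal (2 * (2 * L₁)) *
          (ENNReal.ofReal (24576 * L₂ / |r.1|) * ENNReal.ofReal (2 * |r.1|)) := by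
        rw [← lintegral_ind_abs_le]; exact key
    _ = _ := by
        rw [← ENNReal.ofReal_mul (by positivity), ← ENNReal.ofReal_mul (by positivity)]
        congr 1; field_simp; norm_num

theorem P5_bound (ha : 0 < a) (ha1 : a < 1) {L₁ L₂ : ℝ} (hL₁ : 1 ≤ L₁) (hL₂ : 1 ≤ L₂)
    (q : ℝ × ℝ) :
    ∫⁻ r, ker a (P5 a L₁ L₂) (q + r) q ^ 2 ≤ ENNReal.ofReal (196608 * (L₁ * L₂)) := by
  by_cases hr : 1 ≤ |q.1|
  swap
  · have : ∀ r, ker a (P5 a L₁ L₂) (q + r) q = 0 := fun r => by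
      rw [ker, ind_false, mul_zero]
      rintro ⟨h1, -⟩
      exact hr (by linarith)
    simp [this]
  have hr0 : 0 < |q.1| := by linarith
  have hm : Measurable fun x : ℝ => ENNReal.ofReal (3072 * L₁ / |q.1|) * ind (|x| ≤ 8 * |q.1|) :=
    Measurable.mul (by fun_prop) (measurable_ind (measurableSet_le (by fun_prop) (by fun_prop)))
  have key := lintegral_strip_le (continuous_disp ha).measurable hm (2 * L₂)
  calc ∫⁻ r, ker a (P5 a L₁ L₂) (q + r) q ^ 2 ≤ ∫⁻ r : ℝ × ℝ,
        ENNReal.ofReal (3072 * L₁ / |q.1|) * ind (|r.1| ≤ 8 * |q.1|) *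
          ind (|r.2 - disp a r.1| ≤ 2 * L₂) := by
        refine lintegral_mono fun r => ?_
        rw [mul_assoc, ind_mul]
        refine ker_sq_le ?_
        rintro ⟨h1, h2, h3, h4, h5⟩
        rw [add_sub_cancel_left] at h2 h3 h4 h5
        refine ⟨?_, h3, h5⟩
        have h7 : |(q + r).1| ≤ 16 * |q.1| := by
          rw [Prod.fst_add]
          linarith [abs_add_le q.1 r.1]
        have e0 : 0 < |q.1| ^ (1 + a) := by positivity
        have e2 : |q.1| ≤ |q.1| ^ (1 + a) := by
          calc |q.1| = |q.1| ^ (1 : ℝ) := by simp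
            _ ≤ _ := Real.rpow_le_rpow_of_exponent_le hr (by linarith)
        have e4 : |q.1| ^ (1 + a) ≤ |r.1| ^ (1 + a) :=
          Real.rpow_le_rpow hr0.le h2 (by linarith)
        have e3 : |(q + r).1| ≤ 48 * L₁ / |q.1| ^ (1 + a) := by
          rw [le_div_iff₀ e0]
          exact le_trans (by gcongr) h4
        rw [Real.rpow_neg hr0.le]
        calc 4 * |(q + r).1| ^ 2 * (|q.1| ^ (1 + a))⁻¹ =
              4 * (|(q + r).1| * |(q + r).1|) * (|q.1| ^ (1 + a))⁻¹ := by ring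
          _ ≤ 4 * ((16 * |q.1|) * (48 * L₁ / |q.1| ^ (1 + a))) * (|q.1| ^ (1 + a))⁻¹ := by gcongr
          _ ≤ 4 * ((16 * |q.1|) * (48 * L₁ / |q.1|)) * (|q.1|)⁻¹ := by gcongr
          _ = _ := by field_simp; norm_num
    _ ≤ ENNReal.ofReal (2 * (2 * L₂)) *
          (ENNReal.ofReal (3072 * L₁ / |q.1|) * ENNReal.ofReal (2 * (8 * |q.1|))) := by
        rw [← lintegral_ind_abs_le]; exact key
    _ = _ := by
        rw [← ENNReal.ofReal_mul (by positivity), ← ENNReal.ofReal_mul (by positivity)]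
        congr 1; field_simp; norm_num

end Dyadic

/-! ### The dyadic bilinear estimate and the norms on the Fourier side -/

section Dyadic
variable {a β : ℝ}

theorem measurableSet_P (ha : 0 < a) (L L₁ L₂ : ℝ) :
    MeasurableSet {z : (ℝ × ℝ) × (ℝ × ℝ) | P1 a L L₁ L₂ z.1 z.2} ∧
    MeasurableSet {z : (ℝ × ℝ) × (ℝ × ℝ) | P2 a L L₁ L₂ z.1 z.2} ∧
    MeasurableSet {z : (ℝ × ℝ) × (ℝ × ℝ) | P3 a L L₁ z.1 z.2} ∧
    MeasurableSet {z : (ℝ × ℝ) × (ℝ × ℝ) | P4 a L₁ L₂ z.1 z.2} ∧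
    MeasurableSet {z : (ℝ × ℝ) × (ℝ × ℝ) | P5 a L₁ L₂ z.1 z.2} := by
  have hd := (continuous_disp ha).measurable
  have hle : ∀ {f g : (ℝ × ℝ) × (ℝ × ℝ) → ℝ}, Measurable f → Measurable g →
      MeasurableSet {z | f z ≤ g z} := fun hf hg => measurableSet_le hf hg
  refine ⟨?_, ?_, ?_, ?_, ?_⟩
  · exact (hle (by fun_prop) (by fun_prop)).inter ((hle (by fun_prop) (by fun_prop)).inter
      ((hle (by fun_prop) (by fun_prop)).inter ((hle (by fun_prop) (by fun_prop)).inter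
        (hle (by fun_prop) (by fun_prop)))))
  · exact (hle (by fun_prop) (by fun_prop)).inter ((hle (by fun_prop) (by fun_prop)).inter
      ((hle (by fun_prop) (by fun_prop)).inter ((hle (by fun_prop) (by fun_prop)).inter
        ((hle (by fun_prop) (by fun_prop)).inter (hle (by fun_prop) (by fun_prop))))))
  · exact (hle (by fun_prop) (by fun_prop)).inter ((hle (by fun_prop) (by fun_prop)).inter
      ((hle (by fun_prop) (by fun_prop)).inter (hle (by fun_prop) (by fun_prop))))
  · exact (hle (by fun_prop) (by fun_prop)).inter ((hle (by fun_prop) (by fun_prop)).inter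
      ((hle (by fun_prop) (by fun_prop)).inter ((hle (by fun_prop) (by fun_prop)).inter
        (hle (by fun_prop) (by fun_prop)))))
  · exact (hle (by fun_prop) (by fun_prop)).inter ((hle (by fun_prop) (by fun_prop)).inter
      ((hle (by fun_prop) (by fun_prop)).inter ((hle (by fun_prop) (by fun_prop)).inter
        (hle (by fun_prop) (by fun_prop)))))

theorem ind_or_le (P Q : Prop) : ind (P ∨ Q) ≤ ind P + ind Q := by
  unfold ind; split_ifs <;> simp_all

/-- The square of the constant in the dyadic bilinear estimate, up to the factor `25`. -/
def cDy (a : ℝ) : ℝ≥0∞ := ENNReal.ofReal 196608 * (1 + cTail a)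

theorem cDy_ne_top (ha : 0 < a) : cDy a ≠ ⊤ := by
  have := (cTail_lt_top ha).ne
  unfold cDy
  finiteness

set_option maxHeartbeats 1000000 in
/-- The dyadic bilinear estimate for inputs of modulation `L₁`, `L₂` and output of
modulation `L`. -/
theorem dyadic_bilin (ha : 0 < a) (ha1 : a < 1) (hβ0 : 0 < β) (hβ1 : β ≤ 1)
    (hβ2 : 1 - a ≤ β * (1 + a)) (hβ3 : 1 - a - β * (2 + a) = -(1 + a / 2))
    {L L₁ L₂ : ℝ} (hL : 1 ≤ L) (hL₁ : 1 ≤ L₁) (hL₂ : 1 ≤ L₂) {f g : ℝ × ℝ → ℝ≥0∞}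
    (hf : Measurable f) (hg : Measurable g) :
    N2 volume (fun p => ∫⁻ q, ker a (P0 a L L₁ L₂) p q * (f q * g (p - q))) ≤
      5 * (cDy a * ENNReal.ofReal (L ^ β * L₁ * L₂)) ^ ((1 : ℝ) / 2) *
        (N2 volume f * N2 volume g) := by
  set S : ℝ≥0∞ := (cDy a * ENNReal.ofReal (L ^ β * L₁ * L₂)) ^ ((1 : ℝ) / 2) with hS
  have hS2 : S ^ 2 = cDy a * ENNReal.ofReal (L ^ β * L₁ * L₂) := half_sq _
  have hLβ : 1 ≤ L ^ β := Real.one_le_rpow hL hβ0.le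
  have hc1 : ∀ x : ℝ, x ≤ 196608 * (L ^ β * L₁ * L₂) → ENNReal.ofReal x ≤ S ^ 2 := by
    intro x hx
    rw [hS2, cDy]
    calc ENNReal.ofReal x ≤ ENNReal.ofReal (196608 * (L ^ β * L₁ * L₂)) :=
          ENNReal.ofReal_le_ofReal hx
      _ = ENNReal.ofReal 196608 * 1 * ENNReal.ofReal (L ^ β * L₁ * L₂) := by
          rw [ENNReal.ofReal_mul (by norm_num), mul_one]
      _ ≤ _ := by gcongr; exact le_self_add
  have hc2 : cTail a * ENNReal.ofReal (196608 * (L ^ β * L₁)) ≤ S ^ 2 := by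
    rw [hS2, cDy, ENNReal.ofReal_mul (by norm_num)]
    calc cTail a * (ENNReal.ofReal 196608 * ENNReal.ofReal (L ^ β * L₁))
        = ENNReal.ofReal 196608 * cTail a * ENNReal.ofReal (L ^ β * L₁) := by ring
      _ ≤ _ := by
          refine mul_le_mul' (mul_le_mul' le_rfl le_add_self) (ENNReal.ofReal_le_ofReal ?_)
          exact le_mul_of_one_le_right (by positivity) hL₂
  have hLL : 1 ≤ L₁ * L₂ := by nlinarith
  have hLLL : L₁ * L₂ ≤ L ^ β * L₁ * L₂ := by nlinarith
  obtain ⟨m1, m2, m3, m4, m5⟩ := measurableSet_P ha L L₁ L₂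
  have b1 := bilin0 (μ := volume) (measurable_ker (a := a) m1) hf hg (S := S) fun p =>
    (P1_bound ha ha1 hβ0 hβ1 hβ2 hL hL₁ hL₂ p).trans (hc1 _ (by nlinarith))
  have b2 := bilin1 (μ := volume) (measurable_ker (a := a) m2) hf hg (S := S) fun p =>
    (P2_bound ha ha1 hβ0 hβ1 hβ2 hL hL₁ hL₂ p).trans (hc1 _ (by nlinarith))
  have b3 := bilin0 (μ := volume) (measurable_ker (a := a) m3) hf hg (S := S) fun p =>
    (P3_bound ha ha1 hβ0 hβ1 hβ3 hL hL₁ p).trans hc2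
  have b4 := bilin1 (μ := volume) (measurable_ker (a := a) m4) hf hg (S := S) fun p =>
    (P4_bound ha ha1 hL₁ hL₂ p).trans (hc1 _ (by nlinarith))
  have b5 := bilin2 (μ := volume) (measurable_ker (a := a) m5) hf hg (S := S) fun p =>
    (P5_bound ha ha1 hL₁ hL₂ p).trans (hc1 _ (by nlinarith))
  have hmq : ∀ {P : ℝ × ℝ → ℝ × ℝ → Prop},
      MeasurableSet {z : (ℝ × ℝ) × (ℝ × ℝ) | P z.1 z.2} →
      Measurable fun z : (ℝ × ℝ) × (ℝ × ℝ) => ker a P z.1 z.2 * (f z.2 * g (z.1 - z.2)) :=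
    fun hP => (measurable_ker (a := a) hP).mul (by fun_prop)
  have hmp : ∀ {P : ℝ × ℝ → ℝ × ℝ → Prop},
      MeasurableSet {z : (ℝ × ℝ) × (ℝ × ℝ) | P z.1 z.2} →
      Measurable fun p : ℝ × ℝ => ∫⁻ q, ker a P p q * (f q * g (p - q)) :=
    fun hP => Measurable.lintegral_prod_right' (hmq hP)
  have hmq' : ∀ {P : ℝ × ℝ → ℝ × ℝ → Prop},
      MeasurableSet {z : (ℝ × ℝ) × (ℝ × ℝ) | P z.1 z.2} → ∀ p,
      Measurable fun q : ℝ × ℝ => ker a P p q * (f q * g (p - q)) :=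
    fun hP p => (hmq hP).comp (measurable_const.prodMk measurable_id)
  set I : (ℝ × ℝ → ℝ × ℝ → Prop) → ℝ × ℝ → ℝ≥0∞ :=
    fun P p => ∫⁻ q, ker a P p q * (f q * g (p - q)) with hI
  have hsplit : ∀ p, I (P0 a L L₁ L₂) p ≤ I (P1 a L L₁ L₂) p + (I (P2 a L L₁ L₂) p +
      (I (P3 a L L₁) p + (I (P4 a L₁ L₂) p + I (P5 a L₁ L₂) p))) := by
    intro p
    simp only [hI]
    rw [← lintegral_add_left (hmq' m4 p), ← lintegral_add_left (hmq' m3 p),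
      ← lintegral_add_left (hmq' m2 p), ← lintegral_add_left (hmq' m1 p)]
    refine lintegral_mono fun q => ?_
    dsimp only
    rw [← add_mul, ← add_mul, ← add_mul, ← add_mul]
    gcongr ?_ * _
    unfold ker
    rw [← mul_add, ← mul_add, ← mul_add, ← mul_add]
    gcongr
    refine (ind_mono (P0_cover ha ha1)).trans ?_
    refine (ind_or_le _ _).trans ?_
    gcongr
    refine (ind_or_le _ _).trans ?_
    gcongr
    refine (ind_or_le _ _).trans ?_
    gcongr
    exact ind_or_le _ _
  calc N2 volume (I (P0 a L L₁ L₂)) ≤ N2 volume (I (P1 a L L₁ L₂)) + (N2 volume (I (P2 a L L₁ L₂)) +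
      (N2 volume (I (P3 a L L₁)) + (N2 volume (I (P4 a L₁ L₂)) + N2 volume (I (P5 a L₁ L₂))))) := by
        refine (N2_mono hsplit).trans ?_
        refine (N2_add_le (hmp m1) ((hmp m2).add ((hmp m3).add ((hmp m4).add (hmp m5))))).trans ?_
        gcongr
        refine (N2_add_le (hmp m2) ((hmp m3).add ((hmp m4).add (hmp m5)))).trans ?_
        gcongr
        refine (N2_add_le (hmp m3) ((hmp m4).add (hmp m5))).trans ?_
        gcongr
        exact N2_add_le (hmp m4) (hmp m5)
    _ ≤ S * (N2 volume f * N2 volume g) + (S * (N2 volume f * N2 volume g) +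
      (S * (N2 volume f * N2 volume g) + (S * (N2 volume f * N2 volume g) +
        S * (N2 volume f * N2 volume g)))) := by gcongr
    _ = _ := by ring

end Dyadic

section Weights

/-- `(1+|ξ|)^s` as an extended nonnegative real. -/
def br (s ξ : ℝ) : ℝ≥0∞ := ENNReal.ofReal ((1 + |ξ|) ^ s)

/-- The dyadic weight `2^{jc}`. -/
def dy (c : ℝ) (j : ℕ) : ℝ≥0∞ := ENNReal.ofReal ((2 : ℝ) ^ ((j : ℝ) * c))

theorem br_mul (s t ξ : ℝ) : br s ξ * br t ξ = br (s + t) ξ := by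
  unfold br
  rw [← ENNReal.ofReal_mul (by positivity), ← Real.rpow_add (by positivity)]

theorem br_zero (ξ : ℝ) : br 0 ξ = 1 := by simp [br]

theorem measurable_br (s : ℝ) : Measurable (br s) := by unfold br; fun_prop

theorem dy_mul (c d : ℝ) (j : ℕ) : dy c j * dy d j = dy (c + d) j := by
  unfold dy
  rw [← ENNReal.ofReal_mul (by positivity), ← Real.rpow_add (by positivity), mul_add]

theorem dy_half (c : ℝ) (j : ℕ) : dy c j ^ ((1 : ℝ) / 2) = dy (c / 2) j := by
  unfold dy
  rw [ENNReal.ofReal_rpow_of_nonneg (by positivity) (by norm_num), ← Real.rpow_mul (by norm_num)]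
  congr 2; ring

theorem dy_ne_zero (c : ℝ) (j : ℕ) : dy c j ≠ 0 := by
  unfold dy; simp; positivity

theorem dy_ne_top (c : ℝ) (j : ℕ) : dy c j ≠ ⊤ := ENNReal.ofReal_ne_top

/-- The geometric series `∑ 2^{-jε}`. -/
def geo (ε : ℝ) : ℝ≥0∞ := ∑' j : ℕ, dy (-ε) j

theorem geo_ne_top {ε : ℝ} (hε : 0 < ε) : geo ε ≠ ⊤ := by
  have h : ∀ j : ℕ, dy (-ε) j = (ENNReal.ofReal (2 ^ (-ε))) ^ j := by
    intro j
    unfold dy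
    rw [← ENNReal.ofReal_pow (by positivity), ← Real.rpow_natCast, ← Real.rpow_mul (by norm_num)]
    congr 2; ring
  unfold geo
  simp_rw [h]
  rw [ENNReal.tsum_geometric]
  have : ENNReal.ofReal (2 ^ (-ε)) < 1 := by
    rw [ENNReal.ofReal_lt_one]
    exact Real.rpow_lt_one_of_one_lt_of_neg (by norm_num) (by linarith)
  exact ENNReal.inv_ne_top.2 (tsub_pos_of_lt this).ne'

/-- Square roots of a dyadic partition of unity in the modulation `λ - ω(ξ)`. -/
structure IsWt (a : ℝ) (w : ℕ → ℝ × ℝ → ℝ≥0∞) : Prop where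
  meas : ∀ j, Measurable (w j)
  le_ind : ∀ j p, w j p ≤ ind (|p.2 - disp a p.1| ≤ 2 * 2 ^ (j : ℝ))
  sum_sq : ∀ p, ∑' j, w j p ^ 2 = 1

/-- The norm of `X^c_s` expressed through `f = |û|`. -/
def XN (w : ℕ → ℝ × ℝ → ℝ≥0∞) (c s : ℝ) (f : ℝ × ℝ → ℝ≥0∞) : ℝ≥0∞ :=
  ∑' j, dy c j * N2 volume (fun p => w j p * (br s p.1 * f p))

variable {a : ℝ} {w : ℕ → ℝ × ℝ → ℝ≥0∞}

theorem IsWt.le_one (hw : IsWt a w) (j : ℕ) (p : ℝ × ℝ) : w j p ≤ 1 :=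
  (hw.le_ind j p).trans (ind_le_one _)

theorem IsWt.eq_ind_mul (hw : IsWt a w) (j : ℕ) (p : ℝ × ℝ) :
    w j p = ind (|p.2 - disp a p.1| ≤ 2 * 2 ^ (j : ℝ)) * w j p := by
  by_cases h : |p.2 - disp a p.1| ≤ 2 * 2 ^ (j : ℝ)
  · rw [ind_true h, one_mul]
  · have := hw.le_ind j p
    rw [ind_false h] at this ⊢
    simpa using this

theorem IsWt.one_le_sum (hw : IsWt a w) (p : ℝ × ℝ) : 1 ≤ ∑' j, w j p := by
  rw [← hw.sum_sq p]
  refine ENNReal.tsum_le_tsum fun j => ?_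
  rw [sq]
  exact mul_le_of_le_one_right' (hw.le_one j p)

theorem IsWt.le_tsum (hw : IsWt a w) (f : ℝ × ℝ → ℝ≥0∞) (p : ℝ × ℝ) :
    f p ≤ ∑' j, w j p * f p := by
  rw [ENNReal.tsum_mul_right]
  exact le_mul_of_one_le_left' (hw.one_le_sum p)

end Weights

/-! ### The non-resonant region -/

section NonRes
variable {a β b : ℝ} {w : ℕ → ℝ × ℝ → ℝ≥0∞}

/-- The part of frequency space where the resonance identity is used: the first factor has
frequency at least one, lower than the other one, and is not far from its dispersion curve. -/
def NR (a : ℝ) (p q : ℝ × ℝ) : Prop :=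
  1 ≤ |q.1| ∧ |q.1| ≤ |(p - q).1| ∧ |q.2 - disp a q.1| ≤ 3 * |q.1| ^ (2 + a)

theorem symbol_le (ha : 0 < a) (ha1 : a < 1) {x y : ℝ} (hx : 1 ≤ |x|) (hxy : |x| ≤ |y|) :
    ENNReal.ofReal |x + y| * br ((1 + a) / 2) (x + y) ≤
      ENNReal.ofReal (2 * |x + y| * |x| ^ (-((1 + a) / 2))) *
        (br ((1 + a) / 2) x * br ((1 + a) / 2) y) := by
  unfold br
  rw [← ENNReal.ofReal_mul (by positivity), ← ENNReal.ofReal_mul (by positivity),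
    ← ENNReal.ofReal_mul (by positivity)]
  refine ENNReal.ofReal_le_ofReal ?_
  have hx0 : 0 < |x| := by linarith
  set s := (1 + a) / 2 with hs
  have h1 : (1 + |x + y|) ^ s ≤ 2 * (1 + |y|) ^ s := by
    calc (1 + |x + y|) ^ s ≤ (2 * (1 + |y|)) ^ s :=
          Real.rpow_le_rpow (by positivity) (by linarith [abs_add_le x y]) (by linarith)
      _ = 2 ^ s * (1 + |y|) ^ s := Real.mul_rpow (by norm_num) (by positivity)
      _ ≤ 2 ^ (1 : ℝ) * (1 + |y|) ^ s := by
          gcongr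
          · norm_num
          · linarith
      _ = _ := by norm_num
  have h2 : 1 ≤ |x| ^ (-s) * (1 + |x|) ^ s := by
    rw [Real.rpow_neg hx0.le, inv_mul_eq_div, one_le_div (by positivity)]
    exact Real.rpow_le_rpow hx0.le (by linarith) (by linarith)
  calc |x + y| * (1 + |x + y|) ^ s ≤ |x + y| * (2 * (1 + |y|) ^ s) := by gcongr
    _ ≤ |x + y| * (2 * (1 + |y|) ^ s) * (|x| ^ (-s) * (1 + |x|) ^ s) :=
        le_mul_of_one_le_right (by positivity) h2
    _ = _ := by ring

/-- On `NR` the symbol times the dyadic cutoffs is dominated by the kernel `ker` on `P0`. -/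
theorem nonres_pointwise (ha : 0 < a) (ha1 : a < 1) (hw : IsWt a w) (f g : ℝ × ℝ → ℝ≥0∞)
    (j j₁ j₂ : ℕ) (p q : ℝ × ℝ) :
    w j p * (ENNReal.ofReal |p.1| * br ((1 + a) / 2) p.1) *
        (ind (NR a p q) * ((w j₁ q * f q) * (w j₂ (p - q) * g (p - q)))) ≤
      ker a (P0 a (2 ^ (j : ℝ)) (2 ^ (j₁ : ℝ)) (2 ^ (j₂ : ℝ))) p q *
        ((w j₁ q * (br ((1 + a) / 2) q.1 * f q)) *
          (w j₂ (p - q) * (br ((1 + a) / 2) (p - q).1 * g (p - q)))) := by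
  by_cases h : NR a p q ∧ |p.2 - disp a p.1| ≤ 2 * 2 ^ (j : ℝ) ∧
      |q.2 - disp a q.1| ≤ 2 * 2 ^ (j₁ : ℝ) ∧
      |(p - q).2 - disp a (p - q).1| ≤ 2 * 2 ^ (j₂ : ℝ)
  · have hP : P0 a (2 ^ (j : ℝ)) (2 ^ (j₁ : ℝ)) (2 ^ (j₂ : ℝ)) p q :=
      ⟨h.1.1, h.1.2.1, h.1.2.2, h.2⟩
    have hs := symbol_le ha ha1 h.1.1 h.1.2.1
    have e : q.1 + (p - q).1 = p.1 := by simp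
    rw [e] at hs
    rw [ker, ind_true h.1, ind_true hP, one_mul, mul_one]
    calc _ ≤ 1 * (ENNReal.ofReal (2 * |p.1| * |q.1| ^ (-((1 + a) / 2))) *
        (br ((1 + a) / 2) q.1 * br ((1 + a) / 2) (p - q).1)) *
          ((w j₁ q * f q) * (w j₂ (p - q) * g (p - q))) := by
          gcongr
          exact hw.le_one j p
      _ = _ := by ring
  · refine le_of_eq_of_le ?_ (zero_le)
    by_cases h1 : NR a p q
    swap
    · rw [ind_false h1]; simp
    by_cases h2 : |p.2 - disp a p.1| ≤ 2 * 2 ^ (j : ℝ)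
    swap
    · rw [hw.eq_ind_mul j p, ind_false h2]; simp
    by_cases h3 : |q.2 - disp a q.1| ≤ 2 * 2 ^ (j₁ : ℝ)
    swap
    · rw [hw.eq_ind_mul j₁ q, ind_false h3]; simp
    by_cases h4 : |(p - q).2 - disp a (p - q).1| ≤ 2 * 2 ^ (j₂ : ℝ)
    swap
    · rw [hw.eq_ind_mul j₂ (p - q), ind_false h4]; simp
    exact absurd ⟨h1, h2, h3, h4⟩ h

theorem measurableSet_NR (ha : 0 < a) :
    MeasurableSet {z : (ℝ × ℝ) × (ℝ × ℝ) | NR a z.1 z.2} := by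
  have hd := (continuous_disp ha).measurable
  have hle : ∀ {f g : (ℝ × ℝ) × (ℝ × ℝ) → ℝ}, Measurable f → Measurable g →
      MeasurableSet {z | f z ≤ g z} := fun hf hg => measurableSet_le hf hg
  exact (hle (by fun_prop) (by fun_prop)).inter ((hle (by fun_prop) (by fun_prop)).inter
      (hle (by fun_prop) (by fun_prop)))

theorem measurableSet_P0 (ha : 0 < a) (L L₁ L₂ : ℝ) :
    MeasurableSet {z : (ℝ × ℝ) × (ℝ × ℝ) | P0 a L L₁ L₂ z.1 z.2} := by
  have hd := (continuous_disp ha).measurable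
  have hle : ∀ {f g : (ℝ × ℝ) × (ℝ × ℝ) → ℝ}, Measurable f → Measurable g →
      MeasurableSet {z | f z ≤ g z} := fun hf hg => measurableSet_le hf hg
  exact (hle (by fun_prop) (by fun_prop)).inter ((hle (by fun_prop) (by fun_prop)).inter
      ((hle (by fun_prop) (by fun_prop)).inter ((hle (by fun_prop) (by fun_prop)).inter
        ((hle (by fun_prop) (by fun_prop)).inter (hle (by fun_prop) (by fun_prop))))))

theorem half_mul (x y : ℝ≥0∞) :
    (x * y) ^ ((1 : ℝ) / 2) = x ^ ((1 : ℝ) / 2) * y ^ ((1 : ℝ) / 2) :=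
  ENNReal.mul_rpow_of_nonneg _ _ (by norm_num)

set_option maxHeartbeats 1600000 in
/-- Contribution of the region `NR`. -/
theorem nonres_bound (ha : 0 < a) (ha1 : a < 1) (hβ0 : 0 < β) (hβ1 : β ≤ 1)
    (hβ2 : 1 - a ≤ β * (1 + a)) (hβ3 : 1 - a - β * (2 + a) = -(1 + a / 2))
    (hw : IsWt a w) {f g : ℝ × ℝ → ℝ≥0∞} (hf : Measurable f) (hg : Measurable g) :
    ∑' j, dy (-b) j * N2 volume (fun p => w j p * (ENNReal.ofReal |p.1| * br ((1 + a) / 2) p.1) *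
        ∫⁻ q, ind (NR a p q) * (f q * g (p - q))) ≤
      5 * (cDy a) ^ ((1 : ℝ) / 2) * geo (b - β / 2) *
        (XN w (1 / 2) ((1 + a) / 2) f * XN w (1 / 2) ((1 + a) / 2) g) := by
  set s := (1 + a) / 2 with hs
  set F : ℕ → ℝ × ℝ → ℝ≥0∞ := fun j q => w j q * (br s q.1 * f q) with hF
  set G : ℕ → ℝ × ℝ → ℝ≥0∞ := fun j q => w j q * (br s q.1 * g q) with hG
  have hbr : Measurable (br s) := measurable_br s
  have hwm := hw.meas
  have hFm : ∀ j, Measurable (F j) := fun j => by simp only [hF]; fun_prop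
  have hGm : ∀ j, Measurable (G j) := fun j => by simp only [hG]; fun_prop
  let P : ℕ → ℕ → ℕ → ℝ × ℝ → ℝ × ℝ → Prop := fun j j₁ j₂ =>
    P0 a (2 ^ (j : ℝ)) (2 ^ (j₁ : ℝ)) (2 ^ (j₂ : ℝ))
  have hKm : ∀ j j₁ j₂, Measurable fun z : (ℝ × ℝ) × (ℝ × ℝ) =>
      ker a (P j j₁ j₂) z.1 z.2 * (F j₁ z.2 * G j₂ (z.1 - z.2)) := fun j j₁ j₂ =>
    (measurable_ker (a := a) (measurableSet_P0 ha _ _ _)).mul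
      (((hFm j₁).comp measurable_snd).mul ((hGm j₂).comp (measurable_fst.sub measurable_snd)))
  have hKq : ∀ j j₁ j₂ p, Measurable fun q : ℝ × ℝ =>
      ker a (P j j₁ j₂) p q * (F j₁ q * G j₂ (p - q)) := fun j j₁ j₂ p =>
    (hKm j j₁ j₂).comp (measurable_const.prodMk measurable_id)
  have hKp : ∀ j j₁ j₂, Measurable fun p : ℝ × ℝ =>
      ∫⁻ q, ker a (P j j₁ j₂) p q * (F j₁ q * G j₂ (p - q)) := fun j j₁ j₂ =>
    (hKm j j₁ j₂).lintegral_prod_right'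
  have hpt : ∀ j p, w j p * (ENNReal.ofReal |p.1| * br s p.1) *
        ∫⁻ q, ind (NR a p q) * (f q * g (p - q)) ≤
      ∑' j₁, ∑' j₂, ∫⁻ q, ker a (P j j₁ j₂) p q * (F j₁ q * G j₂ (p - q)) := by
    intro j p
    have e : ∀ j₁, ∑' j₂, ∫⁻ q, ker a (P j j₁ j₂) p q * (F j₁ q * G j₂ (p - q)) =
        ∫⁻ q, ∑' j₂, ker a (P j j₁ j₂) p q * (F j₁ q * G j₂ (p - q)) := fun j₁ =>
      (lintegral_tsum fun j₂ => (hKq j j₁ j₂ p).aemeasurable).symm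
    simp_rw [e]
    rw [← lintegral_tsum fun j₁ => (Measurable.tsum fun j₂ => hKq j j₁ j₂ p).aemeasurable,
      ← lintegral_const_mul']
    swap
    · exact ENNReal.mul_ne_top (ne_top_of_le_ne_top (by simp) (hw.le_one j p))
        (ENNReal.mul_ne_top ENNReal.ofReal_ne_top ENNReal.ofReal_ne_top)
    refine lintegral_mono fun q => ?_
    calc w j p * (ENNReal.ofReal |p.1| * br s p.1) * (ind (NR a p q) * (f q * g (p - q)))
        ≤ w j p * (ENNReal.ofReal |p.1| * br s p.1) * (ind (NR a p q) *
          ((∑' j₁, w j₁ q * f q) * (∑' j₂, w j₂ (p - q) * g (p - q)))) := by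
          gcongr
          · exact hw.le_tsum f q
          · exact hw.le_tsum g (p - q)
      _ = ∑' j₁, ∑' j₂, w j p * (ENNReal.ofReal |p.1| * br s p.1) * (ind (NR a p q) *
          ((w j₁ q * f q) * (w j₂ (p - q) * g (p - q)))) := by
          rw [← ENNReal.tsum_mul_right, ← ENNReal.tsum_mul_left, ← ENNReal.tsum_mul_left]
          refine tsum_congr fun j₁ => ?_
          rw [← ENNReal.tsum_mul_left, ← ENNReal.tsum_mul_left, ← ENNReal.tsum_mul_left]
      _ ≤ _ := ENNReal.tsum_le_tsum fun j₁ => ENNReal.tsum_le_tsum fun j₂ =>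
          nonres_pointwise ha ha1 hw f g j j₁ j₂ p q
  have hone : ∀ j : ℕ, (1 : ℝ) ≤ 2 ^ (j : ℝ) := fun j =>
    Real.one_le_rpow (by norm_num) (by positivity)
  have hj : ∀ j, N2 volume (fun p => w j p * (ENNReal.ofReal |p.1| * br s p.1) *
        ∫⁻ q, ind (NR a p q) * (f q * g (p - q))) ≤
      5 * (cDy a) ^ ((1 : ℝ) / 2) * dy (β / 2) j * (XN w (1 / 2) s f * XN w (1 / 2) s g) := by
    intro j
    calc _ ≤ N2 volume (fun p => ∑' j₁, ∑' j₂, ∫⁻ q, ker a (P j j₁ j₂) p q *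
            (F j₁ q * G j₂ (p - q))) := N2_mono (hpt j)
      _ ≤ ∑' j₁, ∑' j₂, N2 volume (fun p => ∫⁻ q, ker a (P j j₁ j₂) p q *
            (F j₁ q * G j₂ (p - q))) := by
          refine (N2_tsum_le _ fun j₁ => Measurable.tsum fun j₂ => hKp j j₁ j₂).trans ?_
          exact ENNReal.tsum_le_tsum fun j₁ => N2_tsum_le _ fun j₂ => hKp j j₁ j₂
      _ ≤ ∑' j₁, ∑' j₂, 5 * (cDy a) ^ ((1 : ℝ) / 2) * dy (β / 2) j *
            ((dy (1 / 2) j₁ * N2 volume (F j₁)) * (dy (1 / 2) j₂ * N2 volume (G j₂))) := by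
          refine ENNReal.tsum_le_tsum fun j₁ => ENNReal.tsum_le_tsum fun j₂ => ?_
          refine (dyadic_bilin ha ha1 hβ0 hβ1 hβ2 hβ3 (hone j) (hone j₁) (hone j₂)
            (hFm j₁) (hGm j₂)).trans (le_of_eq ?_)
          have e : ENNReal.ofReal ((2 ^ (j : ℝ)) ^ β * 2 ^ (j₁ : ℝ) * 2 ^ (j₂ : ℝ)) =
              dy β j * dy 1 j₁ * dy 1 j₂ := by
            unfold dy
            rw [← ENNReal.ofReal_mul (by positivity), ← ENNReal.ofReal_mul (by positivity),
              ← Real.rpow_mul (by norm_num), mul_one, mul_one]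
          rw [e, half_mul, half_mul, half_mul, dy_half, dy_half, dy_half]
          ring
      _ = _ := by
          unfold XN
          rw [← ENNReal.tsum_mul_right, ← ENNReal.tsum_mul_left]
          refine tsum_congr fun j₁ => ?_
          rw [← ENNReal.tsum_mul_left, ← ENNReal.tsum_mul_left]
  calc _ ≤ ∑' j, dy (-b) j * (5 * (cDy a) ^ ((1 : ℝ) / 2) * dy (β / 2) j *
        (XN w (1 / 2) s f * XN w (1 / 2) s g)) :=
        ENNReal.tsum_le_tsum fun j => by gcongr; exact hj j
    _ = ∑' j, dy (-(b - β / 2)) j * (5 * (cDy a) ^ ((1 : ℝ) / 2) *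
        (XN w (1 / 2) s f * XN w (1 / 2) s g)) := by
        refine tsum_congr fun j => ?_
        rw [show -(b - β / 2) = -b + β / 2 by ring, ← dy_mul]; ring
    _ = _ := by rw [ENNReal.tsum_mul_right, geo]; ring

end NonRes

/-! ### The far region: Sobolev majorant and smoothing of the second factor -/

section Res
variable {a b : ℝ} {w : ℕ → ℝ × ℝ → ℝ≥0∞}

theorem lintegral_snd_fst {F : ℝ × ℝ → ℝ≥0∞} (hF : Measurable F) :
    ∫⁻ p : ℝ × ℝ, F p = ∫⁻ y : ℝ, ∫⁻ x : ℝ, F (x, y) := by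
  rw [Measure.volume_eq_prod, lintegral_prod_symm' _ hF]

theorem tsum_sq_le (c : ℕ → ℝ≥0∞) : ∑' j, c j ^ 2 ≤ (∑' j, c j) ^ 2 := by
  rw [sq, ← ENNReal.tsum_mul_left]
  refine ENNReal.tsum_le_tsum fun j => ?_
  rw [sq]
  gcongr
  exact ENNReal.le_tsum j

/-- Cauchy–Schwarz for series of geometric means. -/
theorem tsum_half_mul_le (x y : ℕ → ℝ≥0∞) :
    ∑' j, (x j * y j) ^ ((1 : ℝ) / 2) ≤
      (∑' j, x j) ^ ((1 : ℝ) / 2) * (∑' j, y j) ^ ((1 : ℝ) / 2) := by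
  have h := cs_N2 (μ := Measure.count) (f := fun j : ℕ => x j ^ ((1 : ℝ) / 2))
    (g := fun j : ℕ => y j ^ ((1 : ℝ) / 2)) (measurable_of_countable _) (measurable_of_countable _)
  simp only [N2, half_sq, lintegral_count] at h
  simpa only [half_mul] using h

theorem half_add_le (x y : ℝ≥0∞) :
    (x + y) ^ ((1 : ℝ) / 2) ≤ x ^ ((1 : ℝ) / 2) + y ^ ((1 : ℝ) / 2) :=
  ENNReal.rpow_add_le_add_rpow _ _ (by norm_num) (by norm_num)

/-- Young's inequality `L¹ * L² ⊆ L²` on the line. -/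
theorem young_N2 {B S : ℝ → ℝ≥0∞} (hB : Measurable B) (hS : Measurable S) :
    N2 volume (fun l => ∫⁻ m, B m * S (l - m)) ≤ (∫⁻ m, B m) * N2 volume S := by
  apply le_of_sq_le
  rw [N2_sq, mul_pow, N2_sq]
  have key : ∀ l, (∫⁻ m, B m * S (l - m)) ^ 2 ≤ (∫⁻ m, B m) * ∫⁻ m, B m * S (l - m) ^ 2 := by
    intro l
    have h := cs_N2 (μ := volume) (f := fun m => B m ^ ((1 : ℝ) / 2))
      (g := fun m => B m ^ ((1 : ℝ) / 2) * S (l - m)) (by fun_prop) (by fun_prop)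
    have h2 := pow_le_pow_left' h 2
    rw [mul_pow, N2_sq, N2_sq] at h2
    simp only [mul_pow, half_sq, ← mul_assoc, ← sq] at h2
    exact h2
  refine (lintegral_mono key).trans ?_
  rw [lintegral_const_mul, sq (∫⁻ m, B m), mul_assoc]
  · gcongr
    rw [lintegral_lintegral_swap (by fun_prop), ← lintegral_mul_const _ hB]
    refine le_of_eq (lintegral_congr fun m => ?_)
    rw [lintegral_const_mul _ (by fun_prop), lintegral_sub_right_eq_self (fun x => S x ^ 2) m]
  · exact Measurable.lintegral_prod_right' (f := fun z : ℝ × ℝ => B z.2 * S (z.1 - z.2) ^ 2)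
      (by fun_prop)

/-- The radius such that `|ω(ξ)| ≤ max(1, |l|/2)` for `|ξ|` below it; when `|l|` is large, such
`(ξ, l)` are at distance at least `|l|/2` from the dispersion curve. -/
def rad (a l : ℝ) : ℝ := max 1 ((|l| / 2) ^ (1 / (2 + a)))

theorem measurable_rad (a : ℝ) : Measurable (rad a) := by unfold rad; fun_prop

theorem rad_pow (ha : 0 < a) {l x : ℝ} (hx : |x| ≤ rad a l) : |x| ^ (2 + a) ≤ max 1 (|l| / 2) := by
  rcases le_max_iff.1 hx with h | h
  · exact (Real.rpow_le_one (abs_nonneg _) h (by linarith)).trans (le_max_left _ _)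
  · refine le_trans ?_ (le_max_right _ _)
    have := Real.rpow_le_rpow (abs_nonneg _) h (by linarith : 0 ≤ 2 + a)
    rwa [← Real.rpow_mul (by positivity), one_div, inv_mul_cancel₀ (by linarith), Real.rpow_one] at this

/-- Outside `NR` a low-frequency first factor lies below the radius `rad`. -/
theorem le_rad_of_not_NR (ha : 0 < a) {p q : ℝ × ℝ} (h : |q.1| ≤ |(p - q).1|) (hn : ¬ NR a p q) :
    |q.1| ≤ rad a q.2 := by
  by_cases h1 : 1 ≤ |q.1|
  swap
  · exact (not_le.1 h1).le.trans (le_max_left _ _)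
  refine le_trans ?_ (le_max_right _ _)
  have h2 : 3 * |q.1| ^ (2 + a) < |q.2 - disp a q.1| := by
    by_contra h3
    exact hn ⟨h1, h, not_lt.1 h3⟩
  have h3 := abs_sub q.2 (disp a q.1)
  rw [abs_disp ha] at h3
  have h4 : |q.1| ^ (2 + a) ≤ |q.2| / 2 := by linarith
  have h5 := Real.rpow_le_rpow (by positivity) h4 (by positivity : 0 ≤ 1 / (2 + a))
  rwa [← Real.rpow_mul (by positivity), one_div, mul_inv_cancel₀ (by linarith), Real.rpow_one,
    ← one_div] at h5

/-- One-dimensional Sobolev inequality in `ξ`, on all intervals `[-ρ, ρ]` with `ρ ≥ 1`. -/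
def Sob (f f' : ℝ × ℝ → ℝ≥0∞) : Prop :=
  ∀ l ρ x : ℝ, 1 ≤ ρ → |x| ≤ ρ →
    f (x, l) ^ 2 ≤ ∫⁻ y, ind (|y| ≤ ρ) * (f (y, l) ^ 2 + 2 * (f (y, l) * f' (y, l)))

/-- `∫_{|ξ| ≤ rad(l)} w_j² (f² + 2 f f') dξ` at height `l`. -/
def hB (a : ℝ) (w : ℕ → ℝ × ℝ → ℝ≥0∞) (f f' : ℝ × ℝ → ℝ≥0∞) (j : ℕ) (l : ℝ) : ℝ≥0∞ :=
  ∫⁻ y, ind (|y| ≤ rad a l) * (w j (y, l) ^ 2 * (f (y, l) ^ 2 + 2 * (f (y, l) * f' (y, l))))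

/-- A majorant of `f(·, l)` on `|ξ| ≤ rad(l)`. -/
def supB (a : ℝ) (w : ℕ → ℝ × ℝ → ℝ≥0∞) (f f' : ℝ × ℝ → ℝ≥0∞) (l : ℝ) : ℝ≥0∞ :=
  ∑' j, hB a w f f' j l ^ ((1 : ℝ) / 2)

variable {f f' g : ℝ × ℝ → ℝ≥0∞}

theorem measurable_ind_rad (a : ℝ) :
    Measurable fun z : ℝ × ℝ => ind (|z.1| ≤ rad a z.2) := by
  have := measurable_rad a
  exact measurable_ind (measurableSet_le (by fun_prop) (by fun_prop))

theorem measurable_hB (hw : IsWt a w) (hf : Measurable f) (hf' : Measurable f') (j : ℕ) :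
    Measurable (hB a w f f' j) := by
  have := hw.meas j
  have h2 := measurable_ind_rad a
  exact Measurable.lintegral_prod_left' (f := fun z : ℝ × ℝ => ind (|z.1| ≤ rad a z.2) *
    (w j z ^ 2 * (f z ^ 2 + 2 * (f z * f' z)))) (by fun_prop)

theorem measurable_supB (hw : IsWt a w) (hf : Measurable f) (hf' : Measurable f') :
    Measurable (supB a w f f') :=
  Measurable.tsum fun j => (measurable_hB hw hf hf' j).pow_const _

theorem le_supB (hw : IsWt a w) (hf : Measurable f) (hf' : Measurable f') (hS : Sob f f')
    {q : ℝ × ℝ} (hq : |q.1| ≤ rad a q.2) : f q ≤ supB a w f f' q.2 := by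
  apply le_of_sq_le
  refine le_trans ?_ (tsum_sq_le _)
  simp only [half_sq]
  have h2 := measurable_ind_rad a
  have h3 : Measurable fun y : ℝ => ind (|y| ≤ rad a q.2) :=
    h2.comp (measurable_id.prodMk measurable_const)
  have hwm := hw.meas
  unfold hB
  rw [← lintegral_tsum (fun j => by fun_prop)]
  refine (hS q.2 (rad a q.2) q.1 (le_max_left _ _) hq).trans (le_of_eq (lintegral_congr fun y => ?_))
  rw [ENNReal.tsum_mul_left, ENNReal.tsum_mul_right, hw.sum_sq, one_mul]

/-- Below the radius `rad`, a point of modulation `2^j` has height at most of order `2^j`. -/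
theorem hB_support (ha : 0 < a) (hw : IsWt a w) (j : ℕ) (l : ℝ) :
    hB a w f f' j l ≤ ind (|l| ≤ 4 * 2 ^ (j : ℝ)) *
      ∫⁻ y, w j (y, l) ^ 2 * (f (y, l) ^ 2 + 2 * (f (y, l) * f' (y, l))) := by
  by_cases hl : |l| ≤ 4 * 2 ^ (j : ℝ)
  · rw [ind_true hl, one_mul]
    refine lintegral_mono fun y => ?_
    exact mul_le_of_le_one_left' (ind_le_one _)
  · refine le_of_eq_of_le ?_ zero_le
    refine (lintegral_congr fun y => ?_).trans lintegral_zero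
    by_cases hy : |y| ≤ rad a l
    swap
    · rw [ind_false hy, zero_mul]
    have h1 := rad_pow ha hy
    have h2 : ¬ |(y, l).2 - disp a (y, l).1| ≤ 2 * 2 ^ (j : ℝ) := by
      intro h
      dsimp only at h
      have h3 := abs_sub_abs_le_abs_sub l (disp a y)
      rw [abs_disp ha] at h3
      have hone : (1 : ℝ) ≤ 2 ^ (j : ℝ) := Real.one_le_rpow (by norm_num) (by positivity)
      rcases le_max_iff.1 h1 with h4 | h4 <;> exact hl (by linarith)
    rw [hw.eq_ind_mul j (y, l), ind_false h2]
    simp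

theorem one_le_br {s : ℝ} (hs : 0 ≤ s) (x : ℝ) : 1 ≤ br s x := by
  unfold br
  rw [ENNReal.one_le_ofReal]
  exact Real.one_le_rpow (by linarith [abs_nonneg x]) hs

theorem ofReal_two_rpow (j : ℕ) : ENNReal.ofReal (2 ^ (j : ℝ)) = dy 1 j := by simp [dy]

theorem half_le_nat {n m : ℕ} (h : n ≤ m ^ 2) : (n : ℝ≥0∞) ^ ((1 : ℝ) / 2) ≤ m := by
  apply le_of_sq_le
  rw [half_sq]; exact_mod_cast h

/-- The majorant is integrable in the height: at modulation `2^j` the height ranges over an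
interval of length `≲ 2^j`, so Cauchy–Schwarz costs `2^{j/2}`, and the weights `br s`, `br (-s)`
cancel in the product of `f` and `f'`. -/
theorem lintegral_supB (ha : 0 < a) (hw : IsWt a w) (hf : Measurable f) (hf' : Measurable f')
    {s : ℝ} (hs : 0 ≤ s) :
    ∫⁻ l, supB a w f f' l ≤ 6 * (XN w (1 / 2) s f +
      XN w (1 / 2) s f ^ ((1 : ℝ) / 2) * XN w (1 / 2) (-s) f' ^ ((1 : ℝ) / 2)) := by
  have hwm := hw.meas
  have hbr := measurable_br
  set A : ℕ → ℝ≥0∞ := fun j => N2 volume (fun p => w j p * (br s p.1 * f p)) with hA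
  set A' : ℕ → ℝ≥0∞ := fun j => N2 volume (fun p => w j p * (br (-s) p.1 * f' p)) with hA'
  have hone : ∀ j, ∫⁻ l, hB a w f f' j l ^ ((1 : ℝ) / 2) ≤
      3 * dy (1 / 2) j * (A j ^ 2 + 2 * (A j * A' j)) ^ ((1 : ℝ) / 2) := by
    intro j
    set H : ℝ → ℝ≥0∞ := fun l =>
      ∫⁻ y, w j (y, l) ^ 2 * (f (y, l) ^ 2 + 2 * (f (y, l) * f' (y, l))) with hH
    have hHm : Measurable H := Measurable.lintegral_prod_left' (f := fun z : ℝ × ℝ =>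
      w j z ^ 2 * (f z ^ 2 + 2 * (f z * f' z))) (by fun_prop)
    have him : Measurable fun l : ℝ => ind (|l| ≤ 4 * 2 ^ (j : ℝ)) :=
      measurable_ind (measurableSet_le (by fun_prop) (by fun_prop))
    calc ∫⁻ l, hB a w f f' j l ^ ((1 : ℝ) / 2)
        ≤ ∫⁻ l, ind (|l| ≤ 4 * 2 ^ (j : ℝ)) * H l ^ ((1 : ℝ) / 2) := by
          refine lintegral_mono fun l => ?_
          refine (ENNReal.rpow_le_rpow (hB_support ha hw j l) (by norm_num)).trans ?_
          rw [half_mul]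
          gcongr
          unfold ind
          split_ifs <;> simp
      _ ≤ N2 volume (fun l : ℝ => ind (|l| ≤ 4 * 2 ^ (j : ℝ))) *
            N2 volume (fun l => H l ^ ((1 : ℝ) / 2)) := cs_N2 him (by fun_prop)
      _ ≤ (3 * dy (1 / 2) j) * (A j ^ 2 + 2 * (A j * A' j)) ^ ((1 : ℝ) / 2) := by
          gcongr
          · unfold N2
            simp only [ind_sq]
            have hv : volume {l : ℝ | |l| ≤ 4 * 2 ^ (j : ℝ)} =
                ENNReal.ofReal (2 * (4 * 2 ^ (j : ℝ))) := by
              rw [← volume_strip_le 0]; simp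
            rw [lintegral_ind (measurableSet_le (by fun_prop) (by fun_prop)), hv, ← mul_assoc,
              ENNReal.ofReal_mul (by norm_num), half_mul, ofReal_two_rpow, dy_half]
            gcongr
            have := half_le_nat (n := 8) (m := 3) (by norm_num)
            norm_num at this ⊢
            exact this
          · unfold N2
            simp only [half_sq]
            gcongr
            have e : ∫⁻ l, H l = ∫⁻ p : ℝ × ℝ, w j p ^ 2 * (f p ^ 2 + 2 * (f p * f' p)) :=
              (lintegral_snd_fst (F := fun p => w j p ^ 2 * (f p ^ 2 + 2 * (f p * f' p)))
                (by fun_prop)).symm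
            rw [e]
            calc _ ≤ ∫⁻ p : ℝ × ℝ, ((w j p * (br s p.1 * f p)) ^ 2 +
                  2 * ((w j p * (br s p.1 * f p)) * (w j p * (br (-s) p.1 * f' p)))) := by
                  refine lintegral_mono fun p => ?_
                  dsimp only
                  rw [mul_add]
                  refine add_le_add ?_ (le_of_eq ?_)
                  · rw [mul_pow, mul_pow]
                    gcongr
                    exact le_mul_of_one_le_left' (one_le_pow₀ (one_le_br hs _))
                  · have h1 : br s p.1 * br (-s) p.1 = 1 := by
                      rw [br_mul, add_neg_cancel, br_zero]
                    calc _ = 2 * (w j p ^ 2 * (f p * f' p) * (br s p.1 * br (-s) p.1)) := by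
                          rw [h1]; ring
                      _ = _ := by ring
              _ ≤ A j ^ 2 + 2 * (A j * A' j) := by
                  rw [lintegral_add_left (by fun_prop), lintegral_const_mul _ (by fun_prop), hA,
                    N2_sq]
                  gcongr
                  exact cs_N2 (by fun_prop) (by fun_prop)
      _ = _ := by ring
  calc ∫⁻ l, supB a w f f' l = ∑' j, ∫⁻ l, hB a w f f' j l ^ ((1 : ℝ) / 2) :=
        lintegral_tsum fun j => ((measurable_hB hw hf hf' j).pow_const _).aemeasurable
    _ ≤ ∑' j, 6 * (dy (1 / 2) j * A j +
          ((dy (1 / 2) j * A j) * (dy (1 / 2) j * A' j)) ^ ((1 : ℝ) / 2)) := by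
        refine ENNReal.tsum_le_tsum fun j => (hone j).trans ?_
        have h1 := half_add_le (A j ^ 2) (2 * (A j * A' j))
        rw [sq_half, half_mul] at h1
        have h2 : (2 : ℝ≥0∞) ^ ((1 : ℝ) / 2) ≤ 2 := by
          have := half_le_nat (n := 2) (m := 2) (by norm_num)
          exact_mod_cast this
        have h3 : ((dy (1 / 2) j * A j) * (dy (1 / 2) j * A' j)) ^ ((1 : ℝ) / 2) =
            dy (1 / 2) j * (A j * A' j) ^ ((1 : ℝ) / 2) := by
          rw [show (dy (1 / 2) j * A j) * (dy (1 / 2) j * A' j) =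
            dy (1 / 2) j ^ 2 * (A j * A' j) by ring, half_mul, sq_half]
        rw [h3]
        calc 3 * dy (1 / 2) j * (A j ^ 2 + 2 * (A j * A' j)) ^ ((1 : ℝ) / 2)
            ≤ 3 * dy (1 / 2) j * (2 * A j + 2 * (A j * A' j) ^ ((1 : ℝ) / 2)) := by
              gcongr
              refine h1.trans ?_
              gcongr
              exact le_mul_of_one_le_left' (by norm_num)
          _ = _ := by ring
    _ ≤ _ := by
        rw [ENNReal.tsum_mul_left, ENNReal.tsum_add]
        gcongr
        · exact le_rfl
        · exact tsum_half_mul_le _ _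

/-- Local smoothing for the second factor: integrate in `ξ` at fixed height. -/
theorem smoothing (ha : 0 < a) (hw : IsWt a w) (hg : Measurable g) :
    N2 volume (fun l => ∫⁻ x, ENNReal.ofReal (|x| ^ ((1 + a) / 2)) *
      (br ((1 + a) / 2) x * g (x, l))) ≤ 4 * XN w (1 / 2) ((1 + a) / 2) g := by
  set s := (1 + a) / 2 with hs
  have hwm := hw.meas
  have hbr := measurable_br s
  have hd := (continuous_disp ha).measurable
  set G : ℕ → ℝ × ℝ → ℝ≥0∞ := fun j p => w j p * (br s p.1 * g p) with hG
  have hGm : ∀ j, Measurable (G j) := fun j => by simp only [hG]; fun_prop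
  set T : ℕ → ℝ → ℝ≥0∞ := fun j l => N2 volume (fun x => G j (x, l)) with hT
  have hTm : ∀ j, Measurable (T j) := fun j =>
    (Measurable.lintegral_prod_left' (f := fun z : ℝ × ℝ => G j z ^ 2)
      ((hGm j).pow_const 2)).pow_const _
  have hpt : ∀ l, ∫⁻ x, ENNReal.ofReal (|x| ^ s) * (br s x * g (x, l)) ≤
      ∑' j, 4 * dy (1 / 2) j * T j l := by
    intro l
    calc _ ≤ ∫⁻ x, ∑' j : ℕ, (ENNReal.ofReal (|x| ^ s) * ind (|l - disp a x| ≤ 2 * 2 ^ (j : ℝ))) *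
          G j (x, l) := by
          refine lintegral_mono fun x => ?_
          dsimp only
          refine (mul_le_mul' le_rfl (hw.le_tsum (fun p => br s p.1 * g p) (x, l))).trans
            (le_of_eq ?_)
          rw [← ENNReal.tsum_mul_left]
          refine tsum_congr fun j => ?_
          simp only [hG]
          rw [mul_assoc, ← mul_assoc (ind _)]
          congr 2
          exact hw.eq_ind_mul j (x, l)
      _ = ∑' j : ℕ, ∫⁻ x, (ENNReal.ofReal (|x| ^ s) * ind (|l - disp a x| ≤ 2 * 2 ^ (j : ℝ))) *
          G j (x, l) := by
          refine lintegral_tsum fun j => Measurable.aemeasurable ?_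
          have : Measurable fun x : ℝ => ind (|l - disp a x| ≤ 2 * 2 ^ (j : ℝ)) :=
            measurable_ind (measurableSet_le (by fun_prop) (by fun_prop))
          have := hGm j
          fun_prop
      _ ≤ _ := by
          refine ENNReal.tsum_le_tsum fun j => ?_
          have hi : Measurable fun x : ℝ => ind (|l - disp a x| ≤ 2 * 2 ^ (j : ℝ)) :=
            measurable_ind (measurableSet_le (by fun_prop) (by fun_prop))
          have := hGm j
          refine (cs_N2 (by fun_prop) (by fun_prop)).trans ?_
          gcongr
          · apply le_of_sq_le
            rw [N2_sq]
            refine le_trans (le_of_eq (lintegral_congr fun x => ?_))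
              ((kato_one ha l (L := 2 * 2 ^ (j : ℝ)) (by positivity)).trans (le_of_eq ?_))
            · rw [mul_pow, ind_sq, ← ENNReal.ofReal_pow (by positivity), ← Real.rpow_natCast,
                ← Real.rpow_mul (abs_nonneg x)]
              congr 3
              rw [hs]; push_cast; ring
            · rw [mul_pow, sq (dy _ _), dy_mul, ← mul_assoc, ENNReal.ofReal_mul (by norm_num),
                ofReal_two_rpow]
              norm_num
  refine (N2_mono hpt).trans ((N2_tsum_le _ fun j => by have := hTm j; fun_prop).trans ?_)
  unfold XN
  rw [← ENNReal.tsum_mul_left]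
  refine ENNReal.tsum_le_tsum fun j => ?_
  rw [N2_const_mul _ (hTm j), ← mul_assoc]
  gcongr
  refine le_of_eq ?_
  unfold N2
  congr 1
  rw [lintegral_snd_fst ((hGm j).pow_const 2)]
  refine lintegral_congr fun l => ?_
  rw [hT]
  exact N2_sq _

end Res

/-! ### The far region: conclusion, and the bilinear estimate -/

section Res2
variable {a b : ℝ} {w : ℕ → ℝ × ℝ → ℝ≥0∞} {f f' g g' : ℝ × ℝ → ℝ≥0∞}

/-- The symbol splits so that the second factor carries `|ξ₂|^{(1+a)/2}`, the gain of local
smoothing, and the output the remaining `|ξ|^{(1-a)/2}`. -/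
theorem symbol_le_far (ha : 0 < a) (ha1 : a < 1) {x y : ℝ} (hxy : |x| ≤ 2 * |y|) :
    ENNReal.ofReal |x| * br ((1 + a) / 2) x ≤
      4 * ENNReal.ofReal (|x| ^ ((1 - a) / 2)) *
        (ENNReal.ofReal (|y| ^ ((1 + a) / 2)) * br ((1 + a) / 2) y) := by
  unfold br
  rw [← ENNReal.ofReal_mul (by positivity), ← ENNReal.ofReal_mul (by positivity),
    show (4 : ℝ≥0∞) = ENNReal.ofReal 4 by norm_num, ← ENNReal.ofReal_mul (by positivity),
    ← ENNReal.ofReal_mul (by positivity)]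
  refine ENNReal.ofReal_le_ofReal ?_
  set s := (1 + a) / 2 with hs
  have h2s : (2 : ℝ) ^ s ≤ 2 := by
    calc (2 : ℝ) ^ s ≤ 2 ^ (1 : ℝ) := Real.rpow_le_rpow_of_exponent_le (by norm_num) (by linarith)
      _ = 2 := by norm_num
  have h1 : (1 + |x|) ^ s ≤ 2 * (1 + |y|) ^ s := by
    calc (1 + |x|) ^ s ≤ (2 * (1 + |y|)) ^ s :=
          Real.rpow_le_rpow (by positivity) (by linarith) (by linarith)
      _ = 2 ^ s * (1 + |y|) ^ s := Real.mul_rpow (by norm_num) (by positivity)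
      _ ≤ _ := by gcongr
  have h2 : |x| ^ s ≤ 2 * |y| ^ s := by
    calc |x| ^ s ≤ (2 * |y|) ^ s := Real.rpow_le_rpow (by positivity) hxy (by linarith)
      _ = 2 ^ s * |y| ^ s := Real.mul_rpow (by norm_num) (by positivity)
      _ ≤ _ := by gcongr
  have h3 : |x| = |x| ^ ((1 - a) / 2) * |x| ^ s := by
    rw [← Real.rpow_add_of_nonneg (abs_nonneg x) (by linarith) (by linarith),
      show (1 - a) / 2 + s = 1 by rw [hs]; ring, Real.rpow_one]
  calc |x| * (1 + |x|) ^ s = |x| ^ ((1 - a) / 2) * |x| ^ s * (1 + |x|) ^ s := by rw [← h3]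
    _ ≤ |x| ^ ((1 - a) / 2) * (2 * |y| ^ s) * (2 * (1 + |y|) ^ s) := by gcongr
    _ = _ := by ring

/-- The region where the first factor has the lower frequency and lies below the radius `rad`. -/
def RG (a : ℝ) (p q : ℝ × ℝ) : Prop := |q.1| ≤ rad a q.2 ∧ |q.1| ≤ |(p - q).1|

theorem measurableSet_RG : MeasurableSet {z : (ℝ × ℝ) × (ℝ × ℝ) | RG a z.1 z.2} := by
  have := measurable_rad a
  have hle : ∀ {f g : (ℝ × ℝ) × (ℝ × ℝ) → ℝ}, Measurable f → Measurable g →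
      MeasurableSet {z | f z ≤ g z} := fun hf hg => measurableSet_le hf hg
  exact (hle (by fun_prop) (by fun_prop)).inter (hle (by fun_prop) (by fun_prop))

set_option maxHeartbeats 1000000 in
/-- Contribution of the region `RG` to the output of modulation `2^j`. -/
theorem res_one (ha : 0 < a) (ha1 : a < 1) (hw : IsWt a w) (hf : Measurable f)
    (hf' : Measurable f') (hg : Measurable g) (hS : Sob f f') (j : ℕ) :
    N2 volume (fun p => w j p * (ENNReal.ofReal |p.1| * br ((1 + a) / 2) p.1) *
        ∫⁻ q, ind (RG a p q) * (f q * g (p - q))) ≤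
      768 * dy ((2 - a) / (2 + a) / 2) j *
        ((XN w (1 / 2) ((1 + a) / 2) f + XN w (1 / 2) ((1 + a) / 2) f ^ ((1 : ℝ) / 2) *
          XN w (1 / 2) (-((1 + a) / 2)) f' ^ ((1 : ℝ) / 2)) * XN w (1 / 2) ((1 + a) / 2) g) := by
  set s := (1 + a) / 2 with hs
  set θ := (2 - a) / (2 + a) with hθ
  have hθ0 : 0 ≤ θ := div_nonneg (by linarith) (by linarith)
  have hθ1 : θ ≤ 1 := by rw [hθ, div_le_one (by linarith)]; linarith
  have hd := (continuous_disp ha).measurable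
  have hbr := measurable_br s
  have hBm := measurable_supB hw hf hf'
  set B := supB a w f f' with hB
  set S : ℝ → ℝ≥0∞ := fun l => ∫⁻ x, ENNReal.ofReal (|x| ^ s) * (br s x * g (x, l)) with hSdef
  have hHm : Measurable fun z : ℝ × ℝ => ENNReal.ofReal (|z.1| ^ s) * (br s z.1 * g z) := by
    fun_prop
  have hSm : Measurable S := Measurable.lintegral_prod_left' hHm
  set G : ℝ → ℝ≥0∞ := fun l => ∫⁻ m, B m * S (l - m) with hG
  have hGm : Measurable G := Measurable.lintegral_prod_right'
    (f := fun z : ℝ × ℝ => B z.2 * S (z.1 - z.2)) (by fun_prop)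
  have hGb : N2 volume G ≤ (6 * (XN w (1 / 2) s f + XN w (1 / 2) s f ^ ((1 : ℝ) / 2) *
      XN w (1 / 2) (-s) f' ^ ((1 : ℝ) / 2))) * (4 * XN w (1 / 2) s g) :=
    (young_N2 hBm hSm).trans
      (mul_le_mul' (lintegral_supB ha hw hf hf' (by rw [hs]; linarith)) (smoothing ha hw hg))
  have hpt : ∀ p : ℝ × ℝ, w j p * (ENNReal.ofReal |p.1| * br s p.1) *
        ∫⁻ q, ind (RG a p q) * (f q * g (p - q)) ≤
      ind (|p.2 - disp a p.1| ≤ 2 * 2 ^ (j : ℝ)) *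
        (4 * ENNReal.ofReal (|p.1| ^ ((1 - a) / 2))) * G p.2 := by
    intro p
    rw [mul_assoc, mul_assoc (ind _)]
    refine mul_le_mul' (hw.le_ind j p) ?_
    have e : G p.2 = ∫⁻ q : ℝ × ℝ, B q.2 *
        (ENNReal.ofReal (|(p - q).1| ^ s) * (br s (p - q).1 * g (p - q))) := by
      rw [lintegral_snd_fst (by fun_prop)]
      refine lintegral_congr fun m => ?_
      dsimp only
      rw [lintegral_const_mul _ (by fun_prop)]
      congr 1
      exact (lintegral_sub_left_eq_self (fun x => ENNReal.ofReal (|x| ^ s) *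
        (br s x * g (x, p.2 - m))) p.1).symm
    rw [e, ← lintegral_const_mul' _ _ (ENNReal.mul_ne_top (by norm_num) ENNReal.ofReal_ne_top),
      ← lintegral_const_mul' _ _ (show ENNReal.ofReal |p.1| * br s p.1 ≠ ⊤ from
        ENNReal.mul_ne_top ENNReal.ofReal_ne_top ENNReal.ofReal_ne_top)]
    refine lintegral_mono fun q => ?_
    by_cases h : RG a p q
    swap
    · simp [ind_false h]
    rw [ind_true h, one_mul]
    have h1 := symbol_le_far ha ha1 (x := p.1) (y := (p - q).1) (by
      have h2 := h.2
      have h3 := abs_add_le q.1 (p - q).1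
      have h4 : q.1 + (p - q).1 = p.1 := by simp
      rw [h4] at h3; linarith)
    calc _ ≤ (4 * ENNReal.ofReal (|p.1| ^ ((1 - a) / 2)) *
        (ENNReal.ofReal (|(p - q).1| ^ s) * br s (p - q).1)) * (B q.2 * g (p - q)) :=
          mul_le_mul' h1 (mul_le_mul' (le_supB hw hf hf' hS h.1) le_rfl)
      _ = _ := by ring
  have hi : Measurable fun p : ℝ × ℝ => ind (|p.2 - disp a p.1| ≤ 2 * 2 ^ (j : ℝ)) :=
    measurable_ind (measurableSet_le (by fun_prop) (by fun_prop))
  have hN : N2 volume (fun p : ℝ × ℝ => ind (|p.2 - disp a p.1| ≤ 2 * 2 ^ (j : ℝ)) *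
        (4 * ENNReal.ofReal (|p.1| ^ ((1 - a) / 2))) * G p.2) ≤
      32 * dy (θ / 2) j * N2 volume G := by
    apply le_of_sq_le
    rw [N2_sq, mul_pow, N2_sq, lintegral_snd_fst (by fun_prop), ← lintegral_const_mul _
      (by fun_prop)]
    refine lintegral_mono fun l => ?_
    dsimp only
    calc _ = ∫⁻ x : ℝ, (16 * G l ^ 2) * (ENNReal.ofReal (|x| ^ (1 - a)) *
          ind (|l - disp a x| ≤ 2 * 2 ^ (j : ℝ))) := by
          refine lintegral_congr fun x => ?_
          have e : ENNReal.ofReal (|x| ^ ((1 - a) / 2)) ^ 2 = ENNReal.ofReal (|x| ^ (1 - a)) := by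
            rw [← ENNReal.ofReal_pow (by positivity), ← Real.rpow_natCast,
              ← Real.rpow_mul (abs_nonneg x)]
            congr 2; push_cast; ring
          rw [mul_pow, mul_pow, mul_pow, ind_sq, e]; ring
      _ = (16 * G l ^ 2) * ∫⁻ x : ℝ, (ENNReal.ofReal (|x| ^ (1 - a)) *
          ind (|l - disp a x| ≤ 2 * 2 ^ (j : ℝ))) := by
          have : Measurable fun x : ℝ => ind (|l - disp a x| ≤ 2 * 2 ^ (j : ℝ)) :=
            measurable_ind (measurableSet_le (by fun_prop) (by fun_prop))
          rw [lintegral_const_mul _ (by fun_prop)]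
      _ ≤ (16 * G l ^ 2) * (32 * dy θ j) := by
          gcongr
          refine (kato_two ha ha1 l (L := 2 * 2 ^ (j : ℝ)) (by positivity)).trans ?_
          unfold dy
          rw [show (32 : ℝ≥0∞) = ENNReal.ofReal 32 by norm_num, ← ENNReal.ofReal_mul (by norm_num)]
          refine ENNReal.ofReal_le_ofReal ?_
          rw [Real.mul_rpow (by norm_num) (by positivity), ← Real.rpow_mul (by norm_num)]
          have h2 : (2 : ℝ) ^ θ ≤ 2 := by
            calc (2 : ℝ) ^ θ ≤ 2 ^ (1 : ℝ) := Real.rpow_le_rpow_of_exponent_le (by norm_num) hθ1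
              _ = 2 := by norm_num
          have h3 : (0 : ℝ) < 2 ^ ((j : ℝ) * θ) := by positivity
          nlinarith
      _ ≤ (32 * dy (θ / 2) j) ^ 2 * G l ^ 2 := by
          rw [mul_pow, sq (dy _ _), dy_mul, show θ / 2 + θ / 2 = θ by ring]
          calc _ = (512 : ℝ≥0∞) * (dy θ j * G l ^ 2) := by ring
            _ ≤ 1024 * (dy θ j * G l ^ 2) := by gcongr; norm_num
            _ = _ := by ring
  refine (N2_mono hpt).trans (hN.trans ((mul_le_mul' le_rfl hGb).trans (le_of_eq ?_)))
  ring

/-- Contribution of the region `RG`. -/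
theorem res_bound (ha : 0 < a) (ha1 : a < 1) (hw : IsWt a w) (hf : Measurable f)
    (hf' : Measurable f') (hg : Measurable g) (hS : Sob f f') :
    ∑' j, dy (-b) j * N2 volume (fun p => w j p * (ENNReal.ofReal |p.1| * br ((1 + a) / 2) p.1) *
        ∫⁻ q, ind (RG a p q) * (f q * g (p - q))) ≤
      768 * geo (b - (2 - a) / (2 + a) / 2) *
        ((XN w (1 / 2) ((1 + a) / 2) f + XN w (1 / 2) ((1 + a) / 2) f ^ ((1 : ℝ) / 2) *
          XN w (1 / 2) (-((1 + a) / 2)) f' ^ ((1 : ℝ) / 2)) * XN w (1 / 2) ((1 + a) / 2) g) := by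
  set D := ((XN w (1 / 2) ((1 + a) / 2) f + XN w (1 / 2) ((1 + a) / 2) f ^ ((1 : ℝ) / 2) *
          XN w (1 / 2) (-((1 + a) / 2)) f' ^ ((1 : ℝ) / 2)) * XN w (1 / 2) ((1 + a) / 2) g)
  set θ := (2 - a) / (2 + a)
  calc _ ≤ ∑' j, dy (-b) j * (768 * dy (θ / 2) j * D) :=
        ENNReal.tsum_le_tsum fun j => mul_le_mul' le_rfl (res_one ha ha1 hw hf hf' hg hS j)
    _ = ∑' j, dy (-(b - θ / 2)) j * (768 * D) := by
        refine tsum_congr fun j => ?_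
        rw [show -(b - θ / 2) = -b + θ / 2 by ring, ← dy_mul]; ring
    _ = _ := by rw [ENNReal.tsum_mul_right, geo]; ring

/-- The constant of the bilinear estimate. -/
def cBil (a b : ℝ) : ℝ≥0∞ :=
  5 * (cDy a) ^ ((1 : ℝ) / 2) * geo (b - (4 - a) / (2 * (2 + a)) / 2) +
    768 * geo (b - (2 - a) / (2 + a) / 2)

theorem cBil_ne_top (ha : 0 < a) (hb : (4 - a) / (2 * (2 + a)) / 2 < b)
    (hb' : (2 - a) / (2 + a) / 2 < b) : cBil a b ≠ ⊤ := by
  unfold cBil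
  refine ENNReal.add_ne_top.2 ⟨ENNReal.mul_ne_top (ENNReal.mul_ne_top (by norm_num) ?_) ?_,
    ENNReal.mul_ne_top (by norm_num) ?_⟩
  · exact ENNReal.rpow_ne_top_of_nonneg (by norm_num) (cDy_ne_top ha)
  · exact geo_ne_top (by linarith)
  · exact geo_ne_top (by linarith)

/-- The bilinear form with the frequency of the first factor not larger than that of the second. -/
def lowHigh (w : ℕ → ℝ × ℝ → ℝ≥0∞) (a b : ℝ) (f g : ℝ × ℝ → ℝ≥0∞) : ℝ≥0∞ :=
  ∑' j, dy (-b) j * N2 volume (fun p => w j p * (ENNReal.ofReal |p.1| * br ((1 + a) / 2) p.1) *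
    ∫⁻ q, ind (|q.1| ≤ |(p - q).1|) * (f q * g (p - q)))

theorem measurable_piece (hw : IsWt a w) (hf : Measurable f) (hg : Measurable g) (s : ℝ)
    {Q : ℝ × ℝ → ℝ × ℝ → Prop}
    (hQ : MeasurableSet {z : (ℝ × ℝ) × (ℝ × ℝ) | Q z.1 z.2}) (j : ℕ) :
    Measurable (fun p => w j p * (ENNReal.ofReal |p.1| * br s p.1) *
        ∫⁻ q, ind (Q p q) * (f q * g (p - q))) := by
  have := hw.meas j
  have := measurable_br s
  have := measurable_ind hQ
  have h : Measurable fun p : ℝ × ℝ => ∫⁻ q, ind (Q p q) * (f q * g (p - q)) :=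
    Measurable.lintegral_prod_right'
      (f := fun z : (ℝ × ℝ) × (ℝ × ℝ) => ind (Q z.1 z.2) * (f z.2 * g (z.1 - z.2))) (by fun_prop)
  fun_prop

theorem measurable_piece_int (hf : Measurable f) (hg : Measurable g)
    {Q : ℝ × ℝ → ℝ × ℝ → Prop}
    (hQ : MeasurableSet {z : (ℝ × ℝ) × (ℝ × ℝ) | Q z.1 z.2}) (p : ℝ × ℝ) :
    Measurable (fun q => ind (Q p q) * (f q * g (p - q))) := by
  have h := (measurable_ind hQ).comp (measurable_const.prodMk measurable_id :
    Measurable fun q : ℝ × ℝ => (p, q))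
  have h' : Measurable fun q => ind (Q p q) := h
  fun_prop

theorem lowHigh_le (ha : 0 < a) (ha1 : a < 1) (hw : IsWt a w) (hf : Measurable f)
    (hf' : Measurable f') (hg : Measurable g) (hS : Sob f f') :
    lowHigh w a b f g ≤ cBil a b *
        ((XN w (1 / 2) ((1 + a) / 2) f + XN w (1 / 2) ((1 + a) / 2) f ^ ((1 : ℝ) / 2) *
          XN w (1 / 2) (-((1 + a) / 2)) f' ^ ((1 : ℝ) / 2)) * XN w (1 / 2) ((1 + a) / 2) g) := by
  have h2a : (0 : ℝ) < 2 + a := by linarith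
  -- This `β` makes the tail integral in the comparable-frequency case equal to `cTail a`.
  have h1 := nonres_bound (b := b) (β := (4 - a) / (2 * (2 + a))) ha ha1
    (div_pos (by linarith) (by linarith))
    (by rw [div_le_one (by linarith)]; linarith)
    (by rw [div_mul_eq_mul_div, le_div_iff₀ (by linarith)]; nlinarith)
    (by field_simp; ring) hw hf hg
  have h2 := res_bound (b := b) ha ha1 hw hf hf' hg hS
  have hmNR := measurableSet_NR (a := a) ha
  have hmRG := measurableSet_RG (a := a)
  unfold lowHigh
  refine le_trans ?_ ((add_le_add h1 h2).trans ?_)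
  · rw [← ENNReal.tsum_add]
    refine ENNReal.tsum_le_tsum fun j => ?_
    rw [← mul_add]
    refine mul_le_mul' le_rfl ?_
    refine le_trans (N2_mono fun p => ?_) (N2_add_le (measurable_piece hw hf hg _ hmNR j)
      (measurable_piece hw hf hg _ hmRG j))
    rw [← mul_add, ← lintegral_add_left (measurable_piece_int hf hg hmNR p)]
    refine mul_le_mul' le_rfl (lintegral_mono fun q => ?_)
    rw [← add_mul]
    refine mul_le_mul' ?_ le_rfl
    by_cases h : |q.1| ≤ |(p - q).1|
    swap
    · rw [ind_false h]; exact zero_le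
    by_cases hn : NR a p q
    · rw [ind_true hn]; exact (ind_le_one _).trans le_self_add
    · rw [ind_true (show RG a p q from ⟨le_rad_of_not_NR ha h hn, h⟩)]
      exact (ind_le_one _).trans le_add_self
  · unfold cBil
    refine le_trans ?_ (le_of_eq (add_mul _ _ _).symm)
    refine add_le_add ?_ le_rfl
    refine mul_le_mul' le_rfl ?_
    refine mul_le_mul' ?_ le_rfl
    exact le_self_add

/-- The bilinear estimate on the Fourier side, for nonnegative functions. -/
theorem bilinear_estimate (ha : 0 < a) (ha1 : a < 1) (hw : IsWt a w) (hf : Measurable f)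
    (hf' : Measurable f') (hg : Measurable g) (hg' : Measurable g') (hS : Sob f f')
    (hS' : Sob g g') :
    ∑' j, dy (-b) j * N2 volume (fun p => w j p * (ENNReal.ofReal |p.1| * br ((1 + a) / 2) p.1) *
        ∫⁻ q, f q * g (p - q)) ≤
      cBil a b *
        ((XN w (1 / 2) ((1 + a) / 2) f + XN w (1 / 2) ((1 + a) / 2) f ^ ((1 : ℝ) / 2) *
          XN w (1 / 2) (-((1 + a) / 2)) f' ^ ((1 : ℝ) / 2)) * XN w (1 / 2) ((1 + a) / 2) g) +
      cBil a b *
        ((XN w (1 / 2) ((1 + a) / 2) g + XN w (1 / 2) ((1 + a) / 2) g ^ ((1 : ℝ) / 2) *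
          XN w (1 / 2) (-((1 + a) / 2)) g' ^ ((1 : ℝ) / 2)) * XN w (1 / 2) ((1 + a) / 2) f) := by
  refine le_trans ?_ (add_le_add (lowHigh_le (b := b) ha ha1 hw hf hf' hg hS)
    (lowHigh_le (b := b) ha ha1 hw hg hg' hf hS'))
  have hm : MeasurableSet {z : (ℝ × ℝ) × (ℝ × ℝ) | |z.2.1| ≤ |(z.1 - z.2).1|} :=
    measurableSet_le (by fun_prop) (by fun_prop)
  have hm' : ∀ p : ℝ × ℝ, Measurable fun q : ℝ × ℝ => ind (|q.1| ≤ |(p - q).1|) := fun p =>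
    measurable_ind (measurableSet_le (by fun_prop) (by fun_prop))
  unfold lowHigh
  rw [← ENNReal.tsum_add]
  refine ENNReal.tsum_le_tsum fun j => ?_
  rw [← mul_add]
  refine mul_le_mul' le_rfl ?_
  refine le_trans (N2_mono fun p => ?_) (N2_add_le
    (measurable_piece (Q := fun p q => |q.1| ≤ |(p - q).1|) hw hf hg _ hm j)
    (measurable_piece (Q := fun p q => |q.1| ≤ |(p - q).1|) hw hg hf _ hm j))
  have e : ∫⁻ q, ind (|q.1| ≤ |(p - q).1|) * (g q * f (p - q)) =
      ∫⁻ q, ind (|(p - q).1| ≤ |q.1|) * (f q * g (p - q)) := by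
    rw [← lintegral_sub_left_eq_self _ p]
    refine lintegral_congr fun q => ?_
    rw [sub_sub_cancel, mul_comm (g _)]
  have := hm' p
  rw [e, ← mul_add, ← lintegral_add_left (by fun_prop)]
  refine mul_le_mul' le_rfl (lintegral_mono fun q => ?_)
  rw [← add_mul]
  refine le_mul_of_one_le_left' ?_
  rcases le_total |q.1| |(p - q).1| with h | h
  · rw [ind_true h]; exact le_self_add
  · rw [ind_true h]; exact le_add_self

end Res2

/-! ### Fourier transform of Schwartz functions -/

section Fourier
open scoped FourierTransform LineDeriv SchwartzMap

/-- The plane with its Euclidean norm. -/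
abbrev Pl : Type := WithLp 2 (ℝ × ℝ)

/-- The identification of `ℝ × ℝ` (sup norm) with the Euclidean plane. -/
def toPl : (ℝ × ℝ) ≃L[ℝ] Pl := (WithLp.prodContinuousLinearEquiv 2 ℝ ℝ ℝ).symm

/-- The dilation `p ↦ p / (2π)`, with values in the Euclidean plane. -/
def dilPl : (ℝ × ℝ) ≃L[ℝ] Pl :=
  (ContinuousLinearEquiv.smulLeft (Units.mk0 ((2 * Real.pi)⁻¹ : ℝ)
    (inv_ne_zero Real.two_pi_pos.ne'))).trans toPl

theorem dilPl_apply (p : ℝ × ℝ) : dilPl p = WithLp.toLp 2 ((2 * Real.pi)⁻¹ • p) := rfl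

/-- A Schwartz function on `ℝ × ℝ`, transported to the Euclidean plane. -/
def onPl (u : 𝓢(ℝ × ℝ, ℂ)) : 𝓢(Pl, ℂ) :=
  SchwartzMap.compCLMOfContinuousLinearEquiv ℝ toPl.symm u

theorem onPl_apply (u : 𝓢(ℝ × ℝ, ℂ)) (x : Pl) : onPl u x = u (WithLp.ofLp x) := rfl

/-- The Fourier transform `FT2 u` of a Schwartz function, as a Schwartz function. -/
def SF (u : 𝓢(ℝ × ℝ, ℂ)) : 𝓢(ℝ × ℝ, ℂ) :=
  SchwartzMap.compCLMOfContinuousLinearEquiv ℝ dilPl (𝓕⁻ (onPl u))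

theorem SF_eq (u : 𝓢(ℝ × ℝ, ℂ)) (p : ℝ × ℝ) : SF u p = 𝓕⁻ (onPl u) (dilPl p) := rfl

theorem SF_apply (u : 𝓢(ℝ × ℝ, ℂ)) (p : ℝ × ℝ) : SF u p = FT2 u p.1 p.2 := by
  rw [SF_eq, SchwartzMap.fourierInv_coe, Real.fourierInv_eq']
  rw [← (WithLp.volume_preserving_toLp ℝ ℝ).integral_comp
    (toPl.toHomeomorph.measurableEmbedding)]
  unfold FT2
  refine integral_congr_ae (Filter.Eventually.of_forall fun q => ?_)
  simp only [onPl_apply, dilPl_apply, smul_eq_mul]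
  congr 2
  rw [WithLp.prod_inner_apply]
  simp only [Prod.smul_fst, Prod.smul_snd, smul_eq_mul, RCLike.inner_apply, conj_trivial]
  have := Real.pi_pos.ne'
  push_cast
  field_simp

/-- The pointwise product of two Schwartz functions. -/
def mulS (u v : 𝓢(ℝ × ℝ, ℂ)) : 𝓢(ℝ × ℝ, ℂ) :=
  SchwartzMap.pairing (ContinuousLinearMap.mul ℂ ℂ) u v

theorem mulS_apply (u v : 𝓢(ℝ × ℝ, ℂ)) (p : ℝ × ℝ) : mulS u v p = u p * v p := rfl

theorem onPl_mulS (u v : 𝓢(ℝ × ℝ, ℂ)) :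
    onPl (mulS u v) = SchwartzMap.pairing (ContinuousLinearMap.mul ℂ ℂ) (onPl u) (onPl v) := by
  ext x; rfl

/-- Fourier transforms of products are convolutions, as an upper bound. -/
theorem SF_mulS_le (u v : 𝓢(ℝ × ℝ, ℂ)) (p : ℝ × ℝ) :
    ‖SF (mulS u v) p‖ₑ ≤ ∫⁻ q, ‖SF u q‖ₑ * ‖SF v (p - q)‖ₑ := by
  have e : 𝓕⁻ (onPl (mulS u v)) = SchwartzMap.convolution (ContinuousLinearMap.mul ℂ ℂ)
      (𝓕⁻ (onPl u)) (𝓕⁻ (onPl v)) := by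
    rw [onPl_mulS]
    simp [SchwartzMap.convolution]
  rw [SF_eq, e, SchwartzMap.convolution_apply]
  unfold MeasureTheory.convolution
  rw [← (WithLp.volume_preserving_toLp ℝ ℝ).integral_comp
    (toPl.toHomeomorph.measurableEmbedding)]
  have h1 := Measure.integral_comp_smul (volume : Measure (ℝ × ℝ)) (fun q : ℝ × ℝ =>
    ((ContinuousLinearMap.mul ℂ ℂ) ((𝓕⁻ (onPl u)) (WithLp.toLp 2 q)))
          ((𝓕⁻ (onPl v)) (dilPl p - WithLp.toLp 2 q))) (2 * Real.pi)⁻¹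
  have hfin : Module.finrank ℝ (ℝ × ℝ) = 2 := by simp
  rw [hfin] at h1
  have hpi : (1 : ℝ) ≤ |(((2 * Real.pi)⁻¹) ^ 2)⁻¹| := by
    rw [inv_pow, inv_inv]
    exact (one_le_pow₀ (by linarith [Real.two_le_pi])).trans (le_abs_self _)
  have h2 : ∫⁻ q, ‖SF u q‖ₑ * ‖SF v (p - q)‖ₑ = ∫⁻ q : ℝ × ℝ, ‖((ContinuousLinearMap.mul ℂ ℂ)
      ((𝓕⁻ (onPl u)) (WithLp.toLp 2 ((2 * Real.pi)⁻¹ • q))))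
          ((𝓕⁻ (onPl v)) (dilPl p - WithLp.toLp 2 ((2 * Real.pi)⁻¹ • q)))‖ₑ := by
    refine lintegral_congr fun q => ?_
    rw [ContinuousLinearMap.mul_apply', enorm_mul, SF_eq, SF_eq, map_sub, dilPl_apply q]
  rw [h2]
  refine le_trans ?_ (enorm_integral_le_lintegral_enorm _)
  rw [h1, enorm_smul]
  refine le_mul_of_one_le_left' ?_
  rw [← ofReal_norm, ENNReal.one_le_ofReal, Real.norm_eq_abs, abs_abs]
  exact hpi

/-- Differentiation in `x` becomes multiplication by `-iξ`. -/
theorem SF_deriv (u : 𝓢(ℝ × ℝ, ℂ)) (p : ℝ × ℝ) :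
    ‖SF (∂_{((1 : ℝ), (0 : ℝ))} u) p‖ = |p.1| * ‖SF u p‖ := by
  have e : onPl (∂_{((1 : ℝ), (0 : ℝ))} u) = ∂_{toPl ((1 : ℝ), (0 : ℝ))} (onPl u) := by
    unfold onPl
    rw [SchwartzMap.lineDerivOp_compCLMOfContinuousLinearEquiv]
    simp
  rw [SF_eq, SF_eq, e, SchwartzMap.fourierInv_lineDerivOp_eq]
  have ht : (fun x : Pl => (inner ℝ x (toPl ((1 : ℝ), (0 : ℝ))) : ℝ)).HasTemperateGrowth :=
    ((innerSL ℝ).flip _).hasTemperateGrowth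
  rw [smul_apply, SchwartzMap.smulLeftCLM_apply_apply ht, norm_smul, norm_smul, ← mul_assoc]
  congr 1
  have hi : (inner ℝ (dilPl p) (toPl ((1 : ℝ), (0 : ℝ))) : ℝ) = (2 * Real.pi)⁻¹ * p.1 := by
    change (inner ℝ (dilPl p) (WithLp.toLp 2 ((1 : ℝ), (0 : ℝ))) : ℝ) = _
    rw [dilPl_apply, WithLp.prod_inner_apply]
    simp
  have hp := Real.pi_pos
  rw [hi, Real.norm_eq_abs, abs_mul, abs_of_pos (a := (2 * Real.pi)⁻¹) (by positivity), norm_neg,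
    norm_mul, Complex.norm_I, mul_one, norm_mul, Complex.norm_real, Real.norm_eq_abs,
    abs_of_pos hp, Complex.norm_ofNat]
  field_simp

/-- Multiplication of a Schwartz function by `x`. -/
def xS (u : 𝓢(ℝ × ℝ, ℂ)) : 𝓢(ℝ × ℝ, ℂ) :=
  SchwartzMap.smulLeftCLM ℂ (fun p : ℝ × ℝ => p.1) u

theorem xS_apply (u : 𝓢(ℝ × ℝ, ℂ)) (p : ℝ × ℝ) : xS u p = (p.1 : ℂ) * u p := by
  unfold xS
  have h : (fun p : ℝ × ℝ => p.1).HasTemperateGrowth :=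
    (ContinuousLinearMap.fst ℝ ℝ ℝ).hasTemperateGrowth
  rw [SchwartzMap.smulLeftCLM_apply_apply h]
  simp

/-- The `ξ`-derivative of the transform has the modulus of the transform of `x·u`. -/
theorem SF_hasDerivAt (u : 𝓢(ℝ × ℝ, ℂ)) (x l : ℝ) :
    ∃ D, HasDerivAt (fun ξ => SF u (ξ, l)) D x ∧ ‖D‖ = ‖SF (xS u) (x, l)‖ := by
  have hm : ∀ y : Pl, (inner ℝ y (dilPl ((1 : ℝ), (0 : ℝ))) : ℝ) =
      (2 * Real.pi)⁻¹ * (WithLp.ofLp y).1 := by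
    intro y
    rw [dilPl_apply, WithLp.prod_inner_apply]
    simp
  have ht : (fun x : Pl => (inner ℝ x (dilPl ((1 : ℝ), (0 : ℝ))) : ℝ)).HasTemperateGrowth :=
    ((innerSL ℝ).flip _).hasTemperateGrowth
  refine ⟨∂_{((1 : ℝ), (0 : ℝ))} (SF u) (x, l), ?_, ?_⟩
  · rw [SchwartzMap.lineDerivOp_apply_eq_fderiv]
    have h1 := (SF u).differentiableAt (x := (x, l)) |>.hasFDerivAt
    exact h1.comp_hasDerivAt x ((hasDerivAt_id x).prodMk (hasDerivAt_const x l))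
  · have e : (2 * Real.pi * Complex.I) •
        SchwartzMap.smulLeftCLM ℂ (inner ℝ · (dilPl ((1 : ℝ), (0 : ℝ)))) (onPl u) =
        Complex.I • onPl (xS u) := by
      ext y
      rw [smul_apply, smul_apply, onPl_apply, xS_apply,
        SchwartzMap.smulLeftCLM_apply_apply ht, hm, onPl_apply]
      have := Real.pi_pos.ne'
      simp only [smul_eq_mul, real_smul]
      push_cast
      field_simp
    have e2 : ∂_{((1 : ℝ), (0 : ℝ))} (SF u) = SchwartzMap.compCLMOfContinuousLinearEquiv ℝ dilPl
        (Complex.I • 𝓕⁻ (onPl (xS u))) := by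
      unfold SF
      rw [SchwartzMap.lineDerivOp_compCLMOfContinuousLinearEquiv,
        SchwartzMap.lineDerivOp_fourierInv_eq, e, FourierTransform.fourierInv_smul]
    rw [e2, SchwartzMap.compCLMOfContinuousLinearEquiv_apply, Function.comp_apply,
      smul_apply, norm_smul, Complex.norm_I, one_mul, SF_eq]

end Fourier

/-! ### Sobolev inequality for the transform -/

section Sobolev
open scoped SchwartzMap

theorem continuous_SF (u : 𝓢(ℝ × ℝ, ℂ)) : Continuous (SF u) := (SF u).continuous

theorem measurable_SF (u : 𝓢(ℝ × ℝ, ℂ)) : Measurable fun p => ‖SF u p‖ₑ :=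
  (continuous_SF u).measurable.enorm

/-- The Sobolev inequality for the Fourier transform, averaging the fundamental theorem of
calculus for `|û(·, l)|²` over the unit interval around the origin. -/
theorem sob_SF (u : 𝓢(ℝ × ℝ, ℂ)) : Sob (fun p => ‖SF u p‖ₑ) (fun p => ‖SF (xS u) p‖ₑ) := by
  intro l ρ x hρ hx
  choose D hD hDn using fun y => SF_hasDerivAt u y l
  have hder : ∀ y, HasDerivAt (fun ξ => ‖SF u (ξ, l)‖ ^ 2) (2 * inner ℝ (SF u (y, l)) (D y)) y :=
    fun y => (hD y).norm_sq
  have hUc : Continuous fun y : ℝ => SF u (y, l) := (continuous_SF u).comp (by fun_prop)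
  have hU'c : Continuous fun y : ℝ => SF (xS u) (y, l) := (continuous_SF _).comp (by fun_prop)
  have hUm : Measurable fun y : ℝ => ‖SF u (y, l)‖ₑ := hUc.measurable.enorm
  have hU'm : Measurable fun y : ℝ => ‖SF (xS u) (y, l)‖ₑ := hU'c.measurable.enorm
  have him : ∀ r : ℝ, Measurable fun y : ℝ => ind (|y| ≤ r) := fun r =>
    measurable_ind (measurableSet_le (by fun_prop) (by fun_prop))
  have himρ := him ρ
  have himh := him (1 / 2)
  set K : ℝ≥0∞ := ∫⁻ y, ind (|y| ≤ ρ) * (2 * (‖SF u (y, l)‖ₑ * ‖SF (xS u) (y, l)‖ₑ)) with hK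
  have hDb : ∀ y, ‖2 * inner ℝ (SF u (y, l)) (D y)‖ ≤ 2 * (‖SF u (y, l)‖ * ‖SF (xS u) (y, l)‖) := by
    intro y
    rw [norm_mul, Real.norm_ofNat, ← hDn y]
    gcongr
    exact norm_inner_le_norm _ _
  have hDm : Measurable fun y => 2 * inner ℝ (SF u (y, l)) (D y) := by
    have : (fun y => 2 * inner ℝ (SF u (y, l)) (D y)) =
        deriv (fun ξ => ‖SF u (ξ, l)‖ ^ 2) := by
      funext y; exact (hder y).deriv.symm
    rw [this]
    exact measurable_deriv _
  have hint : ∀ y z, IntervalIntegrable (fun y => 2 * inner ℝ (SF u (y, l)) (D y)) volume y z := by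
    intro y z
    refine IntervalIntegrable.mono_fun
      (g := fun y => 2 * inner ℝ (SF u (y, l)) (D y))
      (f := fun y => 2 * (‖SF u (y, l)‖ * ‖SF (xS u) (y, l)‖))
      ((by fun_prop : Continuous fun y => 2 * (‖SF u (y, l)‖ * ‖SF (xS u) (y, l)‖)).intervalIntegrable
        y z) hDm.aestronglyMeasurable ?_
    refine Filter.Eventually.of_forall fun t => (hDb t).trans ?_
    exact Real.le_norm_self _
  have key : ∀ y, |y| ≤ ρ → ‖SF u (x, l)‖ₑ ^ 2 ≤ ‖SF u (y, l)‖ₑ ^ 2 + K := by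
    intro y hy
    have h1 := intervalIntegral.integral_eq_sub_of_hasDerivAt (fun t _ => hder t) (hint y x)
    have h2 : ‖SF u (x, l)‖ ^ 2 = ‖SF u (y, l)‖ ^ 2 +
      ∫ t in y..x, 2 * inner ℝ (SF u (t, l)) (D t) := by rw [h1]; ring
    have h3 : ‖SF u (x, l)‖ₑ ^ 2 = ‖(‖SF u (x, l)‖ ^ 2 : ℝ)‖ₑ := by
      rw [enorm_pow, enorm_norm]
    rw [h3, h2]
    refine (enorm_add_le _ _).trans ?_
    rw [enorm_pow, enorm_norm]
    refine add_le_add le_rfl ?_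
    have h4 : ‖∫ t in y..x, 2 * inner ℝ (SF u (t, l)) (D t)‖ₑ =
        ‖∫ t in Set.uIoc y x, 2 * inner ℝ (SF u (t, l)) (D t)‖ₑ := by
      rw [← ofReal_norm, ← ofReal_norm, intervalIntegral.norm_integral_eq_norm_integral_uIoc]
    rw [h4]
    refine (enorm_integral_le_lintegral_enorm _).trans ?_
    rw [← lintegral_indicator measurableSet_uIoc]
    refine lintegral_mono fun t => ?_
    by_cases ht : t ∈ Set.uIoc y x
    · rw [Set.indicator_of_mem ht]
      have htρ : |t| ≤ ρ := by
        rw [abs_le] at hx hy ⊢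
        rcases Set.mem_uIoc.1 ht with h | h <;> constructor <;> linarith
      rw [ind_true htρ, one_mul]
      rw [← ofReal_norm, ← ofReal_norm, ← ofReal_norm, ← ENNReal.ofReal_mul (norm_nonneg _),
        show (2 : ℝ≥0∞) = ENNReal.ofReal 2 by norm_num, ← ENNReal.ofReal_mul (by norm_num)]
      exact ENNReal.ofReal_le_ofReal (hDb t)
    · rw [Set.indicator_of_notMem ht]; exact zero_le
  have hvol : ∫⁻ y : ℝ, ind (|y| ≤ 1 / 2) = 1 := by
    rw [lintegral_ind (measurableSet_le (by fun_prop) (by fun_prop))]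
    have := volume_strip_le 0 (1 / 2)
    simpa using this
  calc ‖SF u (x, l)‖ₑ ^ 2 = ∫⁻ y : ℝ, ind (|y| ≤ 1 / 2) * ‖SF u (x, l)‖ₑ ^ 2 := by
        rw [lintegral_mul_const _ himh, hvol, one_mul]
    _ ≤ ∫⁻ y : ℝ, (ind (|y| ≤ ρ) * ‖SF u (y, l)‖ₑ ^ 2 + ind (|y| ≤ 1 / 2) * K) := by
        refine lintegral_mono fun y => ?_
        dsimp only
        by_cases h : |y| ≤ 1 / 2
        · have h' : |y| ≤ ρ := by linarith
          rw [ind_true h, ind_true h', one_mul, one_mul, one_mul]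
          exact key y h'
        · rw [ind_false h, zero_mul]; exact zero_le
    _ = (∫⁻ y : ℝ, ind (|y| ≤ ρ) * ‖SF u (y, l)‖ₑ ^ 2) + K := by
        rw [lintegral_add_left (by fun_prop), lintegral_mul_const _ himh, hvol, one_mul]
    _ = _ := by
        rw [hK, ← lintegral_add_left (by fun_prop)]
        refine lintegral_congr fun y => ?_
        ring

end Sobolev

/-! ### Comparison of the norms and conclusion -/

section Final
open scoped SchwartzMap LineDeriv
variable {a : ℝ} {χ₀ χ : ℝ → ℝ}

theorem chiJ_nonneg (hχ : DyadicCutoffs χ₀ χ) (j : ℕ) (z : ℝ) : 0 ≤ chiJ χ₀ χ j z := by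
  unfold chiJ
  split_ifs
  · exact (hχ.mem0 z).1
  · exact (hχ.mem1 _).1

theorem chiJ_le_one (hχ : DyadicCutoffs χ₀ χ) (j : ℕ) (z : ℝ) : chiJ χ₀ χ j z ≤ 1 := by
  unfold chiJ
  split_ifs
  · exact (hχ.mem0 z).2
  · exact (hχ.mem1 _).2

theorem continuous_chiJ (hχ : DyadicCutoffs χ₀ χ) (j : ℕ) : Continuous (chiJ χ₀ χ j) := by
  unfold chiJ
  split_ifs
  · exact hχ.smooth0.continuous
  · exact hχ.smooth1.continuous.comp (by fun_prop)

theorem chiJ_support (hχ : DyadicCutoffs χ₀ χ) {j : ℕ} {z : ℝ} (h : chiJ χ₀ χ j z ≠ 0) :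
    |z| ≤ 2 * 2 ^ (j : ℝ) ∧ 2 ^ (j : ℝ) ≤ 2 * (1 + |z|) := by
  unfold chiJ at h
  split_ifs at h with hj
  · subst hj
    have : ¬ 2 < |z| := fun h' => h (hχ.supp0 z h')
    norm_num
    exact ⟨not_lt.1 this, by linarith [abs_nonneg z]⟩
  · have h2 := hχ.supp1 _ h
    have hp : (0 : ℝ) < 2 ^ (j : ℝ) := by positivity
    rw [abs_mul, abs_of_pos (by positivity), Real.rpow_neg (by norm_num), inv_mul_eq_div,
      lt_div_iff₀ hp, div_lt_iff₀ hp] at h2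
    exact ⟨h2.2.le, by linarith [h2.1]⟩

/-- The square roots of the dyadic cutoffs in the modulation `λ - ω(ξ)`. -/
def wt (a : ℝ) (χ₀ χ : ℝ → ℝ) (j : ℕ) (p : ℝ × ℝ) : ℝ≥0∞ :=
  ENNReal.ofReal (Real.sqrt (chiJ χ₀ χ j (p.2 - disp a p.1)))

theorem wt_sq (hχ : DyadicCutoffs χ₀ χ) (j : ℕ) (p : ℝ × ℝ) :
    wt a χ₀ χ j p ^ 2 = ENNReal.ofReal (chiJ χ₀ χ j (p.2 - disp a p.1)) := by
  unfold wt
  rw [← ENNReal.ofReal_pow (Real.sqrt_nonneg _), Real.sq_sqrt (chiJ_nonneg hχ _ _)]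

theorem wt_le_one (hχ : DyadicCutoffs χ₀ χ) (j : ℕ) (p : ℝ × ℝ) : wt a χ₀ χ j p ≤ 1 := by
  unfold wt
  rw [ENNReal.ofReal_le_one]
  exact Real.sqrt_le_iff.2 ⟨by norm_num, by simpa using chiJ_le_one hχ _ _⟩

theorem isWt_wt (ha : 0 < a) (hχ : DyadicCutoffs χ₀ χ) : IsWt a (wt a χ₀ χ) where
  meas j := by
    have := (continuous_chiJ hχ j).measurable
    have := (continuous_disp ha).measurable
    unfold wt
    fun_prop
  le_ind j p := by
    by_cases h : |p.2 - disp a p.1| ≤ 2 * 2 ^ (j : ℝ)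
    · rw [ind_true h]; exact wt_le_one hχ j p
    · have : chiJ χ₀ χ j (p.2 - disp a p.1) = 0 := by
        by_contra h'
        exact h (chiJ_support hχ h').1
      simp [wt, this]
  sum_sq p := by
    simp_rw [wt_sq hχ]
    have hp := hχ.partition (p.2 - disp a p.1)
    rw [← ENNReal.ofReal_tsum_of_nonneg (fun j => chiJ_nonneg hχ j _), hp, ENNReal.ofReal_one]
    by_contra h
    rw [tsum_eq_zero_of_not_summable h] at hp
    exact zero_ne_one hp

theorem Xnorm_nonneg (hχ : DyadicCutoffs χ₀ χ) (b s : ℝ) (f : ℝ × ℝ → ℂ) :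
    0 ≤ Xnorm a χ₀ χ b s f := by
  refine tsum_nonneg fun j => mul_nonneg (by positivity) (Real.rpow_nonneg ?_ _)
  refine integral_nonneg fun p => ?_
  have := chiJ_nonneg hχ j (p.2 - disp a p.1)
  dsimp only
  positivity

/-- A weighted `L²` norm that dominates every dyadic piece of the norms involved; it is finite
because the transform decays faster than any power. -/
theorem bound_finite (ha : 0 < a) (ha1 : a < 1) (u : 𝓢(ℝ × ℝ, ℂ)) {s : ℝ} (hs : s ≤ 1) :
    N2 volume (fun p : ℝ × ℝ => ENNReal.ofReal (2 * (1 + |p.2 - disp a p.1|)) *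
      (br s p.1 * ‖SF u p‖ₑ)) ≠ ⊤ := by
  set C := 2 ^ 6 * ((Finset.Iic ((6, 0) : ℕ × ℕ)).sup fun m =>
    SchwartzMap.seminorm ℝ m.1 m.2) (SF u) with hC
  have hdec : ∀ p, (1 + ‖p‖) ^ 6 * ‖SF u p‖ ≤ C := fun p => by
    simpa using SchwartzMap.one_add_le_sup_seminorm_apply (𝕜 := ℝ) (m := (6, 0)) le_rfl le_rfl
      (SF u) p
  have hC0 : 0 ≤ C := le_trans (by positivity) (hdec 0)
  have hpt : ∀ p : ℝ × ℝ, (2 * (1 + |p.2 - disp a p.1|)) * ((1 + |p.1|) ^ s * ‖SF u p‖) ≤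
      6 * C * (1 + ‖p‖) ^ (-(2 : ℝ)) := by
    intro p
    have hp1 : |p.1| ≤ ‖p‖ := norm_fst_le p
    have hp2 : |p.2| ≤ ‖p‖ := norm_snd_le p
    set n := 1 + ‖p‖ with hn
    have hn1 : 1 ≤ n := by linarith [norm_nonneg p]
    have h1 : (1 + |p.1|) ^ s ≤ n := by
      calc (1 + |p.1|) ^ s ≤ (1 + |p.1|) ^ (1 : ℝ) :=
            Real.rpow_le_rpow_of_exponent_le (by linarith [abs_nonneg p.1]) hs
        _ ≤ n := by rw [Real.rpow_one]; linarith
    have h2 : |p.1| ^ (2 + a) ≤ n ^ 3 := by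
      calc |p.1| ^ (2 + a) ≤ n ^ (2 + a) :=
            Real.rpow_le_rpow (abs_nonneg _) (by linarith) (by linarith)
        _ ≤ n ^ (3 : ℝ) := Real.rpow_le_rpow_of_exponent_le hn1 (by linarith)
        _ = n ^ 3 := by norm_cast
    have h3 : 2 * (1 + |p.2 - disp a p.1|) ≤ 6 * n ^ 3 := by
      have h4 := abs_sub p.2 (disp a p.1)
      rw [abs_disp ha] at h4
      have h5 : n ≤ n ^ 3 := le_self_pow₀ hn1 (by norm_num)
      linarith
    have h6 := hdec p
    rw [← hn] at h6
    have hn0 : 0 < n := by linarith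
    have h7 : n ^ (-(2 : ℝ)) = (n ^ 2)⁻¹ := by
      rw [Real.rpow_neg hn0.le]; norm_cast
    rw [h7, ← div_eq_mul_inv, le_div_iff₀ (by positivity)]
    calc _ ≤ (6 * n ^ 3) * (n * ‖SF u p‖) * n ^ 2 := by gcongr
      _ = 6 * (n ^ 6 * ‖SF u p‖) := by ring
      _ ≤ 6 * C := by gcongr
  have hle : ∀ p : ℝ × ℝ, ENNReal.ofReal (2 * (1 + |p.2 - disp a p.1|)) *
      (br s p.1 * ‖SF u p‖ₑ) ≤ ENNReal.ofReal (6 * C * (1 + ‖p‖) ^ (-(2 : ℝ))) := by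
    intro p
    unfold br
    rw [← ofReal_norm, ← ENNReal.ofReal_mul (by positivity), ← ENNReal.ofReal_mul (by positivity)]
    exact ENNReal.ofReal_le_ofReal (hpt p)
  refine ne_top_of_le_ne_top ?_ (N2_mono hle)
  unfold N2
  refine ENNReal.rpow_ne_top_of_nonneg (by norm_num) ?_
  have e : ∀ p : ℝ × ℝ, ENNReal.ofReal (6 * C * (1 + ‖p‖) ^ (-(2 : ℝ))) ^ 2 =
      ENNReal.ofReal ((6 * C) ^ 2) * ENNReal.ofReal ((1 + ‖p‖) ^ (-(4 : ℝ))) := by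
    intro p
    rw [← ENNReal.ofReal_pow (by positivity), ← ENNReal.ofReal_mul (by positivity), mul_pow,
      ← Real.rpow_natCast ((1 + ‖p‖) ^ (-(2 : ℝ))), ← Real.rpow_mul (by positivity)]
    norm_num
  simp_rw [e]
  rw [lintegral_const_mul' _ _ ENNReal.ofReal_ne_top]
  refine ENNReal.mul_ne_top ENNReal.ofReal_ne_top ?_
  exact (finite_integral_one_add_norm (μ := (volume : Measure (ℝ × ℝ))) (r := 4)
    (by simp; norm_num)).ne

/-- Trading `2^j` for the modulation bounds `XN` by a single weighted `L²` norm. -/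
theorem XN_le (ha : 0 < a) (hχ : DyadicCutoffs χ₀ χ) (u : 𝓢(ℝ × ℝ, ℂ)) (c s : ℝ) :
    XN (wt a χ₀ χ) c s (fun p => ‖SF u p‖ₑ) ≤ geo (1 - c) *
      N2 volume (fun p : ℝ × ℝ => ENNReal.ofReal (2 * (1 + |p.2 - disp a p.1|)) *
      (br s p.1 * ‖SF u p‖ₑ)) := by
  have hbr := measurable_br s
  have hd := (continuous_disp ha).measurable
  have hu := measurable_SF u
  unfold XN geo
  rw [← ENNReal.tsum_mul_right]
  refine ENNReal.tsum_le_tsum fun j => ?_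
  rw [show -(1 - c) = c + (-1) by ring, ← dy_mul, mul_assoc]
  refine mul_le_mul' le_rfl ?_
  rw [← N2_const_mul _ (by fun_prop)]
  refine N2_mono fun p => ?_
  rw [← mul_assoc (dy _ _)]
  refine mul_le_mul' ?_ le_rfl
  by_cases h : chiJ χ₀ χ j (p.2 - disp a p.1) = 0
  · simp [wt, h]
  · refine (wt_le_one hχ j p).trans ?_
    unfold dy
    rw [← ENNReal.ofReal_mul (by positivity), ENNReal.one_le_ofReal, mul_neg, mul_one,
      Real.rpow_neg (by norm_num), inv_mul_eq_div, one_le_div (by positivity)]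
    exact (chiJ_support hχ h).2

theorem XN_ne_top (ha : 0 < a) (ha1 : a < 1) (hχ : DyadicCutoffs χ₀ χ) (u : 𝓢(ℝ × ℝ, ℂ))
    {c s : ℝ} (hc : c < 1) (hs : s ≤ 1) : XN (wt a χ₀ χ) c s (fun p => ‖SF u p‖ₑ) ≠ ⊤ :=
  ne_top_of_le_ne_top (ENNReal.mul_ne_top (geo_ne_top (by linarith)) (bound_finite ha ha1 u hs))
    (XN_le ha hχ u c s)

/-- On Schwartz functions `Xnorm`, defined by Bochner integrals and real series, agrees with `XN`;
finiteness of `XN` rules out the junk values of the former. -/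
theorem Xnorm_eq (ha : 0 < a) (ha1 : a < 1) (hχ : DyadicCutoffs χ₀ χ) (u : 𝓢(ℝ × ℝ, ℂ))
    {c s : ℝ} (hc : c < 1) (hs : s ≤ 1) {f : ℝ × ℝ → ℂ} (hf : ∀ p, f p = u p) :
    Xnorm a χ₀ χ c s f = (XN (wt a χ₀ χ) c s (fun p => ‖SF u p‖ₑ)).toReal := by
  obtain rfl : f = u := funext hf
  have hfin := XN_ne_top ha ha1 hχ u hc hs
  have hdm := continuous_disp ha
  unfold Xnorm
  unfold XN at hfin ⊢
  rw [ENNReal.tsum_toReal_eq (fun j => ENNReal.ne_top_of_tsum_ne_top hfin j)]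
  refine tsum_congr fun j => ?_
  have hcj := continuous_chiJ hχ j
  rw [ENNReal.toReal_mul, dy, ENNReal.toReal_ofReal (by positivity), N2, ← ENNReal.toReal_rpow]
  congr 2
  have hSc := continuous_SF u
  simp_rw [← SF_apply]
  have hmeas : Measurable fun p : ℝ × ℝ => chiJ χ₀ χ j (p.2 - disp a p.1) *
      (1 + |p.1|) ^ (2 * s) * ‖SF u (p.1, p.2)‖ ^ 2 := by
    have := hcj.measurable
    have := hdm.measurable
    have := hSc.measurable
    simp only [Prod.mk.eta]
    fun_prop
  rw [integral_eq_lintegral_of_nonneg_ae _ hmeas.aestronglyMeasurable]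
  · congr 1
    refine lintegral_congr fun p => ?_
    rw [mul_pow, wt_sq hχ, mul_pow, sq (br s p.1), br_mul, br, ← ofReal_norm,
      ← ENNReal.ofReal_pow (norm_nonneg _), ← ENNReal.ofReal_mul (by positivity),
      ← ENNReal.ofReal_mul (chiJ_nonneg hχ _ _)]
    congr 1
    rw [two_mul, mul_assoc]
  · refine Filter.Eventually.of_forall fun p => ?_
    have := chiJ_nonneg hχ j (p.2 - disp a p.1)
    dsimp only [Pi.zero_apply]
    positivity

/-- Only the part of `Ynorm` coming from `x·u` is used. -/
theorem Ynorm_ge (ha : 0 < a) (ha1 : a < 1) (hχ : DyadicCutoffs χ₀ χ) (u : 𝓢(ℝ × ℝ, ℂ))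
    {c s s' : ℝ} (hc : c < 1) (hs : s ≤ 1) :
    (XN (wt a χ₀ χ) c s (fun p => ‖SF (xS u) p‖ₑ)).toReal ≤
      Ynorm a χ₀ χ c s s' (fun p => u p) := by
  unfold Ynorm
  rw [← Xnorm_eq ha ha1 hχ (xS u) hc hs (fun p => (xS_apply u p).symm)]
  linarith [Xnorm_nonneg (a := a) hχ c s' (fun p => (p.2 : ℂ) * u p)]

theorem deriv_mulS (u v : 𝓢(ℝ × ℝ, ℂ)) (p : ℝ × ℝ) :
    deriv (fun x => u (x, p.2) * v (x, p.2)) p.1 = ∂_{((1 : ℝ), (0 : ℝ))} (mulS u v) p := by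
  rw [SchwartzMap.lineDerivOp_apply_eq_fderiv]
  have h1 := (mulS u v).differentiableAt (x := p) |>.hasFDerivAt
  have h2 := HasFDerivAt.comp_hasDerivAt (f := fun x : ℝ => (x, p.2)) p.1 h1
    ((hasDerivAt_id p.1).prodMk (hasDerivAt_const p.1 p.2))
  exact h2.deriv

/-- The transform of `∂ₓ(uv)` is dominated by `|ξ|` times the convolution of the transforms. -/
theorem XN_deriv_le {w : ℕ → ℝ × ℝ → ℝ≥0∞} (u v : 𝓢(ℝ × ℝ, ℂ)) (b s : ℝ) :
    XN w (-b) s (fun p => ‖SF (∂_{((1 : ℝ), (0 : ℝ))} (mulS u v)) p‖ₑ) ≤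
      ∑' j, dy (-b) j * N2 volume (fun p => w j p * (ENNReal.ofReal |p.1| * br s p.1) *
        ∫⁻ q, ‖SF u q‖ₑ * ‖SF v (p - q)‖ₑ) := by
  unfold XN
  refine ENNReal.tsum_le_tsum fun j => mul_le_mul' le_rfl (N2_mono fun p => ?_)
  have h : ‖SF (∂_{((1 : ℝ), (0 : ℝ))} (mulS u v)) p‖ₑ =
      ENNReal.ofReal |p.1| * ‖SF (mulS u v) p‖ₑ := by
    rw [← ofReal_norm, SF_deriv, ENNReal.ofReal_mul (abs_nonneg _), ofReal_norm]
  dsimp only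
  rw [h]
  calc _ = w j p * (ENNReal.ofReal |p.1| * br s p.1) * ‖SF (mulS u v) p‖ₑ := by ring
    _ ≤ _ := mul_le_mul' le_rfl (SF_mulS_le u v p)

theorem term_ne_top {K x y z : ℝ≥0∞} (hK : K ≠ ⊤) (hx : x ≠ ⊤) (hy : y ≠ ⊤) (hz : z ≠ ⊤) :
    K * ((x + x ^ ((1 : ℝ) / 2) * y ^ ((1 : ℝ) / 2)) * z) ≠ ⊤ :=
  have hnn : (0 : ℝ) ≤ 1 / 2 := by norm_num
  ENNReal.mul_ne_top hK (ENNReal.mul_ne_top (ENNReal.add_ne_top.2 ⟨hx, ENNReal.mul_ne_top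
    (ENNReal.rpow_ne_top_of_nonneg hnn hx) (ENNReal.rpow_ne_top_of_nonneg hnn hy)⟩) hz)

theorem toReal_term_le {K x y z : ℝ≥0∞} {Y : ℝ} (hx : x ≠ ⊤) (hy : y ≠ ⊤) (hY : y.toReal ≤ Y) :
    (K * ((x + x ^ ((1 : ℝ) / 2) * y ^ ((1 : ℝ) / 2)) * z)).toReal ≤
      (K.toReal + 1) * z.toReal * (x.toReal + x.toReal ^ ((1 : ℝ) / 2) * Y ^ ((1 : ℝ) / 2)) := by
  have hnn : (0 : ℝ) ≤ 1 / 2 := by norm_num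
  rw [ENNReal.toReal_mul, ENNReal.toReal_mul, ENNReal.toReal_add hx (ENNReal.mul_ne_top
    (ENNReal.rpow_ne_top_of_nonneg hnn hx) (ENNReal.rpow_ne_top_of_nonneg hnn hy)),
    ENNReal.toReal_mul, ← ENNReal.toReal_rpow, ← ENNReal.toReal_rpow]
  have hy0 : 0 ≤ y.toReal := ENNReal.toReal_nonneg
  calc K.toReal * ((x.toReal + x.toReal ^ ((1 : ℝ) / 2) * y.toReal ^ ((1 : ℝ) / 2)) * z.toReal)
      ≤ (K.toReal + 1) *
        ((x.toReal + x.toReal ^ ((1 : ℝ) / 2) * Y ^ ((1 : ℝ) / 2)) * z.toReal) := by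
        gcongr
        linarith
    _ = _ := by ring

/-- Passage from the extended nonnegative estimate to the real one. -/
theorem toReal_estimate {K D x y z w : ℝ≥0∞} {Y W : ℝ} (hK : K ≠ ⊤) (hx : x ≠ ⊤) (hy : y ≠ ⊤)
    (hz : z ≠ ⊤) (hw : w ≠ ⊤) (hY : y.toReal ≤ Y) (hW : w.toReal ≤ W)
    (h : D ≤ K * ((x + x ^ ((1 : ℝ) / 2) * y ^ ((1 : ℝ) / 2)) * z) +
      K * ((z + z ^ ((1 : ℝ) / 2) * w ^ ((1 : ℝ) / 2)) * x)) :
    D.toReal ≤ (K.toReal + 1) * x.toReal *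
        (z.toReal + z.toReal ^ ((1 : ℝ) / 2) * W ^ ((1 : ℝ) / 2)) +
      (K.toReal + 1) * z.toReal *
        (x.toReal + x.toReal ^ ((1 : ℝ) / 2) * Y ^ ((1 : ℝ) / 2)) := by
  have h1 := term_ne_top hK hx hy hz
  have h2 := term_ne_top hK hz hw hx
  have h3 := ENNReal.toReal_mono (ENNReal.add_ne_top.2 ⟨h1, h2⟩) h
  rw [ENNReal.toReal_add h1 h2] at h3
  have h4 := toReal_term_le (K := K) (z := z) hx hy hY
  have h5 := toReal_term_le (K := K) (z := x) hz hw hW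
  linarith

end Final

theorem statement8 (a : ℝ) (ha : a ∈ Set.Ioo (0 : ℝ) 1)
    (χ₀ χ : ℝ → ℝ) (hχ : DyadicCutoffs χ₀ χ) :
    ∃ b ∈ Set.Ioo (0 : ℝ) (1 / 2), ∃ C > 0,
      ∀ u v : SchwartzMap (ℝ × ℝ) ℂ,
        Xnorm a χ₀ χ (-b) (1 / 2 + a / 2)
            (fun p : ℝ × ℝ => deriv (fun x => u (x, p.2) * v (x, p.2)) p.1) ≤
          C * Xnorm a χ₀ χ (1 / 2) (1 / 2 + a / 2) (fun p => u p) *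
              (Xnorm a χ₀ χ (1 / 2) (1 / 2 + a / 2) (fun p => v p) +
                Xnorm a χ₀ χ (1 / 2) (1 / 2 + a / 2) (fun p => v p) ^ ((1 : ℝ) / 2) *
                  Ynorm a χ₀ χ (1 / 2) (-(1 / 2 + a / 2)) (1 / 2 + a / 2)
                    (fun p => v p) ^ ((1 : ℝ) / 2)) +
            C * Xnorm a χ₀ χ (1 / 2) (1 / 2 + a / 2) (fun p => v p) *
              (Xnorm a χ₀ χ (1 / 2) (1 / 2 + a / 2) (fun p => u p) +
                Xnorm a χ₀ χ (1 / 2) (1 / 2 + a / 2) (fun p => u p) ^ ((1 : ℝ) / 2) *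
                  Ynorm a χ₀ χ (1 / 2) (-(1 / 2 + a / 2)) (1 / 2 + a / 2)
                    (fun p => u p) ^ ((1 : ℝ) / 2)) := by
  obtain ⟨ha0, ha1⟩ := ha
  have h2a : (0 : ℝ) < 2 + a := by linarith
  have hb1 : (4 - a) / (2 * (2 + a)) / 2 < 1 / (2 + a) := by
    rw [div_div, div_lt_div_iff₀ (by positivity) h2a]; nlinarith
  have hb2 : (2 - a) / (2 + a) / 2 < 1 / (2 + a) := by
    rw [div_div, div_lt_div_iff₀ (by positivity) h2a]; nlinarith
  -- With `b = 1 / (2 + a)` both geometric series over the output modulation converge.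
  have hK := cBil_ne_top ha0 hb1 hb2
  refine ⟨1 / (2 + a), ⟨by positivity, by rw [div_lt_div_iff₀ h2a (by norm_num)]; linarith⟩,
    (cBil a (1 / (2 + a))).toReal + 1, by positivity, fun u v => ?_⟩
  have hbpos : 0 < 1 / (2 + a) := by positivity
  generalize 1 / (2 + a) = b at hK hbpos ⊢
  rw [show (1 : ℝ) / 2 + a / 2 = (1 + a) / 2 by ring]
  have hs1 : (1 + a) / 2 ≤ 1 := by linarith
  have hs2 : -((1 + a) / 2) ≤ 1 := by linarith
  have hh : (1 : ℝ) / 2 < 1 := by norm_num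
  rw [Xnorm_eq ha0 ha1 hχ (LineDeriv.lineDerivOp ((1 : ℝ), (0 : ℝ)) (mulS u v))
      (by linarith : -b < 1) hs1 (deriv_mulS u v),
    Xnorm_eq (f := fun p => u p) ha0 ha1 hχ u hh hs1 (fun _ => rfl),
    Xnorm_eq (f := fun p => v p) ha0 ha1 hχ v hh hs1 (fun _ => rfl)]
  exact toReal_estimate hK (XN_ne_top ha0 ha1 hχ u hh hs1) (XN_ne_top ha0 ha1 hχ (xS u) hh hs2)
    (XN_ne_top ha0 ha1 hχ v hh hs1) (XN_ne_top ha0 ha1 hχ (xS v) hh hs2)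
    (Ynorm_ge ha0 ha1 hχ u hh hs2) (Ynorm_ge ha0 ha1 hχ v hh hs2)
    ((XN_deriv_le u v b ((1 + a) / 2)).trans
      (bilinear_estimate (b := b) ha0 ha1 (isWt_wt ha0 hχ) (measurable_SF u)
        (measurable_SF (xS u)) (measurable_SF v) (measurable_SF (xS v)) (sob_SF u) (sob_SF v)))
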